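/- Probabilistic tail bound: in the stated setup, let Ω ∈ ℝ^{n×(k+ρ)} have independent standard Gaussian N(0,1) entries with ρ ≥ 2, assume γ_k < 1, fix 0 < δ < 1, and set C_d = (e·√(k+ρ)/(ρ+1))·(2/δ)^{1/(ρ+1)}·(√(n−k) + √(k+ρ) + √(2·log(2/δ))). Then each of the following inequalities holds with probability at least 1−δ for j = 1,…,k: sin θ_j ≤ γ_j^{2q+1}·C_d / √(1 + γ_j^{4q+2}·C_d²) and sin ν_j ≤ γ_j^{2q+2}·C_d / √(1 + γ_j^{4q+4}·C_d²), where θ_j (resp. ν_j) are the canonical angles between the column spaces of U_k and Û (resp. V_k and V̂), arranged increasingly. -/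

import Mathlib

open scoped ENNReal
open Matrix

/-- The `j`-th largest singular value (0-indexed) of a complex matrix,
obtained as the decreasingly sorted square roots of the eigenvalues of `Mᴴ * M`. -/
noncomputable def sval {m n : ℕ} (M : Matrix (Fin m) (Fin n) ℂ) (j : ℕ) : ℝ :=
  (List.insertionSort (· ≥ ·)
    ((List.ofFn (Matrix.isHermitian_conjTranspose_mul_self M).eigenvalues).map Real.sqrt)).getD j 0

/-- The Schatten-`p` norm (`p = ∞` gives the spectral norm). -/
noncomputable def schatten {m n : ℕ} (p : ℝ≥0∞) (M : Matrix (Fin m) (Fin n) ℂ) : ℝ :=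
  if p = ⊤ then sval M 0
  else (∑ j ∈ Finset.range n, sval M j ^ p.toReal) ^ (1 / p.toReal)

/-- Moore–Penrose pseudoinverse of a full-row-rank matrix. -/
noncomputable def rpinv {a b : ℕ} (M : Matrix (Fin a) (Fin b) ℂ) : Matrix (Fin b) (Fin a) ℂ :=
  Mᴴ * (M * Mᴴ)⁻¹

/-- Rectangular diagonal matrix with entries `σ (off), σ (off+1), …` on the diagonal. -/
noncomputable def diagRect (σ : ℕ → ℝ) (off a b : ℕ) : Matrix (Fin a) (Fin b) ℂ :=
  Matrix.of fun i j => if (i : ℕ) = (j : ℕ) then (σ (off + (i : ℕ)) : ℂ) else 0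

/-- The first `b` columns of a matrix with `b + c` columns. -/
def colsL {a b c : ℕ} (M : Matrix (Fin a) (Fin (b + c)) ℂ) : Matrix (Fin a) (Fin b) ℂ :=
  M.submatrix id (Fin.castAdd c)

/-- The last `c` columns of a matrix with `b + c` columns. -/
def colsR {a b c : ℕ} (M : Matrix (Fin a) (Fin (b + c)) ℂ) : Matrix (Fin a) (Fin c) ℂ :=
  M.submatrix id (Fin.natAdd b)

/-- The constant
`C_d = (e·√(k+ρ)/(ρ+1))·(2/δ)^{1/(ρ+1)}·(√(n−k) + √(k+ρ) + √(2·log(2/δ)))`. -/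
noncomputable def Cd (k ρ nk : ℕ) (δ : ℝ) : ℝ :=
  Real.exp 1 * Real.sqrt ((k : ℝ) + ρ) / ((ρ : ℝ) + 1) *
    (2 / δ) ^ ((1 : ℝ) / ((ρ : ℝ) + 1)) *
    (Real.sqrt (nk : ℝ) + Real.sqrt ((k : ℝ) + ρ) + Real.sqrt (2 * Real.log (2 / δ)))

/-!
For a real Gaussian `Ω` the rows of `H = Ωᵀ` are independent standard Gaussian vectors. Write
`V` for the first `k` right singular vectors. The range of `Ω` covers the span of `V`, with
tangent at most `C_d`, unless some unit vector `V *ᵥ v` has squared cosine at most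
`η = 1 / (1 + C_d²)` with the row space of `H`; once it does, the power iteration multiplies the
tangents by powers of `γ_j`, and a comparison of subspaces in the style of Courant–Fischer bounds
the sines.

Since `Ω` is real while `V` is complex, the compressed Wishart matrix `W = Vᴴ * Hᵀ * H * V` is not
a complex Wishart matrix and its least eigenvalue has no usable density. Instead, the mass of the
complex Gaussian density `det W * exp (-(cᴴ * W * c)) / π ^ k` on the ball `‖c‖² < X` is at most
`1 - exp (-X * vᴴ * W * v)` for each unit vector `v`, while its expectation over `H` can be computed
by tilting the Gaussian: a divergence theorem reduces it to a radial integral, hence to Beta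
integrals. Averaging over random rotations of the rows of `H` (Haar measure and Jensen's inequality)
turns a near miss into a large value of `exp (-X * vᴴ * W * v)`. Markov's inequality and an
optimised `X` then give probability at most `δ`.
-/

open MeasureTheory ProbabilityTheory

section StandardGaussian

variable {ι E : Type*} [Fintype ι] [NormedAddCommGroup E] [NormedSpace ℝ E]

/-- The law of a vector of independent standard Gaussian coordinates, on the plain function space
`ι → ℝ` (as opposed to `ProbabilityTheory.stdGaussian`, which lives on `EuclideanSpace ℝ ι`). -/
noncomputable def stdGaussianPi (ι : Type*) [Fintype ι] : Measure (ι → ℝ) :=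
  Measure.pi fun _ => gaussianReal 0 1

instance : IsProbabilityMeasure (stdGaussianPi ι) := by
  unfold stdGaussianPi
  infer_instance

theorem measurePreserving_eval_stdGaussianPi (i : ι) :
    MeasurePreserving (Function.eval i) (stdGaussianPi ι) (gaussianReal 0 1) :=
  measurePreserving_eval (fun _ : ι => gaussianReal 0 1) i

theorem measurePreserving_toLp_stdGaussianPi :
    MeasurePreserving (WithLp.toLp 2) (stdGaussianPi ι) (stdGaussian (EuclideanSpace ℝ ι)) :=
  ⟨by fun_prop, map_pi_eq_stdGaussian⟩

theorem measurePreserving_mulVec_stdGaussianPi [DecidableEq ι] {O : Matrix ι ι ℝ}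
    (hO : O ∈ orthogonalGroup ι ℝ) :
    MeasurePreserving (O *ᵥ ·) (stdGaussianPi ι) (stdGaussianPi ι) := by
  let f : EuclideanSpace ℝ ι ≃ₗᵢ[ℝ] EuclideanSpace ℝ ι :=
    Unitary.linearIsometryEquiv
      ⟨toEuclideanCLM (n := ι) (𝕜 := ℝ) O, Unitary.map_mem (toEuclideanCLM (n := ι) (𝕜 := ℝ)) hO⟩
  have hf : MeasurePreserving f (stdGaussian _) (stdGaussian _) :=
    ⟨f.continuous.measurable, stdGaussian_map f⟩
  have hof : MeasurePreserving (WithLp.ofLp (p := 2))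
      (stdGaussian (EuclideanSpace ℝ ι)) (stdGaussianPi ι) :=
    measurePreserving_toLp_stdGaussianPi.symm (MeasurableEquiv.toLp 2 (ι → ℝ))
  exact hof.comp (hf.comp measurePreserving_toLp_stdGaussianPi)

theorem pi_gaussianReal_eq_withDensity (μ : ι → ℝ) {v : ι → NNReal} (hv : ∀ i, v i ≠ 0) :
    Measure.pi (fun i => gaussianReal (μ i) (v i)) =
      volume.withDensity fun g => ENNReal.ofReal (∏ i, gaussianPDFReal (μ i) (v i) (g i)) := by
  refine Measure.pi_eq fun s hs => ?_
  have hint : Integrable (fun g : ι → ℝ => ∏ i, gaussianPDFReal (μ i) (v i) (g i)) :=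
    Integrable.fintype_prod fun i => integrable_gaussianPDFReal (μ i) (v i)
  rw [withDensity_apply _ (MeasurableSet.univ_pi hs),
    ← ofReal_integral_eq_lintegral_ofReal hint.restrict
      (ae_of_all _ fun g => Finset.prod_nonneg fun i _ => gaussianPDFReal_nonneg _ _ _),
    volume_pi, Measure.restrict_pi_pi,
    integral_fintype_prod_eq_prod (fun i => gaussianPDFReal (μ i) (v i)),
    ENNReal.ofReal_prod_of_nonneg fun i _ =>
      integral_nonneg fun x => gaussianPDFReal_nonneg _ _ _]
  exact Finset.prod_congr rfl fun i _ => (gaussianReal_apply_eq_integral _ (hv i) _).symm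

theorem integral_stdGaussianPi (f : (ι → ℝ) → E) :
    ∫ g, f g ∂stdGaussianPi ι =
      (√(2 * Real.pi))⁻¹ ^ Fintype.card ι • ∫ g, Real.exp (-(g ⬝ᵥ g) / 2) • f g := by
  have hdens : ∀ g : ι → ℝ, ∏ i, gaussianPDFReal 0 1 (g i) =
      (√(2 * Real.pi))⁻¹ ^ Fintype.card ι * Real.exp (-(g ⬝ᵥ g) / 2) := fun g => by
    simp only [gaussianPDFReal, sub_zero, NNReal.coe_one, mul_one, Finset.prod_mul_distrib,
      Finset.prod_const, Finset.card_univ, ← Real.exp_sum, dotProduct, ← sq,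
      ← Finset.sum_neg_distrib, Finset.sum_div]
  rw [stdGaussianPi, pi_gaussianReal_eq_withDensity _ fun _ => one_ne_zero]
  simp only [hdens]
  rw [integral_withDensity_eq_integral_toReal_smul (by fun_prop)
    (ae_of_all _ fun _ => ENNReal.ofReal_lt_top), ← integral_smul]
  refine integral_congr_ae (ae_of_all _ fun g => ?_)
  simp only [ENNReal.toReal_ofReal (by positivity : 0 ≤ (√(2 * Real.pi))⁻¹ ^ Fintype.card ι *
    Real.exp (-(g ⬝ᵥ g) / 2)), smul_smul]

theorem integral_exp_smul_stdGaussianPi [DecidableEq ι] {B : Matrix ι ι ℝ} (hB : B.det ≠ 0)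
    (f : (ι → ℝ) → E) :
    ∫ g, Real.exp (-((B *ᵥ g) ⬝ᵥ (B *ᵥ g) - g ⬝ᵥ g) / 2) • f g ∂stdGaussianPi ι =
      |B.det|⁻¹ • ∫ g, f (B⁻¹ *ᵥ g) ∂stdGaussianPi ι := by
  have hemb : MeasurableEmbedding (toLin' B) :=
    (toLin' B).continuous_of_finiteDimensional.measurableEmbedding
      (mulVec_injective_of_isUnit ((isUnit_iff_isUnit_det B).2 hB.isUnit))
  have hvol := Real.map_matrix_volume_pi_eq_smul_volume_pi hB
  have hsubst : ∫ g, Real.exp (-((B *ᵥ g) ⬝ᵥ (B *ᵥ g)) / 2) • f g =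
      |B.det|⁻¹ • ∫ h, Real.exp (-(h ⬝ᵥ h) / 2) • f (B⁻¹ *ᵥ h) := by
    rw [← abs_inv, ← ENNReal.toReal_ofReal (abs_nonneg B.det⁻¹), ← integral_smul_measure, ← hvol,
      hemb.integral_map]
    simp only [toLin'_apply, mulVec_mulVec, nonsing_inv_mul _ hB.isUnit, one_mulVec]
  rw [integral_stdGaussianPi, integral_stdGaussianPi, smul_comm, ← hsubst]
  congr 2 with g
  rw [smul_smul, ← Real.exp_add]
  congr 2
  ring

theorem memLp_eval_stdGaussianPi (i : ι) : MemLp (fun g : ι → ℝ => g i) 2 (stdGaussianPi ι) :=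
  (memLp_id_gaussianReal (μ := 0) (v := 1) 2).comp_measurePreserving
    (measurePreserving_eval_stdGaussianPi i)

theorem integrable_mul_stdGaussianPi (i j : ι) :
    Integrable (fun g : ι → ℝ => g i * g j) (stdGaussianPi ι) :=
  (memLp_eval_stdGaussianPi i).integrable_mul (memLp_eval_stdGaussianPi j)

theorem integral_sq_gaussianReal (v : NNReal) : ∫ x, x ^ 2 ∂gaussianReal 0 v = v := by
  have := variance_eq_integral (μ := gaussianReal 0 v) (X := id) (by fun_prop)
  simpa only [variance_id_gaussianReal, integral_id_gaussianReal, id, sub_zero] using this.symm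

theorem integral_mul_stdGaussianPi [DecidableEq ι] (i j : ι) :
    ∫ g, g i * g j ∂stdGaussianPi ι = (1 : Matrix ι ι ℝ) i j := by
  rcases eq_or_ne i j with rfl | hij
  · have := integral_comp_eval (μ := fun _ : ι => gaussianReal 0 1) (i := i)
      (f := fun x : ℝ => x ^ 2) (by fun_prop)
    simpa [stdGaussianPi, ← sq, integral_sq_gaussianReal] using this
  · have hind : IndepFun (fun g : ι → ℝ => g i) (fun g => g j) (stdGaussianPi ι) :=
      (iIndepFun_pi (μ := fun _ : ι => gaussianReal 0 1) (X := fun _ x => x)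
        fun _ => aemeasurable_id).indepFun hij
    rw [hind.integral_fun_mul_eq_mul_integral (memLp_eval_stdGaussianPi i).aestronglyMeasurable
        (memLp_eval_stdGaussianPi j).aestronglyMeasurable,
      one_apply_ne hij, show ∫ g, g i ∂stdGaussianPi ι = 0 from ?_, zero_mul]
    exact (integral_comp_eval (μ := fun _ : ι => gaussianReal 0 1) (i := i) (f := fun x : ℝ => x)
      (by fun_prop)).trans integral_id_gaussianReal

theorem integral_mulVec_mul_mulVec_stdGaussianPi {κ : Type*} (M : Matrix κ ι ℝ)
    (a b : κ) : ∫ g, (M *ᵥ g) a * (M *ᵥ g) b ∂stdGaussianPi ι = (M * Mᵀ) a b := by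
  classical
  have hexp : ∀ g : ι → ℝ,
      (M *ᵥ g) a * (M *ᵥ g) b = ∑ i, ∑ j, M a i * M b j * (g i * g j) := fun g => by
    simp only [mulVec, dotProduct, Finset.sum_mul_sum, mul_mul_mul_comm]
  have hint : ∀ i j, Integrable (fun g : ι → ℝ => M a i * M b j * (g i * g j))
      (stdGaussianPi ι) := fun i j => (integrable_mul_stdGaussianPi i j).const_mul _
  simp only [hexp]
  rw [integral_finsetSum _ fun i _ => integrable_finsetSum _ fun j _ => hint i j]
  simp only [fun i => integral_finsetSum Finset.univ fun j _ => hint i j, integral_const_mul,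
    integral_mul_stdGaussianPi]
  simp [mul_apply, one_apply]

open scoped MatrixOrder in
theorem exists_transpose_mul_self_of_posDef [DecidableEq ι] {P : Matrix ι ι ℝ} (hP : P.PosDef) :
    ∃ B : Matrix ι ι ℝ, B.det ≠ 0 ∧ Bᵀ * B = P ∧ |B.det|⁻¹ = P.det ^ (-(1 / 2) : ℝ) := by
  obtain ⟨B, hB⟩ := CStarAlgebra.nonneg_iff_eq_star_mul_self.mp hP.posSemidef.nonneg
  replace hB : Bᵀ * B = P := by
    rw [hB, star_eq_conjTranspose, conjTranspose_eq_transpose_of_trivial]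
  have hdet : P.det = |B.det| ^ 2 := by rw [← hB, det_mul, det_transpose, sq_abs, sq]
  refine ⟨B, fun h => hP.det_pos.ne' (by simp [hdet, h]), hB, ?_⟩
  rw [hdet, ← Real.rpow_natCast, ← Real.rpow_mul (abs_nonneg _)]
  norm_num [Real.rpow_neg_one]

variable [DecidableEq ι] {P : Matrix ι ι ℝ}

theorem integral_exp_quadForm_stdGaussianPi (hP : P.PosDef) :
    ∫ g, Real.exp (-(g ⬝ᵥ (P *ᵥ g) - g ⬝ᵥ g) / 2) ∂stdGaussianPi ι = P.det ^ (-(1 / 2) : ℝ) := by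
  obtain ⟨B, hB, rfl, hdet⟩ := exists_transpose_mul_self_of_posDef hP
  have := integral_exp_smul_stdGaussianPi hB fun _ => (1 : ℝ)
  simpa [hdet, ← mulVec_mulVec, dotProduct_mulVec _ Bᵀ, vecMul_transpose] using this

theorem integral_exp_quadForm_mul_stdGaussianPi (hP : P.PosDef) (a b : ι) :
    ∫ g, Real.exp (-(g ⬝ᵥ (P *ᵥ g) - g ⬝ᵥ g) / 2) * (g a * g b) ∂stdGaussianPi ι =
      P.det ^ (-(1 / 2) : ℝ) * P⁻¹ a b := by
  obtain ⟨B, hB, rfl, hdet⟩ := exists_transpose_mul_self_of_posDef hP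
  have := integral_exp_smul_stdGaussianPi hB fun g => g a * g b
  rw [integral_mulVec_mul_mulVec_stdGaussianPi, transpose_nonsing_inv, ← Matrix.mul_inv_rev, hdet]
    at this
  simpa [← mulVec_mulVec, dotProduct_mulVec _ Bᵀ, vecMul_transpose] using this

end StandardGaussian

section DetSumRankOne

variable {κ m : Type*} [Fintype κ] [Fintype m]

theorem prod_eq_prod_embedding_mul_prod_compl [DecidableEq m] {M : Type*} [CommMonoid M]
    (f : κ ↪ m) (F : m → M) : ∏ j, F j = (∏ i, F (f i)) * ∏ j ∈ (Finset.univ.map f)ᶜ, F j := by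
  rw [← Finset.prod_mul_prod_compl (Finset.univ.map f), Finset.prod_map]

variable {𝕜 E : Type*} [RCLike 𝕜] [MeasurableSpace E] {ν : Measure E} [SigmaFinite ν]

theorem integrable_and_integral_prod_embedding_mul_prod (f : κ ↪ m) {u : κ → E → 𝕜} {e : E → 𝕜}
    (he : Integrable e ν) (hu : ∀ i, Integrable (fun g => u i g * e g) ν) :
    Integrable (fun H : m → E => (∏ i, u i (H (f i))) * ∏ j, e (H j)) (Measure.pi fun _ => ν) ∧
    ∫ H : m → E, (∏ i, u i (H (f i))) * ∏ j, e (H j) ∂(Measure.pi fun _ => ν) =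
      (∏ i, ∫ g, u i g * e g ∂ν) * (∫ g, e g ∂ν) ^ (Fintype.card m - Fintype.card κ) := by
  classical
  let h : m → E → 𝕜 := fun j g => Function.extend f u (fun _ _ => 1) j g * e g
  have hrange : ∀ i, h (f i) = fun g => u i g * e g := fun i => by
    simp only [h, f.injective.extend_apply]
  have hcompl : ∀ j ∈ (Finset.univ.map f)ᶜ, h j = e := fun j hj => by
    funext g
    simp only [h, Function.extend_apply' u _ j (by simpa using hj), one_mul]
  have hprod : ∀ H : m → E, (∏ i, u i (H (f i))) * ∏ j, e (H j) = ∏ j, h j (H j) := fun H => by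
    rw [prod_eq_prod_embedding_mul_prod_compl f fun j => e (H j),
      prod_eq_prod_embedding_mul_prod_compl f fun j => h j (H j), ← mul_assoc,
      ← Finset.prod_mul_distrib]
    simp only [hrange]
    congr 1
    exact Finset.prod_congr rfl fun j hj => by rw [hcompl j hj]
  simp only [hprod]
  constructor
  · refine Integrable.fintype_prod fun j => ?_
    by_cases hj : j ∈ Finset.univ.map f
    · obtain ⟨i, -, rfl⟩ := Finset.mem_map.mp hj
      exact hrange i ▸ hu i
    · exact hcompl j (Finset.mem_compl.mpr hj) ▸ he
  · rw [integral_fintype_prod_eq_prod, prod_eq_prod_embedding_mul_prod_compl f,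
      Finset.prod_congr (rfl : (Finset.univ.map f)ᶜ = _) fun j hj =>
        congrArg (fun u => ∫ g, u g ∂ν) (hcompl j hj),
      Finset.prod_const, Finset.card_compl, Finset.card_map, Finset.card_univ]
    simp only [hrange]

variable [DecidableEq κ]

theorem det_sum_mul_eq_sum_embedding {R : Type*} [CommRing R] (x y : m → κ → R) :
    (of fun a b => ∑ j, x j a * y j b).det =
      ∑ f : κ ↪ m, (of fun a b => x (f b) a * y (f b) b).det := by
  classical
  have hexpand : (of fun a b => ∑ j, x j a * y j b).det =
      ∑ f : κ → m, (of fun a b => x (f b) a * y (f b) b).det := by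
    simp only [det_apply', of_apply, Finset.prod_univ_sum, Fintype.piFinset_univ, Finset.mul_sum]
    exact Finset.sum_comm
  have hinj : ∀ f : κ → m, (of fun a b => x (f b) a * y (f b) b).det ≠ 0 →
      Function.Injective f := fun f => by
    contrapose!
    intro hf
    obtain ⟨i, j, hij, hne⟩ := Function.not_injective_iff.mp hf
    have := det_mul_row (fun b => y (f b) b) (of fun a b => x (f b) a)
    simp only [of_apply] at this
    simp only [mul_comm (x _ _), this]
    rw [det_zero_of_column_eq hne (fun a => by simp only [of_apply, hij]), mul_zero]
  rw [hexpand, ← Finset.sum_filter_of_ne fun f _ => hinj f,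
    Finset.sum_subtype _ fun f => Finset.mem_filter_univ f]
  exact Fintype.sum_equiv (Equiv.subtypeInjectiveEquivEmbedding κ m) _ _ fun f => rfl

variable {x y : E → κ → 𝕜} {e : E → 𝕜}

theorem integrable_and_integral_det_embedding_mul_prod (f : κ ↪ m) (he : Integrable e ν)
    (hxy : ∀ a b, Integrable (fun g => x g a * y g b * e g) ν) :
    Integrable (fun H : m → E =>
      (of fun a b => x (H (f b)) a * y (H (f b)) b).det * ∏ j, e (H j)) (Measure.pi fun _ => ν) ∧
    ∫ H : m → E, (of fun a b => x (H (f b)) a * y (H (f b)) b).det * ∏ j, e (H j)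
        ∂(Measure.pi fun _ => ν) =
      (of fun a b => ∫ g, x g a * y g b * e g ∂ν).det *
        (∫ g, e g ∂ν) ^ (Fintype.card m - Fintype.card κ) := by
  have hterm := fun τ : Equiv.Perm κ =>
    integrable_and_integral_prod_embedding_mul_prod f he fun i => hxy (τ i) i
  simp only [det_apply', of_apply, Finset.sum_mul, mul_assoc] at hterm ⊢
  refine ⟨integrable_finsetSum _ fun τ _ => (hterm τ).1.const_mul _, ?_⟩
  rw [integral_finsetSum _ fun τ _ => (hterm τ).1.const_mul _]
  exact Finset.sum_congr rfl fun τ _ => by rw [integral_const_mul, (hterm τ).2]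

theorem integrable_and_integral_det_sum_mul_prod (he : Integrable e ν)
    (hxy : ∀ a b, Integrable (fun g => x g a * y g b * e g) ν) :
    Integrable (fun H : m → E => (of fun a b => ∑ j, x (H j) a * y (H j) b).det * ∏ j, e (H j))
      (Measure.pi fun _ => ν) ∧
    ∫ H : m → E, (of fun a b => ∑ j, x (H j) a * y (H j) b).det * ∏ j, e (H j)
        ∂(Measure.pi fun _ => ν) =
      (Fintype.card m).descFactorial (Fintype.card κ) *
        ((of fun a b => ∫ g, x g a * y g b * e g ∂ν).det *
          (∫ g, e g ∂ν) ^ (Fintype.card m - Fintype.card κ)) := by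
  have hterm := fun f : κ ↪ m => integrable_and_integral_det_embedding_mul_prod f he hxy
  simp only [fun H : m → E => det_sum_mul_eq_sum_embedding (fun j => x (H j)) fun j => y (H j),
    Finset.sum_mul]
  refine ⟨integrable_finsetSum _ fun f _ => (hterm f).1, ?_⟩
  rw [integral_finsetSum _ fun f _ => (hterm f).1]
  classical
  simp only [(hterm _).2, Finset.sum_const, Finset.card_univ, Fintype.card_embedding_eq,
    nsmul_eq_mul]

end DetSumRankOne

section ComplexVectors

variable {ι κ : Type*} [Fintype ι] [Fintype κ]

/-- The squared Hermitian norm of a complex coordinate vector. -/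
noncomputable def sqNorm (c : κ → ℂ) : ℝ := ∑ i, ‖c i‖ ^ 2

/-- The complex-bilinear square `sᵀ s` of `s = V c`; its modulus attains
`sqNorm s` exactly when `s` is a complex multiple of a real vector. -/
def selfDot (V : Matrix ι κ ℂ) (c : κ → ℂ) : ℂ := (V *ᵥ c) ⬝ᵥ (V *ᵥ c)

/-- The antilinear map `c ↦ Vᴴ s̄`, where `s = V c`. -/
def conjCompress (V : Matrix ι κ ℂ) (c : κ → ℂ) : κ → ℂ := Vᴴ *ᵥ star (V *ᵥ c)

theorem star_dotProduct_self_eq_sqNorm (c : κ → ℂ) : star c ⬝ᵥ c = (sqNorm c : ℂ) := by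
  simp only [sqNorm, dotProduct, Pi.star_apply, Complex.ofReal_sum, Complex.ofReal_pow,
    Complex.star_def, Complex.conj_mul']

theorem sqNorm_nonneg (c : κ → ℂ) : 0 ≤ sqNorm c :=
  Finset.sum_nonneg fun _ _ => by positivity

theorem sqNorm_star (c : κ → ℂ) : sqNorm (star c) = sqNorm c := by
  simp only [sqNorm, Pi.star_apply, norm_star]

theorem sqNorm_mulVec_of_isometry [DecidableEq κ] {V : Matrix ι κ ℂ} (hV : Vᴴ * V = 1)
    (c : κ → ℂ) : sqNorm (V *ᵥ c) = sqNorm c := by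
  rw [← Complex.ofReal_inj, ← star_dotProduct_self_eq_sqNorm, ← star_dotProduct_self_eq_sqNorm,
    star_mulVec, ← dotProduct_mulVec, mulVec_mulVec, hV, one_mulVec]

theorem star_dotProduct_conjCompress (V : Matrix ι κ ℂ) (c : κ → ℂ) :
    star c ⬝ᵥ conjCompress V c = star (selfDot V c) := by
  rw [conjCompress, dotProduct_mulVec, ← star_mulVec, selfDot, star_dotProduct_star]

theorem star_conjCompress_dotProduct (V : Matrix ι κ ℂ) (c : κ → ℂ) :
    star (conjCompress V c) ⬝ᵥ c = selfDot V c := by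
  rw [star_dotProduct, star_dotProduct_conjCompress, star_star]

theorem norm_dotProduct_le_sqNorm (x y : ι → ℂ) : ‖x ⬝ᵥ y‖ ≤ (sqNorm x + sqNorm y) / 2 := by
  rw [sqNorm, sqNorm, ← Finset.sum_add_distrib, Finset.sum_div]
  refine (norm_sum_le _ _).trans (Finset.sum_le_sum fun i _ => ?_)
  rw [norm_mul]
  nlinarith [sq_nonneg (‖x i‖ - ‖y i‖)]

theorem norm_dotProduct_self_le (s : ι → ℂ) : ‖s ⬝ᵥ s‖ ≤ sqNorm s :=
  (norm_sum_le _ _).trans_eq <| Finset.sum_congr rfl fun i _ => by rw [norm_mul, sq]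

end ComplexVectors

section CompressedInverse

theorem map_inv_of_isUnit_det {n R S : Type*} [Fintype n] [DecidableEq n] [CommRing R] [CommRing S]
    (f : R →+* S) {A : Matrix n n R} (hA : IsUnit A.det) : A⁻¹.map f = (A.map f)⁻¹ := by
  refine (inv_eq_right_inv ?_).symm
  rw [← Matrix.map_mul, mul_nonsing_inv _ hA, Matrix.map_one _ f.map_zero f.map_one]

variable {ι κ m 𝕜 : Type*} [Fintype ι] [Fintype κ] [Fintype m] [DecidableEq ι] [DecidableEq κ]
  [DecidableEq m] [Field 𝕜] [StarRing 𝕜]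

theorem det_compress_inv_one_add_mul_conjTranspose {V : Matrix ι κ 𝕜} (hV : Vᴴ * V = 1)
    (B : Matrix ι m 𝕜) (hB : (1 + Bᴴ * B).det ≠ 0) :
    (Vᴴ * (1 + B * Bᴴ)⁻¹ * V).det =
      (1 + (Bᴴ * B - (Vᴴ * B)ᴴ * (Vᴴ * B))).det / (1 + Bᴴ * B).det := by
  set M := 1 + Bᴴ * B with hM
  have hunit : IsUnit M := (isUnit_iff_isUnit_det M).2 hB.isUnit
  have hwoodbury : (1 + B * Bᴴ)⁻¹ = 1 - B * M⁻¹ * Bᴴ := by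
    simpa using add_mul_mul_inv_eq_sub 1 B 1 Bᴴ isUnit_one isUnit_one (by simpa using hunit)
  have hcompress : Vᴴ * (1 + B * Bᴴ)⁻¹ * V = 1 - Vᴴ * B * (M⁻¹ * (Vᴴ * B)ᴴ) := by
    rw [hwoodbury, Matrix.mul_sub, Matrix.sub_mul, Matrix.mul_one, hV, conjTranspose_mul,
      conjTranspose_conjTranspose]
    simp only [Matrix.mul_assoc]
  rw [hcompress, det_one_sub_mul_comm, eq_div_iff hB, mul_comm, ← det_mul, Matrix.mul_sub,
    Matrix.mul_one, Matrix.mul_assoc, mul_nonsing_inv_cancel_left _ _ hB.isUnit, hM, add_sub_assoc]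

end CompressedInverse

section Tilt

variable {ι κ : Type*}

/-- The `ι × 2` matrix with columns `a` and `b`. -/
def twoCols (a b : ι → ℂ) : Matrix ι (Fin 2) ℂ := of fun i => ![a i, b i]

/-- The real matrix `I + s s* + s̄ sᵀ`; it is the precision matrix of a standard Gaussian vector `g`
whose law is tilted by `exp (-|gᵀ s|²)`. -/
def tiltMatrix [DecidableEq ι] (s : ι → ℂ) : Matrix ι ι ℝ :=
  1 + (2 : ℝ) • (vecMulVec (Complex.re ∘ s) (Complex.re ∘ s) +
    vecMulVec (Complex.im ∘ s) (Complex.im ∘ s))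

theorem mul_twoCols [Fintype ι] (A : Matrix κ ι ℂ) (a b : ι → ℂ) :
    A * twoCols a b = twoCols (A *ᵥ a) (A *ᵥ b) := by
  ext i j
  fin_cases j <;> simp [twoCols, mul_apply, mulVec, dotProduct]

theorem twoCols_conjTranspose_mul_self [Fintype ι] (a b : ι → ℂ) :
    (twoCols a b)ᴴ * twoCols a b =
      !![(sqNorm a : ℂ), star a ⬝ᵥ b; star b ⬝ᵥ a, (sqNorm b : ℂ)] := by
  simp only [← star_dotProduct_self_eq_sqNorm]
  ext i j
  fin_cases i <;> fin_cases j <;> simp [twoCols, mul_apply, dotProduct]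

theorem map_tiltMatrix [DecidableEq ι] (s : ι → ℂ) :
    (tiltMatrix s).map Complex.ofReal = 1 + twoCols s (star s) * (twoCols s (star s))ᴴ := by
  ext i j
  have hpair : ((2 * ((s i).re * (s j).re + (s i).im * (s j).im) : ℝ) : ℂ) =
      s i * star (s j) + star (s i) * s j := by
    apply Complex.ext <;> simp <;> ring
  by_cases hij : i = j <;>
    simpa [tiltMatrix, twoCols, mul_apply, vecMulVec_apply, one_apply, hij, mul_add] using hpair

theorem posDef_tiltMatrix [Finite ι] [DecidableEq ι] (s : ι → ℂ) : (tiltMatrix s).PosDef :=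
  PosDef.one.add_posSemidef <| ((posSemidef_vecMulVec_self_star _).add
    (posSemidef_vecMulVec_self_star _)).smul zero_le_two

variable [Fintype ι]

theorem dotProduct_tiltMatrix_mulVec_sub [DecidableEq ι] (s : ι → ℂ) (g : ι → ℝ) :
    g ⬝ᵥ (tiltMatrix s *ᵥ g) - g ⬝ᵥ g = 2 * ‖Complex.ofReal ∘ g ⬝ᵥ s‖ ^ 2 := by
  have hre : (Complex.ofReal ∘ g ⬝ᵥ s).re = g ⬝ᵥ Complex.re ∘ s := by simp [dotProduct]
  have him : (Complex.ofReal ∘ g ⬝ᵥ s).im = g ⬝ᵥ Complex.im ∘ s := by simp [dotProduct]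
  rw [← Complex.normSq_eq_norm_sq, Complex.normSq_apply, hre, him, tiltMatrix, add_mulVec,
    one_mulVec, dotProduct_add, smul_mulVec, add_mulVec, vecMulVec_mulVec, vecMulVec_mulVec]
  simp only [dotProduct_smul, dotProduct_add, smul_eq_mul, op_smul_eq_smul,
    dotProduct_comm _ g]
  ring

theorem det_one_add_conjTranspose_mul_twoCols_star (s : ι → ℂ) :
    (1 + (twoCols s (star s))ᴴ * twoCols s (star s)).det =
      (((1 + sqNorm s) ^ 2 - ‖s ⬝ᵥ s‖ ^ 2 : ℝ) : ℂ) := by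
  have hnorm := Complex.conj_mul' (s ⬝ᵥ s)
  rw [twoCols_conjTranspose_mul_self, star_star, sqNorm_star, star_dotProduct_star,
    det_fin_two]
  push_cast
  rw [← hnorm]
  simp
  ring

theorem det_tiltMatrix [DecidableEq ι] (s : ι → ℂ) :
    (tiltMatrix s).det = (1 + sqNorm s) ^ 2 - ‖s ⬝ᵥ s‖ ^ 2 := by
  rw [← Complex.ofReal_inj, ← det_one_add_conjTranspose_mul_twoCols_star, ← det_one_add_mul_comm,
    ← map_tiltMatrix]
  exact RingHom.map_det Complex.ofRealHom (tiltMatrix s)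

theorem det_compress_inv_tiltMatrix [Fintype κ] [DecidableEq ι] [DecidableEq κ]
    {V : Matrix ι κ ℂ} (hV : Vᴴ * V = 1) (c : κ → ℂ) :
    (Vᴴ * (tiltMatrix (V *ᵥ c))⁻¹.map Complex.ofReal * V).det =
      ((1 + sqNorm c - sqNorm (conjCompress V c)) / (tiltMatrix (V *ᵥ c)).det : ℝ) := by
  set s := V *ᵥ c with hs
  have hdet := det_one_add_conjTranspose_mul_twoCols_star s
  rw [← det_tiltMatrix] at hdet
  have hinv : (tiltMatrix s)⁻¹.map Complex.ofReal =
      (1 + twoCols s (star s) * (twoCols s (star s))ᴴ)⁻¹ := by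
    rw [← map_tiltMatrix]
    exact map_inv_of_isUnit_det Complex.ofRealHom (posDef_tiltMatrix s).det_pos.ne'.isUnit
  have hVs : Vᴴ *ᵥ s = c := by rw [hs, mulVec_mulVec, hV, one_mulVec]
  rw [hinv, det_compress_inv_one_add_mul_conjTranspose hV _
    (hdet ▸ Complex.ofReal_ne_zero.2 (posDef_tiltMatrix s).det_pos.ne'), hdet, Complex.ofReal_div,
    mul_twoCols Vᴴ, hVs, show Vᴴ *ᵥ star s = conjCompress V c from rfl,
    twoCols_conjTranspose_mul_self,
    twoCols_conjTranspose_mul_self, star_dotProduct_conjCompress, star_conjCompress_dotProduct,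
    selfDot, star_star, sqNorm_star,
    sqNorm_mulVec_of_isometry hV, det_fin_two]
  simp
  ring

end Tilt

section Wishart

variable {ι κ m : Type*} [Fintype ι] [Fintype m]

/-- The law of a family of independent standard Gaussian vectors of `ℝ^ι`, indexed by `m` and
thought of as the rows of a matrix. -/
noncomputable def gaussianRows (m ι : Type*) [Fintype m] [Fintype ι] : Measure (m → ι → ℝ) :=
  Measure.pi fun _ => stdGaussianPi ι

instance : IsProbabilityMeasure (gaussianRows m ι) := by
  unfold gaussianRows
  infer_instance

/-- The compressed Wishart matrix `Vᴴ Hᵀ H V` of a real matrix `H` and a complex frame `V`. -/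
def wishart (V : Matrix ι κ ℂ) (H : Matrix m ι ℝ) : Matrix κ κ ℂ :=
  (H.map Complex.ofReal * V)ᴴ * (H.map Complex.ofReal * V)

/-- The closed form, up to the factor `N (N - 1) ⋯ (N - k + 1)`, of the expectation of
`det W · exp (-c* W c)` for the compressed Wishart matrix `W` of `N` Gaussian rows. -/
noncomputable def wishartDensity [Fintype κ] (N : ℕ) (V : Matrix ι κ ℂ) (c : κ → ℂ) : ℝ :=
  ((1 + sqNorm c) ^ 2 - ‖selfDot V c‖ ^ 2) ^ (-((N : ℝ) / 2 + 1)) *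
    (1 + sqNorm c - sqNorm (conjCompress V c))

open scoped ComplexOrder in
theorem posSemidef_wishart [Finite κ] (V : Matrix ι κ ℂ) (H : Matrix m ι ℝ) :
    (wishart V H).PosSemidef :=
  posSemidef_conjTranspose_mul_self _

theorem star_dotProduct_wishart_mulVec [Fintype κ] (V : Matrix ι κ ℂ) (H : Matrix m ι ℝ)
    (c : κ → ℂ) :
    star c ⬝ᵥ wishart V H *ᵥ c = (sqNorm (H.map Complex.ofReal *ᵥ (V *ᵥ c)) : ℂ) := by
  rw [← star_dotProduct_self_eq_sqNorm, wishart, ← mulVec_mulVec, dotProduct_mulVec, ← star_mulVec,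
    mulVec_mulVec]

theorem integrable_and_integral_vecMul_mul_star {μ : Measure (ι → ℝ)} {f : (ι → ℝ) → ℝ}
    (hf : ∀ i j, Integrable (fun g => f g * (g i * g j)) μ) (V : Matrix ι κ ℂ) (a b : κ) :
    Integrable (fun g => star ((Complex.ofReal ∘ g ᵥ* V) a) * (Complex.ofReal ∘ g ᵥ* V) b * f g) μ ∧
    ∫ g, star ((Complex.ofReal ∘ g ᵥ* V) a) * (Complex.ofReal ∘ g ᵥ* V) b * f g ∂μ =
      (Vᴴ * (of fun i j => ∫ g, f g * (g i * g j) ∂μ).map Complex.ofReal * V) a b := by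
  have hexp : ∀ g : ι → ℝ,
      star ((Complex.ofReal ∘ g ᵥ* V) a) * (Complex.ofReal ∘ g ᵥ* V) b * f g =
        ∑ j, ∑ i, Vᴴ a i * V j b * ((f g * (g i * g j) : ℝ) : ℂ) := fun g => by
    simp only [vecMul, dotProduct, star_sum, star_mul', Function.comp_apply, Complex.star_def,
      Complex.conj_ofReal, conjTranspose_apply]
    rw [Finset.sum_mul_sum, Finset.sum_comm]
    simp only [Finset.sum_mul]
    refine Finset.sum_congr rfl fun j _ => Finset.sum_congr rfl fun i _ => ?_
    push_cast
    ring
  have hint : ∀ i j, Integrable (fun g => Vᴴ a i * V j b * ((f g * (g i * g j) : ℝ) : ℂ)) μ :=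
    fun i j => (hf i j).ofReal.const_mul _
  simp only [hexp]
  refine ⟨integrable_finsetSum _ fun j _ => integrable_finsetSum _ fun i _ => hint i j, ?_⟩
  rw [integral_finsetSum _ fun j _ => integrable_finsetSum _ fun i _ => hint i j]
  simp only [fun j => integral_finsetSum Finset.univ fun i _ => hint i j, integral_const_mul,
    integral_complex_ofReal, mul_apply, map_apply, of_apply, Finset.sum_mul]
  exact Finset.sum_congr rfl fun j _ => Finset.sum_congr rfl fun i _ => by ring

theorem integrable_exp_neg_norm_sq_stdGaussianPi (s : ι → ℂ) :
    Integrable (fun g : ι → ℝ => Real.exp (-‖Complex.ofReal ∘ g ⬝ᵥ s‖ ^ 2)) (stdGaussianPi ι) := by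
  refine (integrable_const (1 : ℝ)).mono' (Continuous.aestronglyMeasurable ?_) (ae_of_all _ ?_)
  · unfold dotProduct
    fun_prop
  · intro g
    simp

theorem integrable_exp_neg_norm_sq_mul_stdGaussianPi (s : ι → ℂ) (i j : ι) :
    Integrable (fun g : ι → ℝ => Real.exp (-‖Complex.ofReal ∘ g ⬝ᵥ s‖ ^ 2) * (g i * g j))
      (stdGaussianPi ι) :=
  (integrable_mul_stdGaussianPi i j).bdd_mul (c := 1)
    (integrable_exp_neg_norm_sq_stdGaussianPi s).aestronglyMeasurable (ae_of_all _ fun g => by simp)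

theorem exp_neg_norm_sq_eq_exp_tiltMatrix [DecidableEq ι] (s : ι → ℂ) (g : ι → ℝ) :
    Real.exp (-‖Complex.ofReal ∘ g ⬝ᵥ s‖ ^ 2) =
      Real.exp (-(g ⬝ᵥ (tiltMatrix s *ᵥ g) - g ⬝ᵥ g) / 2) := by
  rw [dotProduct_tiltMatrix_mulVec_sub]
  ring_nf

theorem integral_exp_neg_norm_sq_stdGaussianPi [DecidableEq ι] (s : ι → ℂ) :
    ∫ g, Real.exp (-‖Complex.ofReal ∘ g ⬝ᵥ s‖ ^ 2) ∂stdGaussianPi ι =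
      (tiltMatrix s).det ^ (-(1 / 2) : ℝ) := by
  simp only [exp_neg_norm_sq_eq_exp_tiltMatrix,
    integral_exp_quadForm_stdGaussianPi (posDef_tiltMatrix s)]

theorem integral_exp_neg_norm_sq_mul_stdGaussianPi [DecidableEq ι] (s : ι → ℂ) :
    (of fun i j => ∫ g, Real.exp (-‖Complex.ofReal ∘ g ⬝ᵥ s‖ ^ 2) * (g i * g j) ∂stdGaussianPi ι) =
      (tiltMatrix s).det ^ (-(1 / 2) : ℝ) • (tiltMatrix s)⁻¹ := by
  ext i j
  simp only [exp_neg_norm_sq_eq_exp_tiltMatrix, of_apply, Matrix.smul_apply, smul_eq_mul,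
    integral_exp_quadForm_mul_stdGaussianPi (posDef_tiltMatrix s)]

variable [Fintype κ]

theorem exp_neg_quadForm_wishart (V : Matrix ι κ ℂ) (H : Matrix m ι ℝ) (c : κ → ℂ) :
    (Real.exp (-(star c ⬝ᵥ wishart V H *ᵥ c).re) : ℂ) =
      ∏ j, ((Real.exp (-‖Complex.ofReal ∘ H j ⬝ᵥ (V *ᵥ c)‖ ^ 2) : ℝ) : ℂ) := by
  rw [star_dotProduct_wishart_mulVec, Complex.ofReal_re, sqNorm, ← Finset.sum_neg_distrib,
    Real.exp_sum, Complex.ofReal_prod]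
  rfl

variable [DecidableEq κ]

theorem det_integral_vecMul_mul_star_stdGaussianPi [DecidableEq ι] {V : Matrix ι κ ℂ}
    (hV : Vᴴ * V = 1) (c : κ → ℂ) :
    (of fun a b => ∫ g, star ((Complex.ofReal ∘ g ᵥ* V) a) * (Complex.ofReal ∘ g ᵥ* V) b *
        (Real.exp (-‖Complex.ofReal ∘ g ⬝ᵥ (V *ᵥ c)‖ ^ 2) : ℝ) ∂stdGaussianPi ι).det =
      (((tiltMatrix (V *ᵥ c)).det ^ (-(1 / 2) : ℝ)) ^ Fintype.card κ *
        ((1 + sqNorm c - sqNorm (conjCompress V c)) / (tiltMatrix (V *ᵥ c)).det) : ℝ) := by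
  have hsmul : ∀ r : ℝ, (r • (tiltMatrix (V *ᵥ c))⁻¹).map Complex.ofReal =
      (r : ℂ) • (tiltMatrix (V *ᵥ c))⁻¹.map Complex.ofReal := fun r => by
    ext i j
    simp
  simp only [fun a b => (integrable_and_integral_vecMul_mul_star
      (integrable_exp_neg_norm_sq_mul_stdGaussianPi (V *ᵥ c)) V a b).2,
    integral_exp_neg_norm_sq_mul_stdGaussianPi, hsmul]
  change (Vᴴ * ((_ : ℂ) • (tiltMatrix (V *ᵥ c))⁻¹.map Complex.ofReal) * V).det = _
  rw [Matrix.mul_smul, Matrix.smul_mul, det_smul, det_compress_inv_tiltMatrix hV]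
  push_cast
  rfl

theorem integrable_and_integral_det_wishart_mul_exp_complex {V : Matrix ι κ ℂ} (hV : Vᴴ * V = 1)
    (hκ : Fintype.card κ ≤ Fintype.card m) (c : κ → ℂ) :
    Integrable (fun H => (wishart V (of H)).det *
      (Real.exp (-(star c ⬝ᵥ wishart V (of H) *ᵥ c).re) : ℂ)) (gaussianRows m ι) ∧
    ∫ H, (wishart V (of H)).det * (Real.exp (-(star c ⬝ᵥ wishart V (of H) *ᵥ c).re) : ℂ)
        ∂gaussianRows m ι =
      (((Fintype.card m).descFactorial (Fintype.card κ) *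
        wishartDensity (Fintype.card m) V c : ℝ) : ℂ) := by
  classical
  obtain ⟨hint, hval⟩ := integrable_and_integral_det_sum_mul_prod (m := m)
    (e := fun g => (Real.exp (-‖Complex.ofReal ∘ g ⬝ᵥ (V *ᵥ c)‖ ^ 2) : ℂ))
    (integrable_exp_neg_norm_sq_stdGaussianPi (V *ᵥ c)).ofReal fun a b =>
      (integrable_and_integral_vecMul_mul_star
        (integrable_exp_neg_norm_sq_mul_stdGaussianPi (V *ᵥ c)) V a b).1
  simp only [exp_neg_quadForm_wishart]
  refine ⟨hint, hval.trans ?_⟩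
  simp only [det_integral_vecMul_mul_star_stdGaussianPi hV c, integral_complex_ofReal,
    integral_exp_neg_norm_sq_stdGaussianPi]
  have hdet : (tiltMatrix (V *ᵥ c)).det = (1 + sqNorm c) ^ 2 - ‖selfDot V c‖ ^ 2 := by
    rw [det_tiltMatrix, sqNorm_mulVec_of_isometry hV, selfDot]
  have hpos : 0 < (tiltMatrix (V *ᵥ c)).det := (posDef_tiltMatrix _).det_pos
  set d := (tiltMatrix (V *ᵥ c)).det
  have hpow : (d ^ (-(1 / 2) : ℝ)) ^ Fintype.card κ *
      (d ^ (-(1 / 2) : ℝ)) ^ (Fintype.card m - Fintype.card κ) * d⁻¹ =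
        d ^ (-((Fintype.card m : ℝ) / 2 + 1)) := by
    rw [← pow_add, Nat.add_sub_cancel' hκ, ← Real.rpow_natCast, ← Real.rpow_mul hpos.le,
      ← Real.rpow_neg_one, ← Real.rpow_add hpos]
    ring_nf
  rw [wishartDensity, ← hdet, ← hpow]
  push_cast
  ring

theorem integrable_and_integral_det_wishart_mul_exp {V : Matrix ι κ ℂ} (hV : Vᴴ * V = 1)
    (hκ : Fintype.card κ ≤ Fintype.card m) (c : κ → ℂ) :
    Integrable (fun H => (wishart V (of H)).det.re *
      Real.exp (-(star c ⬝ᵥ wishart V (of H) *ᵥ c).re)) (gaussianRows m ι) ∧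
    ∫ H, (wishart V (of H)).det.re * Real.exp (-(star c ⬝ᵥ wishart V (of H) *ᵥ c).re)
        ∂gaussianRows m ι =
      (Fintype.card m).descFactorial (Fintype.card κ) * wishartDensity (Fintype.card m) V c := by
  obtain ⟨hint, hval⟩ := integrable_and_integral_det_wishart_mul_exp_complex hV hκ c
  have hre := integral_re hint
  simp only [RCLike.re_to_complex, Complex.re_mul_ofReal] at hre
  exact ⟨by simpa only [RCLike.re_to_complex, Complex.re_mul_ofReal] using hint.re,
    by rw [hre, hval, Complex.ofReal_re]⟩

end Wishart

section LinearFlow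

variable {E : Type*} [NormedAddCommGroup E] [NormedSpace ℝ E] (L : E →L[ℝ] E)

theorem norm_smul_apply_le_half {t : ℝ} (ht : |t| * ‖L‖ ≤ 1 / 2) (c : E) :
    ‖t • L c‖ ≤ 1 / 2 * ‖c‖ := by
  rw [norm_smul, Real.norm_eq_abs]
  calc |t| * ‖L c‖ ≤ |t| * (‖L‖ * ‖c‖) := by gcongr; exact L.le_opNorm c
    _ = |t| * ‖L‖ * ‖c‖ := by ring
    _ ≤ 1 / 2 * ‖c‖ := by gcongr

theorem lt_norm_add_smul_apply {t ρ : ℝ} (ht : |t| * ‖L‖ ≤ 1 / 2) {c : E} (hc : 2 * ρ < ‖c‖) :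
    ρ < ‖c + t • L c‖ := by
  linarith [norm_smul_apply_le_half L ht c, norm_sub_le_norm_add c (t • L c)]

theorem norm_slope_le_indicator {f : E → ℝ} {K : NNReal} {ρ t : ℝ}
    (hf : LipschitzOnWith K f (Metric.closedBall 0 (3 * ρ))) (hρ : 0 ≤ ρ)
    (hsupp : ∀ c, ρ < ‖c‖ → f c = 0) (ht : |t| * ‖L‖ ≤ 1 / 2) (ht0 : t ≠ 0) (c : E) :
    ‖t⁻¹ • (f (c + t • L c) - f c)‖ ≤
      (Metric.closedBall (0 : E) (2 * ρ)).indicator (fun _ => K * (‖L‖ * (2 * ρ))) c := by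
  rcases lt_or_ge (2 * ρ) ‖c‖ with hc | hc
  · rw [hsupp _ (lt_norm_add_smul_apply L ht hc), hsupp c (by linarith),
      Set.indicator_of_notMem (by simpa using hc), sub_zero, smul_zero, norm_zero]
  · rw [Set.indicator_of_mem (by simpa using hc), norm_smul, norm_inv,
      inv_mul_le_iff₀ (norm_pos_iff.mpr ht0)]
    have hmove := norm_smul_apply_le_half L ht c
    calc ‖f (c + t • L c) - f c‖ ≤ K * ‖c + t • L c - c‖ := by
          refine hf.norm_sub_le ?_ ?_ <;> rw [mem_closedBall_zero_iff]
          · linarith [norm_add_le c (t • L c)]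
          · linarith
      _ = ‖t‖ * (K * ‖L c‖) := by
          rw [add_sub_cancel_left, norm_smul]
          ring
      _ ≤ ‖t‖ * (K * (‖L‖ * (2 * ρ))) := by
          gcongr
          exact (L.le_opNorm c).trans (by gcongr)

theorem eventually_abs_mul_norm_le_half : ∀ᶠ t : ℝ in nhds 0, |t| * ‖L‖ ≤ 1 / 2 := by
  have h : Continuous fun t : ℝ => |t| * ‖L‖ := by fun_prop
  exact (h.tendsto' 0 0 (by simp)).eventually (eventually_le_nhds (by norm_num))

theorem eventually_det_one_add_smul_ne_zero :
    ∀ᶠ t : ℝ in nhds 0, (1 + t • L : E →L[ℝ] E).det ≠ 0 := by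
  have h : Continuous fun t : ℝ => (1 + t • L : E →L[ℝ] E).det :=
    ContinuousLinearMap.continuous_det.comp (by fun_prop)
  refine h.continuousAt.eventually_ne ?_
  simp [ContinuousLinearMap.det]

variable [FiniteDimensional ℝ E] [MeasurableSpace E] [BorelSpace E]
  (μ : Measure E) [μ.IsAddHaarMeasure]

theorem integral_comp_add_smul_apply_eq_zero {f : E → ℝ} (hf : Continuous f)
    (h0 : ∫ c, f c ∂μ = 0) {t : ℝ} (ht : (1 + t • L : E →L[ℝ] E).det ≠ 0) :
    ∫ c, f (c + t • L c) ∂μ = 0 := by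
  have h := integral_map (μ := μ) (φ := ((1 + t • L : E →L[ℝ] E) : E →ₗ[ℝ] E)) (f := f)
    (by fun_prop) hf.aestronglyMeasurable
  rw [Measure.map_linearMap_addHaar_eq_smul_addHaar μ ht, integral_smul_measure, h0,
    smul_zero] at h
  simpa using h.symm

/-- Having mean zero is preserved by linear changes of variables, so the integral of the derivative
along the field vanishes. -/
theorem integral_deriv_linear_field_eq_zero {f f' : E → ℝ} (hf : LocallyLipschitz f) {ρ : ℝ}
    (hρ : 0 ≤ ρ) (hsupp : ∀ c, ρ < ‖c‖ → f c = 0) (h0 : ∫ c, f c ∂μ = 0)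
    (hd : ∀ᵐ c ∂μ, HasDerivAt (fun t : ℝ => f (c + t • L c)) (f' c) 0) :
    ∫ c, f' c ∂μ = 0 := by
  have hproper : ProperSpace E := FiniteDimensional.proper_real E
  obtain ⟨K, hK⟩ := hf.locallyLipschitzOn.exists_lipschitzOnWith_of_compact
    (isCompact_closedBall (0 : E) (3 * ρ))
  have hcont : Continuous f := hf.continuous
  have hsmall := (eventually_abs_mul_norm_le_half L).filter_mono (nhdsWithin_le_nhds (s := {0}ᶜ))
  have hdet := (eventually_det_one_add_smul_ne_zero L).filter_mono
    (nhdsWithin_le_nhds (s := {0}ᶜ))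
  have hzero : ∀ᶠ t : ℝ in nhdsWithin 0 {0}ᶜ, ∫ c, t⁻¹ • (f (c + t • L c) - f c) ∂μ = 0 := by
    filter_upwards [hsmall, hdet] with t ht hdt
    have hint : Integrable f μ := hcont.integrable_of_hasCompactSupport
      (.intro (isCompact_closedBall (0 : E) ρ) fun c hc => hsupp c (by simpa using hc))
    have hint' : Integrable (fun c => f (c + t • L c)) μ :=
      Continuous.integrable_of_hasCompactSupport (by fun_prop)
        (.intro (isCompact_closedBall (0 : E) (2 * ρ)) fun c hc =>
          hsupp _ (lt_norm_add_smul_apply L ht (by simpa using hc)))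
    rw [integral_smul, integral_sub hint' hint, h0,
      integral_comp_add_smul_apply_eq_zero L μ hcont h0 hdt, sub_zero, smul_zero]
  have hlim : Filter.Tendsto (fun t : ℝ => ∫ c, t⁻¹ • (f (c + t • L c) - f c) ∂μ)
      (nhdsWithin 0 {0}ᶜ) (nhds (∫ c, f' c ∂μ)) := by
    refine tendsto_integral_filter_of_dominated_convergence
      ((Metric.closedBall (0 : E) (2 * ρ)).indicator fun _ => K * (‖L‖ * (2 * ρ)))
      (.of_forall fun t => Continuous.aestronglyMeasurable (by fun_prop)) ?_ ?_ ?_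
    · filter_upwards [hsmall, self_mem_nhdsWithin] with t ht ht0
      exact ae_of_all _ (norm_slope_le_indicator L hK hρ hsupp ht ht0)
    · exact (integrable_indicator_iff Metric.isClosed_closedBall.measurableSet).mpr
        (integrableOn_const (isCompact_closedBall _ _).measure_lt_top.ne)
    · filter_upwards [hd] with c hc
      simpa using hasDerivAt_iff_tendsto_slope_zero.mp hc
  exact tendsto_nhds_unique hlim (tendsto_const_nhds.congr' (hzero.mono fun t h => h.symm))

end LinearFlow

section SqNormSublevel

variable {κ : Type*} [Fintype κ]

theorem sqNorm_eq_norm_toLp_sq (c : κ → ℂ) :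
    sqNorm c = ‖(WithLp.toLp 2 c : EuclideanSpace ℂ κ)‖ ^ 2 := by
  rw [EuclideanSpace.norm_sq_eq, sqNorm]

theorem contDiff_sqNorm : ContDiff ℝ 1 (sqNorm : (κ → ℂ) → ℝ) := by
  unfold sqNorm
  exact ContDiff.sum fun i _ => ContDiff.norm_sq ℝ (contDiff_apply ℝ ℂ i)

theorem continuous_sqNorm : Continuous (sqNorm : (κ → ℂ) → ℝ) :=
  contDiff_sqNorm.continuous

theorem norm_le_of_sqNorm_le {c : κ → ℂ} {X : ℝ} (h : sqNorm c ≤ X) : ‖c‖ ≤ 1 + X := by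
  have hX : 0 ≤ X := (sqNorm_nonneg c).trans h
  rw [pi_norm_le_iff_of_nonneg (by linarith)]
  intro i
  have hi : ‖c i‖ ^ 2 ≤ sqNorm c :=
    Finset.single_le_sum (f := fun i => ‖c i‖ ^ 2) (fun _ _ => by positivity) (Finset.mem_univ i)
  nlinarith [norm_nonneg (c i)]

theorem isCompact_setOf_sqNorm_le (X : ℝ) : IsCompact {c : κ → ℂ | sqNorm c ≤ X} := by
  refine (isCompact_closedBall (0 : κ → ℂ) (1 + X)).of_isClosed_subset
    (isClosed_le continuous_sqNorm continuous_const) fun c hc => ?_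
  simpa using norm_le_of_sqNorm_le hc

theorem measurableSet_setOf_sqNorm_lt (X : ℝ) : MeasurableSet {c : κ → ℂ | sqNorm c < X} :=
  measurableSet_lt continuous_sqNorm.measurable measurable_const

theorem integrableOn_setOf_sqNorm_lt {f : (κ → ℂ) → ℝ} (hf : Continuous f) (X : ℝ) :
    IntegrableOn f {c | sqNorm c < X} :=
  (hf.continuousOn.integrableOn_compact (isCompact_setOf_sqNorm_le X)).mono_set
    fun c (hc : sqNorm c < X) => hc.le

/-- The volume of `κ → ℂ` transported to the Euclidean space on the same coordinates. -/
noncomputable def euclideanVolume (κ : Type*) [Fintype κ] : Measure (EuclideanSpace ℂ κ) :=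
  (volume : Measure (κ → ℂ)).map (PiLp.continuousLinearEquiv 2 ℝ fun _ : κ => ℂ).symm

instance : (euclideanVolume κ).IsAddHaarMeasure :=
  ContinuousLinearEquiv.isAddHaarMeasure_map _ _

theorem volume_setOf_sqNorm_eq [Nonempty κ] (X : ℝ) : volume {c : κ → ℂ | sqNorm c = X} = 0 := by
  have h := Measure.addHaar_sphere (euclideanVolume κ) 0 (Real.sqrt X)
  rw [euclideanVolume, Measure.map_apply (by fun_prop) Metric.isClosed_sphere.measurableSet] at h
  refine measure_mono_null (fun c hc => ?_) h
  rw [Set.mem_ofPred_eq] at hc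
  rw [Set.mem_preimage, mem_sphere_zero_iff_norm, ← hc, sqNorm_eq_norm_toLp_sq,
    Real.sqrt_sq (norm_nonneg _)]
  rfl

theorem sqNorm_I_smul (c : κ → ℂ) : sqNorm (Complex.I • c) = sqNorm c := by
  simp [sqNorm]

theorem measurePreserving_I_smul :
    MeasurePreserving (fun c : κ → ℂ => Complex.I • c) volume volume := by
  have h : MeasurePreserving
      (rotation ⟨Complex.I, by simp [Submonoid.unitSphere]⟩ : ℂ ≃ₗᵢ[ℝ] ℂ) volume volume :=
    LinearIsometryEquiv.measurePreserving _
  exact volume_preserving_pi (α' := fun _ : κ => ℂ) (β' := fun _ : κ => ℂ) fun _ => h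

end SqNormSublevel

section ConjCompressField

variable {ι κ : Type*} [Fintype ι] [Fintype κ] (V : Matrix ι κ ℂ)

theorem sqNorm_add_smul (c w : κ → ℂ) (t : ℝ) :
    sqNorm (c + t • w) = sqNorm c + 2 * t * (star c ⬝ᵥ w).re + t ^ 2 * sqNorm w := by
  simp only [sqNorm, dotProduct, Complex.re_sum, Finset.mul_sum, ← Finset.sum_add_distrib]
  refine Finset.sum_congr rfl fun i _ => ?_
  simp only [Complex.sq_norm, Complex.normSq_apply, Pi.add_apply, Pi.smul_apply, Pi.star_apply]
  simp
  ring

theorem selfDot_add_smul (c w : κ → ℂ) (t : ℝ) :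
    selfDot V (c + t • w) =
      selfDot V c + 2 * t * ((V *ᵥ c) ⬝ᵥ (V *ᵥ w)) + t ^ 2 * selfDot V w := by
  rw [← Complex.coe_smul]
  simp only [selfDot, mulVec_add, mulVec_smul, dotProduct_add, add_dotProduct, smul_dotProduct,
    dotProduct_smul, smul_eq_mul, dotProduct_comm (V *ᵥ w) (V *ᵥ c)]
  ring

theorem selfDot_I_smul (c : κ → ℂ) : selfDot V (Complex.I • c) = -selfDot V c := by
  rw [selfDot, mulVec_smul, smul_dotProduct, dotProduct_smul, smul_smul, Complex.I_mul_I, selfDot,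
    neg_one_smul]

theorem mulVec_dotProduct_mulVec_conjCompress (c : κ → ℂ) :
    (V *ᵥ c) ⬝ᵥ (V *ᵥ conjCompress V c) = (sqNorm (conjCompress V c) : ℂ) := by
  rw [← star_dotProduct_self_eq_sqNorm, dotProduct_mulVec]
  congr 1
  rw [conjCompress, star_mulVec, star_star, conjTranspose_conjTranspose]

theorem sqNorm_conjCompress_le [DecidableEq κ] {V : Matrix ι κ ℂ} (hV : Vᴴ * V = 1) (c : κ → ℂ) :
    sqNorm (conjCompress V c) ≤ sqNorm c := by
  have h := norm_dotProduct_le_sqNorm (V *ᵥ c) (V *ᵥ conjCompress V c)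
  rw [mulVec_dotProduct_mulVec_conjCompress, sqNorm_mulVec_of_isometry hV,
    sqNorm_mulVec_of_isometry hV, Complex.norm_real, Real.norm_of_nonneg (sqNorm_nonneg _)] at h
  linarith

theorem norm_selfDot_le [DecidableEq κ] {V : Matrix ι κ ℂ} (hV : Vᴴ * V = 1) (c : κ → ℂ) :
    ‖selfDot V c‖ ≤ sqNorm c :=
  (norm_dotProduct_self_le _).trans (sqNorm_mulVec_of_isometry hV c).le

theorem contDiff_selfDot : ContDiff ℝ 1 (selfDot V) := by
  unfold selfDot mulVec dotProduct
  fun_prop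

theorem continuous_selfDot : Continuous (selfDot V) :=
  (contDiff_selfDot V).continuous

theorem continuous_sqNorm_conjCompress : Continuous fun c => sqNorm (conjCompress V c) := by
  refine continuous_sqNorm.comp ?_
  unfold conjCompress
  fun_prop

/-- The antilinear vector field `c ↦ u • conjCompress V c`, as a real-linear map. -/
noncomputable def conjCompressField (u : ℂ) : (κ → ℂ) →L[ℝ] (κ → ℂ) :=
  LinearMap.toContinuousLinearMap
    { toFun := fun c => u • conjCompress V c
      map_add' := fun c d => by simp only [conjCompress, mulVec_add, star_add, smul_add]
      map_smul' := fun t c => by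
        simp only [← Complex.coe_smul, conjCompress, mulVec_smul, star_smul, Complex.star_def,
          Complex.conj_ofReal, RingHom.id_apply, smul_comm u] }

theorem conjCompressField_apply (u : ℂ) (c : κ → ℂ) :
    conjCompressField V u c = u • conjCompress V c := rfl

theorem hasDerivAt_sqNorm_conjCompressField (u : ℂ) (c : κ → ℂ) :
    HasDerivAt (fun t : ℝ => sqNorm (c + t • conjCompressField V u c))
      (2 * (star u * selfDot V c).re) 0 := by
  have hre : (star c ⬝ᵥ u • conjCompress V c).re = (star u * selfDot V c).re := by
    rw [dotProduct_smul, star_dotProduct_conjCompress, smul_eq_mul]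
    simp
  simp only [sqNorm_add_smul, conjCompressField_apply, hre]
  have h := ((((hasDerivAt_id (0 : ℝ)).const_mul 2).mul_const
    (star u * selfDot V c).re).const_add (sqNorm c)).add
      (((hasDerivAt_id (0 : ℝ)).pow 2).mul_const (sqNorm (u • conjCompress V c)))
  exact h.congr_deriv (by simp)

theorem hasDerivAt_selfDot_conjCompressField (u : ℂ) (c : κ → ℂ) :
    HasDerivAt (fun t : ℝ => selfDot V (c + t • conjCompressField V u c))
      (2 * u * sqNorm (conjCompress V c)) 0 := by
  simp only [selfDot_add_smul, conjCompressField_apply, mulVec_smul, dotProduct_smul,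
    mulVec_dotProduct_mulVec_conjCompress]
  have hcast : HasDerivAt (fun t : ℝ => (t : ℂ)) 1 0 := Complex.ofRealCLM.hasDerivAt
  have h := (((hcast.const_mul 2).mul_const (u • (sqNorm (conjCompress V c) : ℂ))).const_add
    (selfDot V c)).add ((hcast.pow 2).mul_const (selfDot V (u • conjCompress V c)))
  exact h.congr_deriv (by simp [mul_assoc])

theorem hasDerivAt_re_selfDot_conjCompressField {u : ℂ} (hu : star u * u = 1) (c : κ → ℂ) :
    HasDerivAt (fun t : ℝ => (star u * selfDot V (c + t • conjCompressField V u c)).re)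
      (2 * sqNorm (conjCompress V c)) 0 := by
  refine (Complex.reCLM.hasFDerivAt.comp_hasDerivAt (0 : ℝ)
    ((hasDerivAt_selfDot_conjCompressField V u c).const_mul (star u))).congr_deriv ?_
  rw [mul_assoc 2 u, mul_left_comm (star u), ← mul_assoc (star u), hu]
  simp

theorem hasDerivAt_norm_sq_selfDot_conjCompressField (u : ℂ) (c : κ → ℂ) :
    HasDerivAt (fun t : ℝ => ‖selfDot V (c + t • conjCompressField V u c)‖ ^ 2)
      (4 * sqNorm (conjCompress V c) * (star u * selfDot V c).re) 0 := by
  refine (hasDerivAt_selfDot_conjCompressField V u c).norm_sq.congr_deriv ?_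
  simp only [zero_smul, add_zero, Complex.inner]
  simp
  ring

end ConjCompressField

section CutoffProfile

variable {ι κ : Type*} [Fintype ι] [Fintype κ]

/-- The base `1 + 2 Y + |c|⁴ - θ |D|²` of the powers in the test functions, where `D` is
`selfDot V c`; for `θ = 1` and `Y = |c|²` it is the determinant of the tilt matrix of `V c`. -/
noncomputable def cutoffBase (V : Matrix ι κ ℂ) (θ Y : ℝ) (c : κ → ℂ) : ℝ :=
  1 + 2 * Y + sqNorm c ^ 2 - θ * ‖selfDot V c‖ ^ 2

/-- The profile of the test functions, which is positive exactly where `sqNorm c < X`. -/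
noncomputable def cutoffProfile (V : Matrix ι κ ℂ) (μ θ X : ℝ) (c : κ → ℂ) : ℝ :=
  cutoffBase V θ (sqNorm c) c ^ (-μ) - cutoffBase V θ X c ^ (-μ)

/-- The derivative of `cutoffProfile` along `conjCompressField V u`, divided by
`4 Re (ū D)` where `D` is `selfDot V c`. -/
noncomputable def cutoffSlope (V : Matrix ι κ ℂ) (μ θ X : ℝ) (c : κ → ℂ) : ℝ :=
  -μ * cutoffBase V θ (sqNorm c) c ^ (-μ - 1) *
      (1 + sqNorm c - θ * sqNorm (conjCompress V c)) +
    μ * cutoffBase V θ X c ^ (-μ - 1) * (sqNorm c - θ * sqNorm (conjCompress V c))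

variable [DecidableEq κ] {V : Matrix ι κ ℂ} {μ θ X Y : ℝ}

theorem one_le_cutoffBase (hV : Vᴴ * V = 1) (hθ : θ ≤ 1) (hY : 0 ≤ Y) (c : κ → ℂ) :
    1 ≤ cutoffBase V θ Y c := by
  have hnorm : ‖selfDot V c‖ ^ 2 ≤ sqNorm c ^ 2 := by gcongr; exact norm_selfDot_le hV c
  have hscale : θ * ‖selfDot V c‖ ^ 2 ≤ 1 * ‖selfDot V c‖ ^ 2 := by gcongr
  unfold cutoffBase
  linarith

theorem cutoffBase_ne_zero (hV : Vᴴ * V = 1) (hθ : θ ≤ 1) (hY : 0 ≤ Y) (c : κ → ℂ) :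
    cutoffBase V θ Y c ≠ 0 :=
  (zero_lt_one.trans_le (one_le_cutoffBase hV hθ hY c)).ne'

theorem hasDerivAt_cutoffProfile_conjCompressField (hV : Vᴴ * V = 1) (u : ℂ) (hθ : θ ≤ 1)
    (hX : 0 ≤ X) (c : κ → ℂ) :
    HasDerivAt (fun t : ℝ => cutoffProfile V μ θ X (c + t • conjCompressField V u c))
      (4 * (star u * selfDot V c).re * cutoffSlope V μ θ X c) 0 := by
  have hR := hasDerivAt_sqNorm_conjCompressField V u c
  have hQ := hasDerivAt_norm_sq_selfDot_conjCompressField V u c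
  have hbase := (((hR.const_mul 2).const_add 1).add (hR.pow 2)).sub (hQ.const_mul θ)
  have hbaseX := ((hR.pow 2).const_add (1 + 2 * X)).sub (hQ.const_mul θ)
  have h := (hbase.rpow_const (p := -μ) (Or.inl (by
      simpa [cutoffBase] using cutoffBase_ne_zero hV hθ (sqNorm_nonneg c) c))).sub
    (hbaseX.rpow_const (p := -μ) (Or.inl (by
      simpa [cutoffBase] using cutoffBase_ne_zero hV hθ hX c)))
  refine h.congr_deriv ?_
  simp [cutoffSlope, cutoffBase]
  ring

theorem contDiff_cutoffProfile (hV : Vᴴ * V = 1) (hθ : θ ≤ 1) (hX : 0 ≤ X) :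
    ContDiff ℝ 1 (cutoffProfile V μ θ X) := by
  have hR := contDiff_sqNorm (κ := κ)
  have hQ := ContDiff.norm_sq ℝ (contDiff_selfDot V)
  refine ContDiff.sub
    (ContDiff.rpow_const_of_ne ?_ fun c => cutoffBase_ne_zero hV hθ (sqNorm_nonneg c) c)
    (ContDiff.rpow_const_of_ne ?_ fun c => cutoffBase_ne_zero hV hθ hX c)
  all_goals unfold cutoffBase; fun_prop

theorem cutoffProfile_pos_iff (hV : Vᴴ * V = 1) (hμ : 0 < μ) (hθ : θ ≤ 1) (hX : 0 ≤ X)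
    (c : κ → ℂ) : 0 < cutoffProfile V μ θ X c ↔ sqNorm c < X := by
  have hbase := one_le_cutoffBase hV hθ (sqNorm_nonneg c) c
  have hbaseX := one_le_cutoffBase hV hθ hX c
  rw [cutoffProfile, sub_pos,
    Real.rpow_lt_rpow_iff_of_neg (by linarith) (by linarith) (by linarith)]
  unfold cutoffBase
  constructor <;> intro h <;> linarith

theorem continuousOn_cutoffBase_rpow (hV : Vᴴ * V = 1) {Y : (κ → ℂ) → ℝ} (hY : Continuous Y)
    (hY0 : ∀ c, 0 ≤ Y c) (p : ℝ) :
    ContinuousOn (fun x : ℝ × (κ → ℂ) => cutoffBase V x.1 (Y x.2) x.2 ^ p)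
      (Set.Iic 1 ×ˢ Set.univ) := by
  have hR := continuous_sqNorm (κ := κ)
  have hD := continuous_selfDot V
  refine ContinuousOn.rpow_const ?_ fun x hx => Or.inl (cutoffBase_ne_zero hV hx.1 (hY0 _) _)
  unfold cutoffBase
  fun_prop

theorem continuous_cutoffBase_rpow (hV : Vᴴ * V = 1) (hθ : θ ≤ 1) {Y : (κ → ℂ) → ℝ}
    (hY : Continuous Y) (hY0 : ∀ c, 0 ≤ Y c) (p : ℝ) :
    Continuous fun c => cutoffBase V θ (Y c) c ^ p :=
  (continuousOn_cutoffBase_rpow hV hY hY0 p).comp_continuous (by fun_prop : Continuous (θ, ·))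
    fun _ => ⟨hθ, trivial⟩

end CutoffProfile

section DivergenceIdentity

variable {ι κ : Type*} [Fintype ι] [Fintype κ]

/-- The test function transported along `conjCompressField V u`, for a direction `u` with
`|u| = 1`. -/
noncomputable def cutoffTest (V : Matrix ι κ ℂ) (u : ℂ) (μ θ X : ℝ) (c : κ → ℂ) : ℝ :=
  max (cutoffProfile V μ θ X c) 0 * (star u * selfDot V c).re

/-- The derivative of `cutoffTest V u μ θ X` along `conjCompressField V u` where `sqNorm c < X`,
averaged over the directions `u = 1` and `u = i` and divided by `2`. -/
noncomputable def averagedDivergence (V : Matrix ι κ ℂ) (μ X θ : ℝ) (c : κ → ℂ) : ℝ :=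
  sqNorm (conjCompress V c) * cutoffProfile V μ θ X c +
    ‖selfDot V c‖ ^ 2 * cutoffSlope V μ θ X c

theorem cutoffTest_I_smul (V : Matrix ι κ ℂ) (u : ℂ) (μ θ X : ℝ) (c : κ → ℂ) :
    cutoffTest V u μ θ X (Complex.I • c) = -cutoffTest V u μ θ X c := by
  simp only [cutoffTest, cutoffProfile, cutoffBase, sqNorm_I_smul, selfDot_I_smul, norm_neg,
    mul_neg, Complex.neg_re]

theorem integral_cutoffTest_eq_zero (V : Matrix ι κ ℂ) (u : ℂ) (μ θ X : ℝ) :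
    ∫ c, cutoffTest V u μ θ X c = 0 := by
  have h := measurePreserving_I_smul.integral_comp
    (MeasurableEquiv.smul₀ Complex.I Complex.I_ne_zero).measurableEmbedding
    (cutoffTest V u μ θ X)
  simp only [cutoffTest_I_smul, integral_neg] at h
  linarith

variable [DecidableEq κ] {V : Matrix ι κ ℂ} {u : ℂ} {μ θ X : ℝ}

theorem cutoffTest_eq_zero (hV : Vᴴ * V = 1) (hμ : 0 < μ) (hθ : θ ≤ 1) (hX : 0 ≤ X) {c : κ → ℂ}
    (hc : X ≤ sqNorm c) : cutoffTest V u μ θ X c = 0 := by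
  have hprofile := mt (cutoffProfile_pos_iff hV hμ hθ hX c).1 hc.not_gt
  rw [cutoffTest, max_eq_right (not_lt.1 hprofile), zero_mul]

theorem locallyLipschitz_cutoffTest (hV : Vᴴ * V = 1) (hθ : θ ≤ 1) (hX : 0 ≤ X) :
    LocallyLipschitz (cutoffTest V u μ θ X) := by
  have hre : ContDiff ℝ 1 fun c => (star u * selfDot V c).re :=
    Complex.reCLM.contDiff.comp (contDiff_const.mul (contDiff_selfDot V))
  have hmul : LocallyLipschitz fun p : ℝ × ℝ => p.1 * p.2 :=
    (contDiff_fst.mul contDiff_snd : ContDiff ℝ 1 fun p : ℝ × ℝ => p.1 * p.2).locallyLipschitz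
  exact hmul.comp (((contDiff_cutoffProfile hV hθ hX).locallyLipschitz.max_const 0).prodMk
    hre.locallyLipschitz)

theorem hasDerivAt_cutoffTest_conjCompressField (hV : Vᴴ * V = 1) (hu : star u * u = 1)
    (hμ : 0 < μ) (hθ : θ ≤ 1) (hX : 0 ≤ X) {c : κ → ℂ} (hc : sqNorm c ≠ X) :
    HasDerivAt (fun t : ℝ => cutoffTest V u μ θ X (c + t • conjCompressField V u c))
      ({c | sqNorm c < X}.indicator (fun c =>
        4 * (star u * selfDot V c).re ^ 2 * cutoffSlope V μ θ X c +
          2 * sqNorm (conjCompress V c) * cutoffProfile V μ θ X c) c) 0 := by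
  have hcont : Continuous fun t : ℝ => sqNorm (c + t • conjCompressField V u c) :=
    continuous_sqNorm.comp (by fun_prop)
  have hstart : sqNorm (c + (0 : ℝ) • conjCompressField V u c) = sqNorm c := by
    rw [zero_smul, add_zero]
  rcases hc.lt_or_gt with hlt | hgt
  · rw [Set.indicator_of_mem (by exact hlt)]
    have hd := (hasDerivAt_cutoffProfile_conjCompressField hV u hθ hX c (μ := μ)).mul
      (hasDerivAt_re_selfDot_conjCompressField V hu c)
    simp only [zero_smul, add_zero] at hd
    refine (hd.congr_of_eventuallyEq ?_).congr_deriv (by ring)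
    filter_upwards [hcont.continuousAt.eventually_lt continuousAt_const (by rwa [hstart])]
      with t ht
    rw [cutoffTest, max_eq_left ((cutoffProfile_pos_iff hV hμ hθ hX _).mpr ht).le]
    rfl
  · rw [Set.indicator_of_notMem (by simpa using hgt.le)]
    refine (hasDerivAt_const (0 : ℝ) (0 : ℝ)).congr_of_eventuallyEq ?_
    filter_upwards [continuousAt_const.eventually_lt hcont.continuousAt (by rwa [hstart])]
      with t ht
    exact cutoffTest_eq_zero hV hμ hθ hX ht.le

theorem integral_deriv_cutoffTest_eq_zero [Nonempty κ] (hV : Vᴴ * V = 1) (hu : star u * u = 1)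
    (hμ : 0 < μ) (hθ : θ ≤ 1) (hX : 0 ≤ X) :
    ∫ c in {c | sqNorm c < X}, (4 * (star u * selfDot V c).re ^ 2 * cutoffSlope V μ θ X c +
      2 * sqNorm (conjCompress V c) * cutoffProfile V μ θ X c) = 0 := by
  rw [← integral_indicator (measurableSet_setOf_sqNorm_lt X)]
  refine integral_deriv_linear_field_eq_zero (conjCompressField V u) volume
    (locallyLipschitz_cutoffTest hV hθ hX) (by linarith : 0 ≤ 1 + X) (fun c hc => ?_)
    (integral_cutoffTest_eq_zero V u μ θ X) ?_
  · refine cutoffTest_eq_zero hV hμ hθ hX ?_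
    contrapose! hc
    exact norm_le_of_sqNorm_le hc.le
  · have hnull : ∀ᵐ c : κ → ℂ, sqNorm c ≠ X := by
      rw [ae_iff]
      simpa using volume_setOf_sqNorm_eq (κ := κ) X
    filter_upwards [hnull] with c hc
    exact hasDerivAt_cutoffTest_conjCompressField hV hu hμ hθ hX hc

theorem continuousOn_averagedDivergence (hV : Vᴴ * V = 1) (hX : 0 ≤ X) :
    ContinuousOn (fun x : ℝ × (κ → ℂ) => averagedDivergence V μ X x.1 x.2)
      (Set.Iic 1 ×ˢ Set.univ) := by
  have hR : ContinuousOn (fun x : ℝ × (κ → ℂ) => sqNorm x.2) (Set.Iic 1 ×ˢ Set.univ) :=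
    (continuous_sqNorm.comp continuous_snd).continuousOn
  have hD : ContinuousOn (fun x : ℝ × (κ → ℂ) => selfDot V x.2) (Set.Iic 1 ×ˢ Set.univ) :=
    ((continuous_selfDot V).comp continuous_snd).continuousOn
  have hK : ContinuousOn (fun x : ℝ × (κ → ℂ) => sqNorm (conjCompress V x.2))
      (Set.Iic 1 ×ˢ Set.univ) :=
    ((continuous_sqNorm_conjCompress V).comp continuous_snd).continuousOn
  have hbase := continuousOn_cutoffBase_rpow hV continuous_sqNorm sqNorm_nonneg
  have hbaseX := continuousOn_cutoffBase_rpow hV (continuous_const (y := X)) fun _ => hX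
  have := hbase (-μ)
  have := hbase (-μ - 1)
  have := hbaseX (-μ)
  have := hbaseX (-μ - 1)
  unfold averagedDivergence cutoffProfile cutoffSlope
  fun_prop

theorem continuous_cutoffSlope (hV : Vᴴ * V = 1) (hθ : θ ≤ 1) (hX : 0 ≤ X) :
    Continuous (cutoffSlope V μ θ X) := by
  have hR := continuous_sqNorm (κ := κ)
  have hK := continuous_sqNorm_conjCompress V
  have hbase := continuous_cutoffBase_rpow hV hθ continuous_sqNorm sqNorm_nonneg (-μ - 1)
  have hbaseX :=
    continuous_cutoffBase_rpow hV hθ (continuous_const (y := X)) (fun _ => hX) (-μ - 1)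
  unfold cutoffSlope
  fun_prop

theorem integral_averagedDivergence_eq_zero [Nonempty κ] (hV : Vᴴ * V = 1) (hμ : 0 < μ)
    (hθ : θ ≤ 1) (hX : 0 ≤ X) :
    ∫ c in {c | sqNorm c < X}, averagedDivergence V μ X θ c = 0 := by
  have hD := continuous_selfDot V
  have hK := continuous_sqNorm_conjCompress V
  have hprofile := (contDiff_cutoffProfile hV (μ := μ) hθ hX).continuous
  have hslope := continuous_cutoffSlope hV (μ := μ) hθ hX
  have hint : ∀ u : ℂ, IntegrableOn (fun c =>
      4 * (star u * selfDot V c).re ^ 2 * cutoffSlope V μ θ X c +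
        2 * sqNorm (conjCompress V c) * cutoffProfile V μ θ X c) {c | sqNorm c < X} := fun u =>
    integrableOn_setOf_sqNorm_lt (by fun_prop) X
  have hsum := integral_add (hint 1) (hint Complex.I)
  rw [integral_deriv_cutoffTest_eq_zero hV (by simp) hμ hθ hX,
    integral_deriv_cutoffTest_eq_zero hV (by simp) hμ hθ hX, add_zero] at hsum
  have hfour : ∫ c in {c | sqNorm c < X}, 4 * averagedDivergence V μ X θ c = 0 := by
    rw [← hsum]
    congr 1 with c
    rw [averagedDivergence, Complex.sq_norm, Complex.normSq_apply]
    simp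
    ring
  rw [integral_const_mul] at hfour
  linarith

theorem hasDerivAt_cutoffBase_rpow (hV : Vᴴ * V = 1) {Y : ℝ} (hθ : θ ≤ 1) (hY : 0 ≤ Y)
    (c : κ → ℂ) :
    HasDerivAt (fun θ => cutoffBase V θ Y c ^ (-μ))
      (μ * ‖selfDot V c‖ ^ 2 * cutoffBase V θ Y c ^ (-μ - 1)) θ := by
  have hbase : HasDerivAt (fun θ => cutoffBase V θ Y c) (-‖selfDot V c‖ ^ 2) θ := by
    simpa [cutoffBase] using
      ((hasDerivAt_id θ).mul_const (‖selfDot V c‖ ^ 2)).const_sub (1 + 2 * Y + sqNorm c ^ 2)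
  exact (hbase.rpow_const (Or.inl (cutoffBase_ne_zero hV hθ hY c))).congr_deriv (by ring)

theorem integral_averagedDivergence_interpolation (hV : Vᴴ * V = 1) (hX : 0 ≤ X) (c : κ → ℂ) :
    ∫ θ in (0 : ℝ)..1, averagedDivergence V μ X θ c =
      (sqNorm (conjCompress V c) *
          (cutoffBase V 1 (sqNorm c) c ^ (-μ) - cutoffBase V 1 X c ^ (-μ)) -
        (1 + sqNorm c) * cutoffBase V 1 (sqNorm c) c ^ (-μ) +
        sqNorm c * cutoffBase V 1 X c ^ (-μ)) -
      (-(1 + sqNorm c) * cutoffBase V 0 (sqNorm c) c ^ (-μ) +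
        sqNorm c * cutoffBase V 0 X c ^ (-μ)) := by
  rw [intervalIntegral.integral_eq_sub_of_hasDerivAt (f := fun θ =>
    θ * sqNorm (conjCompress V c) *
        (cutoffBase V θ (sqNorm c) c ^ (-μ) - cutoffBase V θ X c ^ (-μ)) -
      (1 + sqNorm c) * cutoffBase V θ (sqNorm c) c ^ (-μ) +
      sqNorm c * cutoffBase V θ X c ^ (-μ))]
  · ring
  · intro θ hθ
    rw [Set.uIcc_of_le zero_le_one] at hθ
    have hbase := hasDerivAt_cutoffBase_rpow hV (μ := μ) hθ.2 (sqNorm_nonneg c) c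
    have hbaseX := hasDerivAt_cutoffBase_rpow hV (μ := μ) hθ.2 hX c
    refine (((((hasDerivAt_id θ).mul_const (sqNorm (conjCompress V c))).mul
      (hbase.sub hbaseX)).sub (hbase.const_mul (1 + sqNorm c))).add
      (hbaseX.const_mul (sqNorm c))).congr_deriv ?_
    simp [averagedDivergence, cutoffProfile, cutoffSlope]
    ring
  · refine ContinuousOn.intervalIntegrable ?_
    rw [Set.uIcc_of_le zero_le_one]
    exact (continuousOn_averagedDivergence hV hX).comp (f := fun θ : ℝ => (θ, c))
      (by fun_prop) fun θ hθ => ⟨hθ.2, trivial⟩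

theorem integral_integral_averagedDivergence_eq_zero [Nonempty κ] (hV : Vᴴ * V = 1) (hμ : 0 < μ)
    (hX : 0 ≤ X) :
    ∫ c in {c | sqNorm c < X}, ∫ θ in (0 : ℝ)..1, averagedDivergence V μ X θ c = 0 := by
  have hint : Integrable (Function.uncurry (averagedDivergence V μ X))
      ((volume.restrict (Set.Ioc (0 : ℝ) 1)).prod
        (volume.restrict {c : κ → ℂ | sqNorm c < X})) := by
    rw [Measure.prod_restrict]
    refine IntegrableOn.mono_set (t := Set.Icc 0 1 ×ˢ {c | sqNorm c ≤ X}) ?_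
      (Set.prod_mono Set.Ioc_subset_Icc_self fun c (hc : sqNorm c < X) => hc.le)
    exact ContinuousOn.integrableOn_compact (isCompact_Icc.prod (isCompact_setOf_sqNorm_le X))
      ((continuousOn_averagedDivergence hV hX).mono
        (Set.prod_mono Set.Icc_subset_Iic_self (Set.subset_univ _)))
  simp only [intervalIntegral.integral_of_le zero_le_one]
  rw [← integral_integral_swap hint, setIntegral_congr_fun (g := fun _ => 0) measurableSet_Ioc
    fun θ hθ => integral_averagedDivergence_eq_zero hV hμ hθ.2 hX]
  exact integral_zero _ _

end DivergenceIdentity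

section RadialComparison

variable {ι κ : Type*} [Fintype ι] [Fintype κ] {V : Matrix ι κ ℂ} {X : ℝ}

theorem wishartDensity_eq_cutoffBase_rpow (N : ℕ) (c : κ → ℂ) :
    wishartDensity N V c = cutoffBase V 1 (sqNorm c) c ^ (-((N : ℝ) / 2 + 1)) *
      (1 + sqNorm c - sqNorm (conjCompress V c)) := by
  rw [wishartDensity, cutoffBase]
  congr 2
  ring

theorem one_add_sqNorm_rpow_eq_cutoffBase_rpow (N : ℕ) (c : κ → ℂ) :
    (1 + sqNorm c) ^ (-(N : ℝ) - 1) =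
      (1 + sqNorm c) * cutoffBase V 0 (sqNorm c) c ^ (-((N : ℝ) / 2 + 1)) := by
  have hpos : 0 < 1 + sqNorm c := by linarith [sqNorm_nonneg c]
  have hsq : cutoffBase V 0 (sqNorm c) c = (1 + sqNorm c) ^ (2 : ℝ) := by
    rw [cutoffBase, Real.rpow_two]
    ring
  rw [hsq, ← Real.rpow_mul hpos.le, mul_comm (1 + sqNorm c), ← Real.rpow_add_one hpos.ne']
  ring_nf

variable [DecidableEq κ]

theorem continuous_wishartDensity (hV : Vᴴ * V = 1) (N : ℕ) : Continuous (wishartDensity N V) := by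
  have hR := continuous_sqNorm (κ := κ)
  have hK := continuous_sqNorm_conjCompress V
  have hbase := continuous_cutoffBase_rpow hV le_rfl continuous_sqNorm sqNorm_nonneg
    (-((N : ℝ) / 2 + 1))
  simp only [funext (wishartDensity_eq_cutoffBase_rpow (V := V) N)]
  fun_prop

theorem radial_le_wishartDensity_add (hV : Vᴴ * V = 1) (N : ℕ) (hX : 0 ≤ X) (c : κ → ℂ) :
    (1 + sqNorm c) ^ (-(N : ℝ) - 1) -
        sqNorm c * (1 + 2 * X + sqNorm c ^ 2) ^ (-((N : ℝ) / 2 + 1)) ≤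
      wishartDensity N V c +
        ∫ θ in (0 : ℝ)..1, averagedDivergence V ((N : ℝ) / 2 + 1) X θ c := by
  have hbaseX : 0 ≤ cutoffBase V 1 X c ^ (-((N : ℝ) / 2 + 1)) :=
    Real.rpow_nonneg (zero_le_one.trans (one_le_cutoffBase hV le_rfl hX c)) _
  have hzero : 1 + 2 * X + sqNorm c ^ 2 = cutoffBase V 0 X c := by
    rw [cutoffBase]
    ring
  rw [integral_averagedDivergence_interpolation hV hX, wishartDensity_eq_cutoffBase_rpow,
    one_add_sqNorm_rpow_eq_cutoffBase_rpow (V := V), hzero]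
  linarith [mul_nonneg hbaseX (sub_nonneg.mpr (sqNorm_conjCompress_le hV c))]

theorem integral_radial_le_integral_wishartDensity [Nonempty κ] (hV : Vᴴ * V = 1) (N : ℕ)
    (hX : 0 ≤ X) :
    ∫ c in {c : κ → ℂ | sqNorm c < X}, ((1 + sqNorm c) ^ (-(N : ℝ) - 1) -
        sqNorm c * (1 + 2 * X + sqNorm c ^ 2) ^ (-((N : ℝ) / 2 + 1))) ≤
      ∫ c in {c | sqNorm c < X}, wishartDensity N V c := by
  set μ : ℝ := (N : ℝ) / 2 + 1
  have hR := continuous_sqNorm (κ := κ)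
  have hK := continuous_sqNorm_conjCompress V
  have hbase := fun θ (hθ : θ ≤ 1) =>
    continuous_cutoffBase_rpow hV hθ continuous_sqNorm sqNorm_nonneg (-μ)
  have hbaseX := fun θ (hθ : θ ≤ 1) =>
    continuous_cutoffBase_rpow hV hθ (continuous_const (y := X)) (fun _ => hX) (-μ)
  have := hbase 1 le_rfl
  have := hbase 0 zero_le_one
  have := hbaseX 1 le_rfl
  have := hbaseX 0 zero_le_one
  have hradial : Continuous fun c : κ → ℂ => (1 + sqNorm c) ^ (-(N : ℝ) - 1) -
      sqNorm c * (1 + 2 * X + sqNorm c ^ 2) ^ (-μ) := by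
    refine .sub (.rpow_const (by fun_prop) fun c => Or.inl ?_)
      (hR.mul (.rpow_const (by fun_prop) fun c => Or.inl ?_))
    all_goals nlinarith [sqNorm_nonneg c]
  have hdiv : Continuous fun c => ∫ θ in (0 : ℝ)..1, averagedDivergence V μ X θ c := by
    simp only [integral_averagedDivergence_interpolation hV hX]
    fun_prop
  have hdens := continuous_wishartDensity hV N
  rw [← add_zero (∫ c in {c | sqNorm c < X}, wishartDensity N V c),
    ← integral_integral_averagedDivergence_eq_zero hV (by positivity : 0 < μ) hX,
    ← integral_add (integrableOn_setOf_sqNorm_lt hdens X) (integrableOn_setOf_sqNorm_lt hdiv X)]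
  exact setIntegral_mono (integrableOn_setOf_sqNorm_lt hradial X)
    (integrableOn_setOf_sqNorm_lt (hdens.add hdiv) X)
    fun c => radial_le_wishartDensity_add hV N hX c

end RadialComparison

section BetaIntegrals

variable {a b r s : ℝ}

theorem integrableOn_rpow_mul_exp_neg_mul_Ioi (ha : 0 < a) (hr : 0 < r) :
    IntegrableOn (fun t : ℝ => t ^ (a - 1) * Real.exp (-(r * t))) (Set.Ioi 0) :=
  .of_integral_ne_zero <| by
    rw [Real.integral_rpow_mul_exp_neg_mul_Ioi ha hr]
    have := Real.Gamma_pos_of_pos ha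
    positivity

/-- The kernel whose two iterated integrals over `(0, ∞)²` are `Γ(a) Γ(b)` and `Γ(a + b)` times the
half-line Beta integral. -/
noncomputable def betaKernel (a b t x : ℝ) : ℝ :=
  x ^ (a - 1) * Real.exp (-(t * x)) * (t ^ (a + b - 1) * Real.exp (-t))

theorem betaKernel_nonneg {t x : ℝ} (ht : 0 < t) (hx : 0 < x) : 0 ≤ betaKernel a b t x := by
  unfold betaKernel
  positivity

theorem integral_betaKernel_right {t : ℝ} (ha : 0 < a) (ht : 0 < t) :
    ∫ x in Set.Ioi (0 : ℝ), betaKernel a b t x =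
      Real.Gamma a * (t ^ (b - 1) * Real.exp (-(1 * t))) := by
  simp only [betaKernel]
  rw [integral_mul_const, Real.integral_rpow_mul_exp_neg_mul_Ioi ha ht, one_div,
    Real.inv_rpow ht.le, ← Real.rpow_neg ht.le, one_mul, show b - 1 = -a + (a + b - 1) by ring,
    Real.rpow_add ht]
  ring

theorem integral_betaKernel_left {x : ℝ} (hab : 0 < a + b) (hx : 0 < x) :
    ∫ t in Set.Ioi (0 : ℝ), betaKernel a b t x =
      x ^ (a - 1) * (1 + x) ^ (-(a + b)) * Real.Gamma (a + b) := by
  have hx' : 0 < 1 + x := by linarith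
  have hkernel : ∀ t, betaKernel a b t x =
      x ^ (a - 1) * (t ^ (a + b - 1) * Real.exp (-((1 + x) * t))) := fun t => by
    rw [betaKernel, show -((1 + x) * t) = -(t * x) + -t by ring, Real.exp_add]
    ring
  simp_rw [hkernel]
  rw [integral_const_mul, Real.integral_rpow_mul_exp_neg_mul_Ioi hab hx', one_div,
    Real.inv_rpow hx'.le, ← Real.rpow_neg hx'.le]
  ring

theorem integrable_betaKernel (ha : 0 < a) (hb : 0 < b) :
    Integrable (Function.uncurry (betaKernel a b))
      ((volume.restrict (Set.Ioi (0 : ℝ))).prod (volume.restrict (Set.Ioi (0 : ℝ)))) := by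
  have hmeas : Measurable (Function.uncurry (betaKernel a b)) := by
    simp only [Function.uncurry_def, betaKernel]
    fun_prop
  refine (integrable_prod_iff hmeas.aestronglyMeasurable).mpr ⟨?_, ?_⟩
  · refine (ae_restrict_mem measurableSet_Ioi).mono fun t ht => ?_
    exact (integrableOn_rpow_mul_exp_neg_mul_Ioi ha ht).mul_const
      (t ^ (a + b - 1) * Real.exp (-t))
  · refine ((integrableOn_rpow_mul_exp_neg_mul_Ioi hb one_pos).const_mul (Real.Gamma a)).congr ?_
    refine (ae_restrict_mem measurableSet_Ioi).mono fun t ht => ?_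
    refine (integral_betaKernel_right ha ht).symm.trans ?_
    exact setIntegral_congr_fun measurableSet_Ioi
      fun x hx => (Real.norm_of_nonneg (betaKernel_nonneg ht hx)).symm

theorem integrableOn_and_integral_beta_Ioi (ha : 0 < a) (hb : 0 < b) :
    IntegrableOn (fun x : ℝ => x ^ (a - 1) * (1 + x) ^ (-(a + b))) (Set.Ioi 0) ∧
    ∫ x in Set.Ioi (0 : ℝ), x ^ (a - 1) * (1 + x) ^ (-(a + b)) =
      Real.Gamma a * Real.Gamma b / Real.Gamma (a + b) := by
  have hab : 0 < a + b := by positivity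
  have hΓ := (Real.Gamma_pos_of_pos hab).ne'
  have hint := integrable_betaKernel ha hb
  constructor
  · refine (hint.integral_prod_right.mul_const (Real.Gamma (a + b))⁻¹).congr ?_
    refine (ae_restrict_mem measurableSet_Ioi).mono fun x hx => ?_
    simp only [Function.uncurry]
    rw [integral_betaKernel_left hab hx, mul_assoc, mul_inv_cancel₀ hΓ, mul_one]
  · have hswap := integral_integral_swap hint
    rw [setIntegral_congr_fun measurableSet_Ioi fun t ht => integral_betaKernel_right ha ht,
      setIntegral_congr_fun measurableSet_Ioi fun x hx => integral_betaKernel_left hab hx,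
      integral_const_mul, integral_mul_const,
      Real.integral_rpow_mul_exp_neg_mul_Ioi hb one_pos] at hswap
    rw [eq_div_iff hΓ, ← hswap, div_one, Real.one_rpow, one_mul]

theorem integrableOn_and_integral_beta_sq (ha : 0 < a) (hb : 0 < b) (hs : 0 < s) :
    IntegrableOn (fun x : ℝ => x ^ (2 * a - 1) * (s + x ^ 2) ^ (-(a + b))) (Set.Ioi 0) ∧
    ∫ x in Set.Ioi (0 : ℝ), x ^ (2 * a - 1) * (s + x ^ 2) ^ (-(a + b)) =
      s ^ (-b) * (Real.Gamma a * Real.Gamma b / Real.Gamma (a + b)) / 2 := by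
  obtain ⟨hint, hval⟩ := integrableOn_and_integral_beta_Ioi ha hb
  set g : ℝ → ℝ := fun x => x ^ (a - 1) * (1 + x) ^ (-(a + b)) with hg
  have hs' : 0 < s⁻¹ := inv_pos.mpr hs
  have hsubst : ∀ x ∈ Set.Ioi (0 : ℝ), x ^ (2 * a - 1) * (s + x ^ 2) ^ (-(a + b)) =
      s ^ (-b - 1) / 2 * ((|(2 : ℝ)| * x ^ ((2 : ℝ) - 1)) • g (s⁻¹ * x ^ (2 : ℝ))) := by
    intro x (hx : 0 < x)
    have hfactor : s + x ^ 2 = s * (1 + s⁻¹ * x ^ (2 : ℝ)) := by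
      rw [Real.rpow_two]
      field_simp
    have hxpow : x ^ (2 * a - 1) = x ^ ((2 : ℝ) - 1) * x ^ (2 * (a - 1)) := by
      rw [← Real.rpow_add hx]
      ring_nf
    have hspow : s ^ (-(a + b)) = s ^ (-b - 1) * s ^ (-(a - 1)) := by
      rw [← Real.rpow_add hs]
      ring_nf
    rw [hfactor, smul_eq_mul, hg]
    beta_reduce
    rw [Real.mul_rpow hs.le (by positivity),
      Real.mul_rpow hs'.le (by positivity), ← Real.rpow_mul hx.le, Real.inv_rpow hs.le,
      ← Real.rpow_neg hs.le, abs_of_pos (by norm_num : (0 : ℝ) < 2), hxpow, hspow]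
    ring
  constructor
  · have hscaled : IntegrableOn (fun y => g (s⁻¹ * y)) (Set.Ioi 0) := by
      rwa [integrableOn_Ioi_comp_mul_left_iff g 0 hs', mul_zero]
    refine IntegrableOn.congr_fun ?_ (fun x hx => (hsubst x hx).symm) measurableSet_Ioi
    exact ((integrableOn_Ioi_comp_rpow_iff (fun y => g (s⁻¹ * y)) two_ne_zero).mpr
      hscaled).const_mul _
  · rw [setIntegral_congr_fun measurableSet_Ioi hsubst, integral_const_mul,
      integral_comp_rpow_Ioi (fun y => g (s⁻¹ * y)) two_ne_zero,
      integral_comp_mul_left_Ioi g 0 hs', mul_zero, hval, inv_inv, smul_eq_mul,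
      Real.rpow_sub_one hs.ne']
    field_simp

end BetaIntegrals

section PolarCoordinates

variable {κ : Type*} [Fintype κ]

theorem integral_sqNorm_euclideanVolume (f : ℝ → ℝ) :
    ∫ x, f (‖x‖ ^ 2) ∂(euclideanVolume κ) = ∫ c : κ → ℂ, f (sqNorm c) := by
  simp only [sqNorm_eq_norm_toLp_sq]
  exact (PiLp.continuousLinearEquiv 2 ℝ
    fun _ : κ => ℂ).symm.toHomeomorph.toMeasurableEquiv.measurableEmbedding.integral_map
      fun x : EuclideanSpace ℂ κ => f (‖x‖ ^ 2)

variable [Nonempty κ]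

theorem euclideanVolume_real_ball :
    (euclideanVolume κ).real (Metric.ball 0 1) =
      Real.pi ^ Fintype.card κ / (Fintype.card κ).factorial := by
  have hvol := Complex.volume_sum_rpow_lt κ (p := 2) (by norm_num) 1
  have hset : {x : κ → ℂ | (∑ i, ‖x i‖ ^ (2 : ℝ)) ^ (1 / (2 : ℝ)) < 1} =
      (PiLp.continuousLinearEquiv 2 ℝ fun _ : κ => ℂ).symm ⁻¹' Metric.ball 0 1 := by
    ext c
    rw [Set.mem_preimage, mem_ball_zero_iff, EuclideanSpace.norm_eq, Real.sqrt_eq_rpow]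
    simp
  have hone : (2 : ℝ) / 2 + 1 = 2 := by norm_num
  have hcard : 2 * (Fintype.card κ : ℝ) / 2 + 1 = Fintype.card κ + 1 := by ring
  rw [hset] at hvol
  rw [Measure.real, euclideanVolume,
    Measure.map_apply (by fun_prop) Metric.isOpen_ball.measurableSet, hvol, hone, hcard,
    Real.Gamma_two, Real.Gamma_nat_eq_factorial, mul_one, ENNReal.ofReal_one, one_pow, one_mul,
    ENNReal.toReal_ofReal (by positivity)]

theorem integral_fun_sqNorm (f : ℝ → ℝ) :
    ∫ c : κ → ℂ, f (sqNorm c) = Real.pi ^ Fintype.card κ / Real.Gamma (Fintype.card κ) *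
      ∫ x in Set.Ioi (0 : ℝ), x ^ (Fintype.card κ - 1) * f x := by
  have hfin : Module.finrank ℝ (EuclideanSpace ℂ κ) = 2 * Fintype.card κ := by
    rw [← Module.finrank_mul_finrank ℝ ℂ (EuclideanSpace ℂ κ), Complex.finrank_real_complex,
      finrank_euclideanSpace]
  obtain ⟨l, hl⟩ := Nat.exists_eq_succ_of_ne_zero (Fintype.card_ne_zero (α := κ))
  have hsubst : ∫ y in Set.Ioi (0 : ℝ), y ^ (2 * Fintype.card κ - 1) • f (y ^ 2) =
      1 / 2 * ∫ x in Set.Ioi (0 : ℝ), x ^ (Fintype.card κ - 1) * f x := by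
    rw [← integral_comp_rpow_Ioi (fun x : ℝ => x ^ (Fintype.card κ - 1) * f x) two_ne_zero,
      ← integral_const_mul]
    refine setIntegral_congr_fun measurableSet_Ioi fun x _ => ?_
    simp only [smul_eq_mul, abs_of_pos (by norm_num : (0 : ℝ) < 2)]
    rw [Real.rpow_two, ← pow_mul, show (2 : ℝ) - 1 = 1 by norm_num, Real.rpow_one,
      show 2 * Fintype.card κ - 1 = 2 * (Fintype.card κ - 1) + 1 by omega, pow_succ]
    ring
  rw [← integral_sqNorm_euclideanVolume, integral_fun_norm_addHaar _ fun r => f (r ^ 2), hfin,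
    euclideanVolume_real_ball, hsubst, hl, Nat.succ_eq_add_one, Nat.cast_add_one,
    Real.Gamma_nat_eq_factorial, Nat.factorial_succ]
  simp only [nsmul_eq_mul, smul_eq_mul]
  push_cast
  field_simp

end PolarCoordinates

/-- Upper bound on the expected Gaussian ball mass of radius `√X` missing from `1`, for the
compressed Wishart matrix of `k + p` rows and a `k`-frame. -/
noncomputable def escapeBound (k p : ℕ) (X : ℝ) : ℝ :=
  (1 + 1 / X) * ((k + p).descFactorial k / Real.Gamma k) *
    ((1 + 2 * X) ^ (-(((p : ℝ) + 1) / 2)) *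
      (Real.Gamma (((k : ℝ) + 1) / 2) * Real.Gamma (((p : ℝ) + 1) / 2) /
        Real.Gamma (((k : ℝ) + 1) / 2 + ((p : ℝ) + 1) / 2)) / 2)

section RadialIntegral

variable {k p : ℕ} {X : ℝ}

theorem one_add_rpow_le_of_le {N x : ℝ} (hN : -2 ≤ N) (hX : 0 < X) (hx : X ≤ x) :
    (1 + x) ^ (-N - 1) ≤ (1 + 1 / X) * (x * (1 + 2 * X + x ^ 2) ^ (-(N / 2 + 1))) := by
  have hx0 : 0 < x := hX.trans_le hx
  have hlin : 1 + x ≤ (1 + 1 / X) * x := by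
    have : 1 ≤ 1 / X * x := by
      rw [one_div, inv_mul_eq_div, le_div_iff₀ hX]
      linarith
    linarith
  calc (1 + x) ^ (-N - 1) = (1 + x) * ((1 + x) ^ (2 : ℝ)) ^ (-(N / 2 + 1)) := by
        rw [← Real.rpow_mul (by positivity), mul_comm (1 + x), ← Real.rpow_add_one (by positivity)]
        ring_nf
    _ ≤ (1 + 1 / X) * x * (1 + 2 * X + x ^ 2) ^ (-(N / 2 + 1)) := by
        refine mul_le_mul hlin ?_ (by positivity) (by positivity)
        refine Real.rpow_le_rpow_of_nonpos (by positivity) ?_ (by linarith)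
        rw [Real.rpow_two]
        nlinarith
    _ = _ := mul_assoc _ _ _

theorem sub_le_indicator_Iio {N x : ℝ} (hN : -2 ≤ N) (hX : 0 < X) (hx : 0 < x) :
    (1 + x) ^ (-N - 1) - (1 + 1 / X) * (x * (1 + 2 * X + x ^ 2) ^ (-(N / 2 + 1))) ≤
      (Set.Iio X).indicator
        (fun x => (1 + x) ^ (-N - 1) - x * (1 + 2 * X + x ^ 2) ^ (-(N / 2 + 1))) x := by
  have htail : 0 ≤ x * (1 + 2 * X + x ^ 2) ^ (-(N / 2 + 1)) := by positivity
  by_cases hlt : x < X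
  · rw [Set.indicator_of_mem (Set.mem_Iio.mpr hlt)]
    exact sub_le_sub_left (le_mul_of_one_le_left htail (by simp [hX.le])) _
  · rw [Set.indicator_of_notMem (by simpa using hlt), sub_nonpos]
    exact one_add_rpow_le_of_le hN hX (not_lt.mp hlt)

theorem integrableOn_pow_mul_indicator_Iio {f : ℝ → ℝ} (hf : ContinuousOn f (Set.Ici 0)) (l : ℕ) :
    IntegrableOn (fun x => x ^ l * (Set.Iio X).indicator f x) (Set.Ioi 0) := by
  have hcont : ContinuousOn (fun x : ℝ => x ^ l * f x) (Set.Icc 0 X) :=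
    .mul (by fun_prop) (hf.mono Set.Icc_subset_Ici_self)
  have hmul : (fun x : ℝ => x ^ l * (Set.Iio X).indicator f x) =
      (Set.Iio X).indicator fun x => x ^ l * f x :=
    funext fun x => (Set.indicator_mul_right (Set.Iio X) (fun x => x ^ l) f).symm
  rw [hmul]
  rw [IntegrableOn, integrable_indicator_iff measurableSet_Iio, IntegrableOn,
    Measure.restrict_restrict measurableSet_Iio]
  exact (hcont.integrableOn_compact isCompact_Icc).mono_set fun x hx => ⟨hx.2.le, hx.1.le⟩

theorem integral_beta_sub_le_integral_indicator (hk : 0 < k) (hX : 0 < X) :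
    Real.Gamma k * Real.Gamma ((p : ℝ) + 1) / Real.Gamma ((k : ℝ) + (p + 1)) -
        (1 + 1 / X) * ((1 + 2 * X) ^ (-(((p : ℝ) + 1) / 2)) *
          (Real.Gamma (((k : ℝ) + 1) / 2) * Real.Gamma (((p : ℝ) + 1) / 2) /
            Real.Gamma (((k : ℝ) + 1) / 2 + ((p : ℝ) + 1) / 2)) / 2) ≤
      ∫ x in Set.Ioi (0 : ℝ), x ^ (k - 1) * (Set.Iio X).indicator
        (fun x => (1 + x) ^ (-((k + p : ℕ) : ℝ) - 1) -
          x * (1 + 2 * X + x ^ 2) ^ (-(((k + p : ℕ) : ℝ) / 2 + 1))) x := by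
  have hk' : (0 : ℝ) < k := Nat.cast_pos.mpr hk
  obtain ⟨hint₁, hval₁⟩ := integrableOn_and_integral_beta_Ioi hk' (by positivity : (0 : ℝ) < p + 1)
  obtain ⟨hint₂, hval₂⟩ := integrableOn_and_integral_beta_sq (s := 1 + 2 * X)
    (by positivity : 0 < ((k : ℝ) + 1) / 2) (by positivity : 0 < ((p : ℝ) + 1) / 2) (by positivity)
  rw [← hval₁, ← hval₂, ← integral_const_mul, ← integral_sub hint₁ (hint₂.const_mul _)]
  refine setIntegral_mono_on (hint₁.sub (hint₂.const_mul _))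
    (integrableOn_pow_mul_indicator_Iio ?_ _) measurableSet_Ioi fun x (hx : 0 < x) => ?_
  · refine .sub (.rpow_const (by fun_prop) fun x (hx : 0 ≤ x) => Or.inl ?_)
      (.mul (by fun_prop) (.rpow_const (by fun_prop) fun x _ => Or.inl ?_))
    · positivity
    · positivity
  · have hpow₁ : x ^ ((k : ℝ) - 1) = x ^ (k - 1) := by
      rw [← Real.rpow_natCast, Nat.cast_sub hk, Nat.cast_one]
    have hpow₂ : x ^ (2 * (((k : ℝ) + 1) / 2) - 1) = x ^ (k - 1) * x := by
      rw [show 2 * (((k : ℝ) + 1) / 2) - 1 = (k : ℝ) by ring, Real.rpow_natCast, ← pow_succ,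
        Nat.sub_add_cancel hk]
    have hexp₁ : -((k : ℝ) + (p + 1)) = -((k + p : ℕ) : ℝ) - 1 := by push_cast; ring
    have hexp₂ : -(((k : ℝ) + 1) / 2 + ((p : ℝ) + 1) / 2) = -(((k + p : ℕ) : ℝ) / 2 + 1) := by
      push_cast; ring
    rw [hpow₁, hpow₂, hexp₁, hexp₂, mul_assoc (x ^ (k - 1)), mul_left_comm (1 + 1 / X), ← mul_sub]
    have hN : (-2 : ℝ) ≤ ((k + p : ℕ) : ℝ) := by linarith [(k + p).cast_nonneg (α := ℝ)]
    exact mul_le_mul_of_nonneg_left (sub_le_indicator_Iio hN hX hx) (by positivity)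

theorem descFactorial_div_Gamma_mul_beta (hk : 0 < k) (p : ℕ) :
    ((k + p).descFactorial k : ℝ) / Real.Gamma k *
      (Real.Gamma k * Real.Gamma ((p : ℝ) + 1) / Real.Gamma ((k : ℝ) + (p + 1))) = 1 := by
  have hΓ := (Real.Gamma_pos_of_pos (Nat.cast_pos.mpr hk : (0 : ℝ) < k)).ne'
  have hfactorial := Nat.factorial_mul_descFactorial (Nat.le_add_right k p)
  rw [Nat.add_sub_cancel_left] at hfactorial
  have hp : (p.factorial : ℝ) ≠ 0 := by positivity
  have hdesc : ((k + p).descFactorial k : ℝ) ≠ 0 := by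
    exact_mod_cast (Nat.descFactorial_pos.mpr (Nat.le_add_right k p)).ne'
  rw [show (k : ℝ) + (p + 1) = ((k + p : ℕ) : ℝ) + 1 by push_cast; ring,
    Real.Gamma_nat_eq_factorial, Real.Gamma_nat_eq_factorial, ← hfactorial]
  push_cast
  field_simp

theorem one_sub_integral_wishartDensity_le_escapeBound {ι κ : Type*} [Fintype ι] [Fintype κ]
    [DecidableEq κ] [Nonempty κ] {V : Matrix ι κ ℂ} (hV : Vᴴ * V = 1) (p : ℕ) (hX : 0 < X) :
    1 - (Fintype.card κ + p).descFactorial (Fintype.card κ) / Real.pi ^ Fintype.card κ *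
        ∫ c in {c | sqNorm c < X}, wishartDensity (Fintype.card κ + p) V c ≤
      escapeBound (Fintype.card κ) p X := by
  set k := Fintype.card κ with hk
  set f : ℝ → ℝ := fun x => (1 + x) ^ (-((k + p : ℕ) : ℝ) - 1) -
    x * (1 + 2 * X + x ^ 2) ^ (-(((k + p : ℕ) : ℝ) / 2 + 1))
  set M : ℝ := ((k + p).descFactorial k : ℝ) with hM
  have hk0 : 0 < k := Fintype.card_pos
  have hpolar : ∫ c in {c : κ → ℂ | sqNorm c < X}, f (sqNorm c) = Real.pi ^ k / Real.Gamma k *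
      ∫ x in Set.Ioi (0 : ℝ), x ^ (k - 1) * (Set.Iio X).indicator f x := by
    rw [hk, ← integral_fun_sqNorm, ← integral_indicator (measurableSet_setOf_sqNorm_lt X)]
    rfl
  rw [sub_le_comm]
  calc 1 - escapeBound k p X
      = M / Real.pi ^ k * (Real.pi ^ k / Real.Gamma k *
          (Real.Gamma k * Real.Gamma ((p : ℝ) + 1) / Real.Gamma ((k : ℝ) + (p + 1)) -
            (1 + 1 / X) * ((1 + 2 * X) ^ (-(((p : ℝ) + 1) / 2)) *
              (Real.Gamma (((k : ℝ) + 1) / 2) * Real.Gamma (((p : ℝ) + 1) / 2) /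
                Real.Gamma (((k : ℝ) + 1) / 2 + ((p : ℝ) + 1) / 2)) / 2))) := by
        rw [← mul_assoc, div_mul_div_cancel₀ (by positivity), mul_sub, hM,
          descFactorial_div_Gamma_mul_beta hk0, escapeBound]
        ring
    _ ≤ M / Real.pi ^ k * (Real.pi ^ k / Real.Gamma k *
          ∫ x in Set.Ioi (0 : ℝ), x ^ (k - 1) * (Set.Iio X).indicator f x) := by
        gcongr
        exact integral_beta_sub_le_integral_indicator hk0 hX
    _ ≤ M / Real.pi ^ k * ∫ c in {c | sqNorm c < X}, wishartDensity (k + p) V c := by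
        rw [← hpolar]
        exact mul_le_mul_of_nonneg_left
          (integral_radial_le_integral_wishartDensity hV (k + p) hX.le) (by positivity)

end RadialIntegral

theorem measurePreserving_mulVec_of_isometry {κ : Type*} [Fintype κ] [DecidableEq κ]
    {U : Matrix κ κ ℂ} (hU : Uᴴ * U = 1) :
    MeasurePreserving (fun c : κ → ℂ => U *ᵥ c) := by
  have hU' : U * Uᴴ = 1 := mul_eq_one_comm.mp hU
  set e : (κ → ℂ) ≃ₗ[ℝ] (κ → ℂ) := LinearEquiv.ofLinearMap
    (U.mulVecLin.restrictScalars ℝ) (Uᴴ.mulVecLin.restrictScalars ℝ)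
    (LinearMap.ext fun c => by simp [mulVec_mulVec, hU'])
    (LinearMap.ext fun c => by simp [mulVec_mulVec, hU])
  set B : Set (κ → ℂ) := {c | sqNorm c < 1}
  have hcont : Continuous fun c : κ → ℂ => U *ᵥ c := by fun_prop
  have hmap : volume.map (fun c : κ → ℂ => U *ᵥ c) =
      ENNReal.ofReal |(LinearMap.det (e : (κ → ℂ) →ₗ[ℝ] (κ → ℂ)))⁻¹| • volume :=
    Measure.map_linearMap_addHaar_eq_smul_addHaar (volume : Measure (κ → ℂ))
      (f := (e : (κ → ℂ) →ₗ[ℝ] (κ → ℂ))) (LinearEquiv.isUnit_det' e).ne_zero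
  have hpre : (fun c : κ → ℂ => U *ᵥ c) ⁻¹' B = B :=
    Set.ext fun c => by simp [B, sqNorm_mulVec_of_isometry hU]
  have hfin : volume B ≠ ⊤ := measure_ne_top_of_subset (fun c (hc : sqNorm c < 1) => hc.le)
    (isCompact_setOf_sqNorm_le 1).measure_ne_top
  have hpos : volume B ≠ 0 :=
    ((isOpen_lt continuous_sqNorm continuous_const).measure_pos _ ⟨0, by simp [sqNorm]⟩).ne'
  -- The unit ball is invariant, which forces the scaling factor of the volume to be 1.
  have hball := congrArg (fun ν => ν B) hmap
  beta_reduce at hball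
  rw [Measure.map_apply hcont.measurable (measurableSet_setOf_sqNorm_lt 1), hpre,
    Measure.smul_apply, smul_eq_mul] at hball
  rw [(ENNReal.mul_eq_right hpos hfin).mp hball.symm, one_smul] at hmap
  exact ⟨hcont.measurable, hmap⟩

section ComplexGaussian

theorem integral_fun_normSq (f : ℝ → ℝ) :
    ∫ z : ℂ, f (‖z‖ ^ 2) = Real.pi * ∫ x in Set.Ioi (0 : ℝ), f x := by
  have hpolar := integral_fun_sqNorm (κ := Unit) f
  have hunit := (volume_preserving_funUnique Unit ℂ).integral_comp
    (MeasurableEquiv.measurableEmbedding _) fun z => f (‖z‖ ^ 2)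
  simp only [sqNorm, Finset.univ_unique, Finset.sum_singleton] at hpolar
  exact hunit.symm.trans (hpolar.trans (by simp))

theorem integral_mul_exp_neg_normSq {l : ℝ} (hl : 0 < l) :
    ∫ z : ℂ, l * Real.exp (-(l * ‖z‖ ^ 2)) = Real.pi := by
  have hexp := Real.integral_rpow_mul_exp_neg_mul_Ioi one_pos hl
  simp only [sub_self, Real.rpow_zero, one_mul, Real.rpow_one, Real.Gamma_one] at hexp
  rw [integral_fun_normSq fun x => l * Real.exp (-(l * x)), integral_const_mul, hexp]
  field_simp

theorem integrable_mul_exp_neg_normSq {l : ℝ} (hl : 0 < l) :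
    Integrable fun z : ℂ => l * Real.exp (-(l * ‖z‖ ^ 2)) :=
  .of_integral_ne_zero (by rw [integral_mul_exp_neg_normSq hl]; exact Real.pi_ne_zero)

theorem setIntegral_mul_exp_neg_normSq {X : ℝ} (l : ℝ) (hX : 0 ≤ X) :
    ∫ z in {z : ℂ | ‖z‖ ^ 2 < X}, l * Real.exp (-(l * ‖z‖ ^ 2)) =
      Real.pi * (1 - Real.exp (-(l * X))) := by
  have hmeas : MeasurableSet {z : ℂ | ‖z‖ ^ 2 < X} :=
    measurableSet_lt (by fun_prop) measurable_const
  have hderiv : ∀ x ∈ Set.uIcc 0 X,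
      HasDerivAt (fun x => -Real.exp (-(l * x))) (l * Real.exp (-(l * x))) x := fun x _ =>
    ((((hasDerivAt_id x).const_mul l).neg).exp).neg.congr_deriv (by simp [mul_comm])
  have hpolar := integral_fun_normSq ((Set.Iio X).indicator fun x => l * Real.exp (-(l * x)))
  rw [integral_indicator measurableSet_Iio, Measure.restrict_restrict measurableSet_Iio,
    Set.Iio_inter_Ioi, ← integral_Ioc_eq_integral_Ioo, ← intervalIntegral.integral_of_le hX,
    intervalIntegral.integral_eq_sub_of_hasDerivAt hderiv
      (Continuous.intervalIntegrable (by fun_prop) _ _)] at hpolar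
  rw [← integral_indicator hmeas]
  refine Eq.trans hpolar ?_
  simp
  ring

theorem setIntegral_prod_mul_exp_le {κ : Type*} [Fintype κ] {l : κ → ℝ} {X : ℝ}
    (hl : ∀ i, 0 < l i) (hX : 0 ≤ X) (i₀ : κ) :
    ∫ d in {d : κ → ℂ | sqNorm d < X}, ∏ i, l i * Real.exp (-(l i * ‖d i‖ ^ 2)) ≤
      Real.pi ^ Fintype.card κ * (1 - Real.exp (-(l i₀ * X))) := by
  classical
  set s : κ → Set ℂ := Function.update (fun _ => Set.univ) i₀ {z | ‖z‖ ^ 2 < X} with hs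
  have hsub : {d : κ → ℂ | sqNorm d < X} ⊆ Set.univ.pi s := fun d (hd : sqNorm d < X) => by
    rw [hs, Set.univ_pi_update_univ]
    exact (Finset.single_le_sum (f := fun i => ‖d i‖ ^ 2) (fun _ _ => by positivity)
      (Finset.mem_univ i₀)).trans_lt hd
  have hfactor : ∀ i, ∫ z in s i, l i * Real.exp (-(l i * ‖z‖ ^ 2)) =
      Real.pi * if i = i₀ then 1 - Real.exp (-(l i₀ * X)) else 1 := fun i => by
    rcases eq_or_ne i i₀ with rfl | hi
    · simpa [hs] using setIntegral_mul_exp_neg_normSq (l i) hX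
    · simpa [hs, hi] using integral_mul_exp_neg_normSq (hl i)
  calc ∫ d in {d : κ → ℂ | sqNorm d < X}, ∏ i, l i * Real.exp (-(l i * ‖d i‖ ^ 2))
      ≤ ∫ d in Set.univ.pi s, ∏ i, l i * Real.exp (-(l i * ‖d i‖ ^ 2)) := by
        refine setIntegral_mono_set
          (Integrable.fintype_prod fun i => integrable_mul_exp_neg_normSq (hl i)).integrableOn
          (Filter.Eventually.of_forall fun d => ?_) hsub.eventuallyLE
        exact Finset.prod_nonneg fun i _ => mul_nonneg (hl i).le (Real.exp_pos _).le
    _ = ∏ i, ∫ z in s i, l i * Real.exp (-(l i * ‖z‖ ^ 2)) := by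
        rw [volume_pi, Measure.restrict_pi_pi]
        exact integral_fintype_prod_eq_prod fun i z => l i * Real.exp (-(l i * ‖z‖ ^ 2))
    _ = Real.pi ^ Fintype.card κ * (1 - Real.exp (-(l i₀ * X))) := by
        simp only [hfactor, Finset.prod_mul_distrib, Finset.prod_const, Finset.card_univ,
          Finset.prod_ite_eq', Finset.mem_univ, if_true]

end ComplexGaussian

section Spectral

open scoped ComplexOrder

variable {κ : Type*} [Fintype κ] [DecidableEq κ] {W : Matrix κ κ ℂ}

theorem re_star_dotProduct_mulVec_eigenvectorUnitary (hW : W.IsHermitian) (d : κ → ℂ) :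
    (star ((hW.eigenvectorUnitary : Matrix κ κ ℂ) *ᵥ d) ⬝ᵥ
        W *ᵥ ((hW.eigenvectorUnitary : Matrix κ κ ℂ) *ᵥ d)).re =
      ∑ i, hW.eigenvalues i * ‖d i‖ ^ 2 := by
  have hdiag : star (hW.eigenvectorUnitary : Matrix κ κ ℂ) * W * hW.eigenvectorUnitary =
      diagonal (fun i => (hW.eigenvalues i : ℂ)) := by
    have h := hW.conjStarAlgAut_star_eigenvectorUnitary
    rwa [Unitary.conjStarAlgAut_star_apply] at h
  rw [star_mulVec, ← dotProduct_mulVec, mulVec_mulVec, mulVec_mulVec, ← star_eq_conjTranspose,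
    hdiag, dotProduct, Complex.re_sum]
  refine Finset.sum_congr rfl fun i _ => ?_
  rw [mulVec_diagonal, Pi.star_apply, Complex.sq_norm, Complex.normSq_apply]
  simp
  ring

theorem exists_eigenvalues_le (hW : W.IsHermitian) {v : κ → ℂ} (hv : sqNorm v = 1) :
    ∃ i, hW.eigenvalues i ≤ (star v ⬝ᵥ W *ᵥ v).re := by
  set U := (hW.eigenvectorUnitary : Matrix κ κ ℂ)
  have hU : Uᴴ * U = 1 := Unitary.coe_star_mul_self hW.eigenvectorUnitary
  have hUv : U *ᵥ (Uᴴ *ᵥ v) = v := by rw [mulVec_mulVec, mul_eq_one_comm.mp hU, one_mulVec]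
  have hunit : ∑ i, ‖(Uᴴ *ᵥ v) i‖ ^ 2 = 1 :=
    (sqNorm_mulVec_of_isometry hU _).symm.trans (by rw [hUv, hv])
  have hquad := re_star_dotProduct_mulVec_eigenvectorUnitary hW (Uᴴ *ᵥ v)
  rw [hUv] at hquad
  by_contra! hlt
  refine lt_irrefl (star v ⬝ᵥ W *ᵥ v).re ?_
  calc (star v ⬝ᵥ W *ᵥ v).re = ∑ i, (star v ⬝ᵥ W *ᵥ v).re * ‖(Uᴴ *ᵥ v) i‖ ^ 2 := by
        rw [← Finset.mul_sum, hunit, mul_one]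
    _ < ∑ i, hW.eigenvalues i * ‖(Uᴴ *ᵥ v) i‖ ^ 2 := by
        obtain ⟨i, hi, hpos⟩ := Finset.exists_lt_of_sum_lt (s := Finset.univ) (f := fun _ : κ => 0)
          (g := fun i => ‖(Uᴴ *ᵥ v) i‖ ^ 2) (by rw [hunit]; simp)
        exact Finset.sum_lt_sum (fun i _ => mul_le_mul_of_nonneg_right (hlt i).le (sq_nonneg _))
          ⟨i, hi, mul_lt_mul_of_pos_right (hlt i) hpos⟩
    _ = (star v ⬝ᵥ W *ᵥ v).re := hquad.symm

/-- The mass of the ball of radius `√X` under the complex Gaussian law with precision matrix `W`;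
it is `0` when `W` is singular. -/
noncomputable def gaussianBallMass (X : ℝ) (W : Matrix κ κ ℂ) : ℝ :=
  1 / Real.pi ^ Fintype.card κ * ∫ c in {c : κ → ℂ | sqNorm c < X},
    W.det.re * Real.exp (-(star c ⬝ᵥ W *ᵥ c).re)

theorem det_re_eq_prod_eigenvalues (hW : W.IsHermitian) : W.det.re = ∏ i, hW.eigenvalues i := by
  rw [hW.det_eq_prod_eigenvalues, ← Complex.ofReal_re (∏ i, hW.eigenvalues i), Complex.ofReal_prod]
  rfl

theorem gaussianBallMass_eq_integral_prod (hW : W.IsHermitian) (X : ℝ) :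
    gaussianBallMass X W = 1 / Real.pi ^ Fintype.card κ * ∫ d in {d : κ → ℂ | sqNorm d < X},
      ∏ i, hW.eigenvalues i * Real.exp (-(hW.eigenvalues i * ‖d i‖ ^ 2)) := by
  set U := (hW.eigenvectorUnitary : Matrix κ κ ℂ) with hUdef
  have hU : Uᴴ * U = 1 := Unitary.coe_star_mul_self hW.eigenvectorUnitary
  have hemb : MeasurableEmbedding fun c : κ → ℂ => U *ᵥ c := by
    refine Continuous.measurableEmbedding (by fun_prop) fun a b hab => ?_
    simpa [mulVec_mulVec, hU] using congrArg (fun x => Uᴴ *ᵥ x) hab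
  have hpre : (fun c : κ → ℂ => U *ᵥ c) ⁻¹' {c | sqNorm c < X} = {c | sqNorm c < X} :=
    Set.ext fun c => by simp [sqNorm_mulVec_of_isometry hU]
  rw [gaussianBallMass,
    ← (measurePreserving_mulVec_of_isometry hU).setIntegral_preimage_emb hemb, hpre]
  simp only [hUdef, re_star_dotProduct_mulVec_eigenvectorUnitary, det_re_eq_prod_eigenvalues hW,
    Finset.prod_mul_distrib, ← Real.exp_sum, Finset.sum_neg_distrib]

theorem gaussianBallMass_le_one_sub_exp (hW : W.PosSemidef) {X : ℝ} (hX : 0 ≤ X) {v : κ → ℂ}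
    (hv : sqNorm v = 1) :
    gaussianBallMass X W ≤ 1 - Real.exp (-(X * (star v ⬝ᵥ W *ᵥ v).re)) := by
  set l := hW.isHermitian.eigenvalues with hl
  obtain ⟨i₀, hi₀⟩ := exists_eigenvalues_le hW.isHermitian hv
  have hnonneg : ∀ i, 0 ≤ l i := hW.eigenvalues_nonneg
  have hexp : Real.exp (-(X * (star v ⬝ᵥ W *ᵥ v).re)) ≤ Real.exp (-(l i₀ * X)) := by
    rw [Real.exp_le_exp, neg_le_neg_iff, mul_comm]
    exact mul_le_mul_of_nonneg_left hi₀ hX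
  rw [gaussianBallMass_eq_integral_prod hW.isHermitian]
  by_cases hpos : ∀ i, 0 < l i
  · calc _ ≤ 1 / Real.pi ^ Fintype.card κ *
          (Real.pi ^ Fintype.card κ * (1 - Real.exp (-(l i₀ * X)))) := by
          gcongr
          exact setIntegral_prod_mul_exp_le hpos hX i₀
      _ = 1 - Real.exp (-(l i₀ * X)) := by field_simp
      _ ≤ _ := sub_le_sub_left hexp 1
  · obtain ⟨i, hi⟩ := not_forall.mp hpos
    have hzero : l i = 0 := le_antisymm (not_lt.mp hi) (hnonneg i)
    have hprod : ∀ d : κ → ℂ, ∏ i, l i * Real.exp (-(l i * ‖d i‖ ^ 2)) = 0 := fun d =>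
      Finset.prod_eq_zero (Finset.mem_univ i) (by rw [hzero, zero_mul])
    simp only [← hl, hprod, integral_zero, mul_zero, sub_nonneg]
    exact hexp.trans (Real.exp_le_one_iff.mpr (neg_nonpos.mpr (mul_nonneg (hnonneg i₀) hX)))

end Spectral

section WishartMass

variable {ι κ m : Type*} [Fintype ι] [Fintype m]

theorem continuous_wishart (V : Matrix ι κ ℂ) :
    Continuous fun H : m → ι → ℝ => wishart V (of H) := by
  have : Continuous fun H : m → ι → ℝ => (of H).map Complex.ofReal :=
    Continuous.matrix_map (A := fun H : m → ι → ℝ => of H) continuous_id Complex.continuous_ofReal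
  unfold wishart
  fun_prop

variable [Fintype κ] [DecidableEq κ]

theorem integrable_wishart_mul_exp_prod {V : Matrix ι κ ℂ} (hV : Vᴴ * V = 1)
    (hκ : Fintype.card κ ≤ Fintype.card m) (ν : Measure (κ → ℂ)) [IsFiniteMeasure ν] :
    Integrable (Function.uncurry fun (H : m → ι → ℝ) (c : κ → ℂ) =>
      (wishart V (of H)).det.re * Real.exp (-(star c ⬝ᵥ wishart V (of H) *ᵥ c).re))
      ((gaussianRows m ι).prod ν) := by
  have hdet : Integrable (fun H => (wishart V (of H)).det.re) (gaussianRows m ι) := by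
    simpa using (integrable_and_integral_det_wishart_mul_exp hV hκ 0).1
  refine (hdet.mul_prod (integrable_const (1 : ℝ) (μ := ν))).mono ?_
    (Filter.Eventually.of_forall fun p => ?_)
  · have hwishart : Continuous fun p : (m → ι → ℝ) × (κ → ℂ) => wishart V (of p.1) :=
      (continuous_wishart V).comp continuous_fst
    have hquad : Continuous fun p : (m → ι → ℝ) × (κ → ℂ) =>
        (star p.2 ⬝ᵥ wishart V (of p.1) *ᵥ p.2).re := by fun_prop
    exact ((Complex.continuous_re.comp hwishart.matrix_det).mul
      (Real.continuous_exp.comp hquad.neg)).aestronglyMeasurable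
  · simp only [Function.uncurry_def, mul_one, norm_mul]
    refine mul_le_of_le_one_right (norm_nonneg _) ?_
    rw [Real.norm_eq_abs, Real.abs_exp, Real.exp_le_one_iff, neg_nonpos,
      star_dotProduct_wishart_mulVec, Complex.ofReal_re]
    exact sqNorm_nonneg _

theorem integrable_and_integral_gaussianBallMass_wishart {V : Matrix ι κ ℂ} (hV : Vᴴ * V = 1)
    (hκ : Fintype.card κ ≤ Fintype.card m) (X : ℝ) :
    Integrable (fun H => gaussianBallMass X (wishart V (of H))) (gaussianRows m ι) ∧
    ∫ H, gaussianBallMass X (wishart V (of H)) ∂gaussianRows m ι =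
      (Fintype.card m).descFactorial (Fintype.card κ) / Real.pi ^ Fintype.card κ *
        ∫ c in {c | sqNorm c < X}, wishartDensity (Fintype.card m) V c := by
  have : IsFiniteMeasure (volume.restrict {c : κ → ℂ | sqNorm c < X}) :=
    isFiniteMeasure_restrict.mpr <| measure_ne_top_of_subset
      (fun c (hc : sqNorm c < X) => hc.le) (isCompact_setOf_sqNorm_le X).measure_ne_top
  have hint := integrable_wishart_mul_exp_prod (m := m) hV hκ
    (volume.restrict {c : κ → ℂ | sqNorm c < X})
  unfold gaussianBallMass
  refine ⟨hint.integral_prod_left.const_mul _, ?_⟩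
  rw [integral_const_mul, integral_integral_swap hint]
  simp only [(integrable_and_integral_det_wishart_mul_exp hV hκ _).2]
  rw [integral_const_mul]
  ring

end WishartMass

section OrthonormalFrames

variable {ι m : Type*} [Fintype ι] [DecidableEq ι] [DecidableEq m]

theorem submatrix_one_mul_transpose (f : m ↪ ι) :
    (1 : Matrix ι ι ℝ).submatrix f id * ((1 : Matrix ι ι ℝ).submatrix f id)ᵀ = 1 := by
  have hmul := submatrix_mul (1 : Matrix ι ι ℝ) 1 f id f Function.bijective_id
  rw [transpose_submatrix, transpose_one, ← hmul, Matrix.one_mul, submatrix_one _ f.injective]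

theorem exists_orthogonal_submatrix_eq (f : m ↪ ι) {E : Matrix m ι ℝ} (hE : E * Eᵀ = 1) :
    ∃ P ∈ orthogonalGroup ι ℝ, E = P.submatrix f id := by
  set v : ι → EuclideanSpace ℝ ι := Function.extend f (fun i => WithLp.toLp 2 (E i)) 0
  have hv : ∀ i, v (f i) = WithLp.toLp 2 (E i) := f.injective.extend_apply _ _
  have horth : Orthonormal ℝ ((Set.range f).domRestrict v) := by
    rw [orthonormal_iff_ite]
    rintro ⟨_, hi⟩ ⟨_, hj⟩
    obtain ⟨i, rfl⟩ := id hi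
    obtain ⟨j, rfl⟩ := id hj
    have hij : E i ⬝ᵥ E j = if i = j then 1 else 0 := congrFun (congrFun hE i) j
    rw [EuclideanSpace.inner_eq_star_dotProduct, dotProduct_comm]
    simp only [Set.domRestrict_apply, hv]
    exact hij.trans (if_congr (by simp) rfl rfl)
  obtain ⟨b, hb⟩ := horth.exists_orthonormalBasis_extension_of_card_eq (by simp)
  refine ⟨of fun i => (b i).ofLp, (mem_orthogonalGroup_iff _ _).mpr ?_, ?_⟩
  · ext i j
    have hij := orthonormal_iff_ite.mp b.orthonormal i j
    rw [EuclideanSpace.inner_eq_star_dotProduct, dotProduct_comm] at hij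
    exact hij
  · ext i j
    simp [hb (f i) ⟨i, rfl⟩, hv]

theorem exists_orthogonal_mul_eq (f : m ↪ ι) {E E' : Matrix m ι ℝ} (hE : E * Eᵀ = 1)
    (hE' : E' * E'ᵀ = 1) : ∃ O ∈ orthogonalGroup ι ℝ, E' = E * O := by
  obtain ⟨P, hP, rfl⟩ := exists_orthogonal_submatrix_eq f hE
  obtain ⟨P', hP', rfl⟩ := exists_orthogonal_submatrix_eq f hE'
  refine ⟨star P * P', mul_mem (Unitary.star_mem hP) hP', ?_⟩
  rw [← submatrix_id_id (star P * P'), ← submatrix_mul _ _ f id id Function.bijective_id,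
    ← Matrix.mul_assoc, Unitary.mul_star_self_of_mem hP, Matrix.one_mul]

end OrthonormalFrames

section SingularFrame

variable {ι m : Type*} [Fintype ι] [Fintype m]

theorem trace_mul_transpose_self (H : Matrix m ι ℝ) :
    (H * Hᵀ).trace = ∑ i, ∑ j, H i j ^ 2 := by
  simp only [trace, diag_apply, mul_apply, transpose_apply, sq]

variable [DecidableEq m]

theorem exists_orthogonal_diagonalization {A : Matrix m m ℝ} (hA : A.PosDef) :
    ∃ K ∈ orthogonalGroup m ℝ, ∃ l : m → ℝ,
      Kᵀ * A * K = diagonal l ∧ (∀ i, 0 < l i) ∧ ∑ i, l i = A.trace := by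
  have hdiag := hA.1.conjStarAlgAut_star_eigenvectorUnitary
  rw [Unitary.conjStarAlgAut_star_apply, star_eq_conjTranspose,
    conjTranspose_eq_transpose_of_trivial] at hdiag
  exact ⟨hA.1.eigenvectorUnitary, hA.1.eigenvectorUnitary.2, hA.1.eigenvalues, hdiag,
    hA.eigenvalues_pos, hA.1.trace_eq_sum_eigenvalues.symm⟩

theorem diagonal_inv_sqrt_mul_mul_transpose {F : Matrix m ι ℝ} {l : m → ℝ}
    (hF : F * Fᵀ = diagonal l) (hl : ∀ i, 0 < l i) :
    diagonal (fun i => (√(l i))⁻¹) * F * (diagonal (fun i => (√(l i))⁻¹) * F)ᵀ = 1 := by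
  rw [transpose_mul, diagonal_transpose, Matrix.mul_assoc, ← Matrix.mul_assoc F, hF,
    diagonal_mul_diagonal, diagonal_mul_diagonal, ← diagonal_one]
  congr 1
  funext i
  have hsqrt := (Real.sqrt_pos.mpr (hl i)).ne'
  field_simp
  exact (Real.sq_sqrt (hl i).le).symm

theorem exists_singular_frame {H : Matrix m ι ℝ} (hH : IsUnit (H * Hᵀ).det) :
    ∃ K ∈ orthogonalGroup m ℝ, ∃ (d : m → ℝ) (E : Matrix m ι ℝ), (∀ i, 0 < d i) ∧
      E * Eᵀ = 1 ∧ H = K * (diagonal d * E) ∧ ∑ i, d i ^ 2 = ∑ i, ∑ j, H i j ^ 2 := by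
  have hpos : (H * Hᵀ).PosDef :=
    (posSemidef_self_mul_conjTranspose H).posDef_iff_isUnit.mpr ((isUnit_iff_isUnit_det _).mpr hH)
  obtain ⟨K, hK, l, hdiag, hl, hsum⟩ := exists_orthogonal_diagonalization hpos
  have hF : (Kᵀ * H) * (Kᵀ * H)ᵀ = diagonal l := by
    rw [transpose_mul, transpose_transpose, ← hdiag]
    simp only [Matrix.mul_assoc]
  refine ⟨K, hK, fun i => √(l i), diagonal (fun i => (√(l i))⁻¹) * (Kᵀ * H),
    fun i => Real.sqrt_pos.mpr (hl i), diagonal_inv_sqrt_mul_mul_transpose hF hl, ?_, ?_⟩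
  · have hcancel : diagonal (fun i => √(l i)) * diagonal (fun i => (√(l i))⁻¹) = 1 := by
      rw [diagonal_mul_diagonal, ← diagonal_one]
      exact congrArg diagonal
        (funext fun i => mul_inv_cancel₀ (Real.sqrt_pos.mpr (hl i)).ne')
    rw [← Matrix.mul_assoc (diagonal _), hcancel, Matrix.one_mul, ← Matrix.mul_assoc,
      (mem_orthogonalGroup_iff _ _).mp hK, Matrix.one_mul]
  · rw [← trace_mul_transpose_self, ← hsum]
    exact Finset.sum_congr rfl fun i _ => Real.sq_sqrt (hl i).le

end SingularFrame

section OrthogonalHaar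

variable {ι 𝕜 : Type*} [Fintype ι] [DecidableEq ι] [RCLike 𝕜]

noncomputable instance : MeasurableSpace (unitaryGroup ι 𝕜) := borel _

instance : BorelSpace (unitaryGroup ι 𝕜) := ⟨rfl⟩

instance : SecondCountableTopology (unitaryGroup ι 𝕜) :=
  have : SecondCountableTopology (Matrix ι ι 𝕜) :=
    inferInstanceAs (SecondCountableTopology (ι → ι → 𝕜))
  TopologicalSpace.Subtype.secondCountableTopology _

instance : CompactSpace (unitaryGroup ι 𝕜) := by
  have hbox : IsCompact (Set.univ.pi fun _ => Set.univ.pi fun _ => Metric.closedBall 0 1 :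
      Set (Matrix ι ι 𝕜)) :=
    isCompact_univ_pi fun _ => isCompact_univ_pi fun _ => isCompact_closedBall 0 1
  have hclosed : IsClosed (unitaryGroup ι 𝕜 : Set (Matrix ι ι 𝕜)) := isClosed_unitary
  exact isCompact_iff_compactSpace.mp (hbox.of_isClosed_subset hclosed fun U hU i _ j _ =>
    mem_closedBall_zero_iff.mpr (entry_norm_bound_of_unitary hU i j))

/-- The Haar probability measure of the orthogonal group. -/
noncomputable def orthogonalHaar (ι : Type*) [Fintype ι] [DecidableEq ι] :
    Measure (orthogonalGroup ι ℝ) :=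
  Measure.haarMeasure ⊤

instance : IsProbabilityMeasure (orthogonalHaar ι) := ⟨Measure.haarMeasure_self⟩

instance : (orthogonalHaar ι).IsMulLeftInvariant := by
  unfold orthogonalHaar
  infer_instance

theorem lintegral_mul_orthogonal_eq {m : Type*} [DecidableEq m] (f : m ↪ ι) {E E' : Matrix m ι ℝ}
    (hE : E * Eᵀ = 1) (hE' : E' * E'ᵀ = 1) (φ : Matrix m ι ℝ → ℝ≥0∞) :
    ∫⁻ O, φ (E' * (O : Matrix ι ι ℝ)) ∂orthogonalHaar ι =
      ∫⁻ O, φ (E * (O : Matrix ι ι ℝ)) ∂orthogonalHaar ι := by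
  obtain ⟨P, hP, rfl⟩ := exists_orthogonal_mul_eq f hE hE'
  rw [← lintegral_mul_left_eq_self (μ := orthogonalHaar ι)
    (fun O => φ (E * (O : Matrix ι ι ℝ))) ⟨P, hP⟩]
  simp only [Submonoid.coe_mul, Matrix.mul_assoc]

end OrthogonalHaar

section NearlyMisses

variable {ι κ m m' : Type*} [Fintype ι] [Fintype κ] [Fintype m] [Fintype m'] {η : ℝ}
  {V : Matrix ι κ ℂ}

/-- The complex row space of `H` nearly misses the range of the frame `V`: all its vectors make,
with some fixed unit vector of that range, an angle whose squared cosine is at most `η`. -/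
def NearlyMisses (η : ℝ) (V : Matrix ι κ ℂ) (H : Matrix m ι ℝ) : Prop :=
  ∃ v, sqNorm v = 1 ∧ ∀ l : m → ℂ, ‖star (V *ᵥ v) ⬝ᵥ (l ᵥ* H.map Complex.ofReal)‖ ^ 2 ≤
    η * sqNorm (l ᵥ* H.map Complex.ofReal)

theorem map_mul_ofReal {α β γ : Type*} [Fintype β] (M : Matrix α β ℝ) (N : Matrix β γ ℝ) :
    (M * N).map Complex.ofReal = M.map Complex.ofReal * N.map Complex.ofReal :=
  Matrix.map_mul (f := Complex.ofRealHom)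

theorem conjTranspose_map_ofReal {α β : Type*} (M : Matrix α β ℝ) :
    (M.map Complex.ofReal)ᴴ = Mᵀ.map Complex.ofReal :=
  Matrix.ext fun _ _ => Complex.conj_ofReal _

theorem map_one_ofReal {α : Type*} [DecidableEq α] :
    (1 : Matrix α α ℝ).map Complex.ofReal = 1 :=
  Matrix.map_one _ Complex.ofReal_zero Complex.ofReal_one

theorem NearlyMisses.mul {H : Matrix m ι ℝ} (h : NearlyMisses η V H) (M : Matrix m' m ℝ) :
    NearlyMisses η V (M * H) := by
  obtain ⟨v, hv, h⟩ := h
  refine ⟨v, hv, fun l => ?_⟩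
  rw [map_mul_ofReal, ← vecMul_vecMul]
  exact h _

theorem nearlyMisses_mul_iff [DecidableEq m] {H : Matrix m ι ℝ} {M M' : Matrix m m ℝ}
    (hM : M' * M = 1) : NearlyMisses η V (M * H) ↔ NearlyMisses η V H :=
  ⟨fun h => by simpa only [← Matrix.mul_assoc, hM, Matrix.one_mul] using h.mul M',
    fun h => h.mul M⟩

theorem NearlyMisses.exists_sqNorm_mulVec_le [DecidableEq m] {F : Matrix m ι ℝ} (hη : 0 ≤ η)
    (hF : F * Fᵀ = 1) (h : NearlyMisses η V F) :
    ∃ v, sqNorm v = 1 ∧ sqNorm (F.map Complex.ofReal *ᵥ (V *ᵥ v)) ≤ η := by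
  obtain ⟨v, hv, h⟩ := h
  set b := F.map Complex.ofReal *ᵥ (V *ᵥ v)
  have hadj : b ᵥ* F.map Complex.ofReal = (F.map Complex.ofReal)ᴴ *ᵥ b := by
    rw [conjTranspose_map_ofReal, transpose_map, mulVec_transpose]
  have hiso : ((F.map Complex.ofReal)ᴴ)ᴴ * (F.map Complex.ofReal)ᴴ = 1 := by
    rw [conjTranspose_conjTranspose, conjTranspose_map_ofReal, ← map_mul_ofReal, hF, map_one_ofReal]
  -- The row combination with coefficients `b` is the projection of `V v` onto the row space.
  have hb := h b
  rw [hadj, sqNorm_mulVec_of_isometry hiso, dotProduct_mulVec, ← star_mulVec,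
    star_dotProduct_self_eq_sqNorm, Complex.norm_real, Real.norm_eq_abs, sq_abs] at hb
  refine ⟨v, hv, ?_⟩
  by_contra! hlt
  nlinarith [sqNorm_nonneg b]

theorem isClosed_nearlyMisses (η : ℝ) (V : Matrix ι κ ℂ) :
    IsClosed {H : Matrix m ι ℝ | NearlyMisses η V H} := by
  have hsphere : IsCompact {v : κ → ℂ | sqNorm v = 1} :=
    (isCompact_setOf_sqNorm_le 1).of_isClosed_subset
      (isClosed_eq continuous_sqNorm continuous_const) fun v (hv : sqNorm v = 1) => hv.le
  have : CompactSpace {v : κ → ℂ | sqNorm v = 1} := isCompact_iff_compactSpace.mp hsphere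
  have hrow : ∀ l : m → ℂ, Continuous
      fun p : {v : κ → ℂ | sqNorm v = 1} × Matrix m ι ℝ => l ᵥ* p.2.map Complex.ofReal :=
    fun l => by
      have := continuous_snd.matrix_map Complex.continuous_ofReal
        (A := fun p : {v : κ → ℂ | sqNorm v = 1} × Matrix m ι ℝ => p.2)
      fun_prop
  have hclosed : IsClosed {p : {v : κ → ℂ | sqNorm v = 1} × Matrix m ι ℝ |
      ∀ l : m → ℂ, ‖star (V *ᵥ (p.1 : κ → ℂ)) ⬝ᵥ (l ᵥ* p.2.map Complex.ofReal)‖ ^ 2 ≤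
        η * sqNorm (l ᵥ* p.2.map Complex.ofReal)} := by
    rw [Set.ofPred_forall]
    refine isClosed_iInter fun l => isClosed_le ?_
      (continuous_const.mul (continuous_sqNorm.comp (hrow l)))
    have := hrow l
    fun_prop
  convert isClosedMap_snd_of_compactSpace _ hclosed using 1
  ext H
  simp only [NearlyMisses, Set.mem_ofPred_eq, Set.mem_image, Prod.exists, exists_eq_right,
    Subtype.exists, exists_prop]

end NearlyMisses

section FrameAverage

variable {ι m : Type*} [Fintype ι] [Fintype m]

theorem wishart_orthogonal_mul [DecidableEq m] {κ : Type*} (V : Matrix ι κ ℂ) {K : Matrix m m ℝ}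
    (hK : K ∈ orthogonalGroup m ℝ) (H : Matrix m ι ℝ) : wishart V (K * H) = wishart V H := by
  have hK' : (K.map Complex.ofReal)ᴴ * K.map Complex.ofReal = 1 := by
    rw [conjTranspose_map_ofReal, ← map_mul_ofReal, (mem_orthogonalGroup_iff' _ _).mp hK,
      map_one_ofReal]
  rw [wishart, wishart, map_mul_ofReal, Matrix.mul_assoc, conjTranspose_mul, Matrix.mul_assoc,
    ← Matrix.mul_assoc _ (K.map _), hK', Matrix.one_mul]

variable {κ : Type*} [Fintype κ] [DecidableEq κ] {X η : ℝ}
  {V : Matrix ι κ ℂ}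

theorem exp_le_one_sub_gaussianBallMass_wishart (hX : 0 ≤ X) (V : Matrix ι κ ℂ) (H : Matrix m ι ℝ)
    {v : κ → ℂ} (hv : sqNorm v = 1) :
    Real.exp (-(X * sqNorm (H.map Complex.ofReal *ᵥ (V *ᵥ v)))) ≤
      1 - gaussianBallMass X (wishart V H) := by
  have hmass := gaussianBallMass_le_one_sub_exp (posSemidef_wishart V H) hX hv
  rw [star_dotProduct_wishart_mulVec, Complex.ofReal_re] at hmass
  linarith

theorem gaussianBallMass_wishart_le_one [Nonempty κ] (hX : 0 ≤ X) (V : Matrix ι κ ℂ)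
    (H : Matrix m ι ℝ) : gaussianBallMass X (wishart V H) ≤ 1 := by
  have i := Classical.arbitrary κ
  have hv : sqNorm (Pi.single i 1 : κ → ℂ) = 1 := by
    simp [sqNorm, Pi.single_apply, apply_ite]
  linarith [exp_le_one_sub_gaussianBallMass_wishart hX V H hv, Real.exp_pos
    (-(X * sqNorm (H.map Complex.ofReal *ᵥ (V *ᵥ Pi.single i 1))))]

theorem card_mul_exp_le_sum_exp [Nonempty m] (y : m → ℝ) {z : ℝ}
    (h : Fintype.card m * z ≤ ∑ i, y i) : Fintype.card m * Real.exp z ≤ ∑ i, Real.exp (y i) := by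
  have hm : (0 : ℝ) < Fintype.card m := Nat.cast_pos.mpr Fintype.card_pos
  have hconvex := convexOn_exp.map_sum_le (t := Finset.univ) (p := y)
    (w := fun _ => (Fintype.card m : ℝ)⁻¹) (fun _ _ => by positivity) (by simp) (by simp)
  simp only [smul_eq_mul, ← Finset.mul_sum] at hconvex
  have hz : z ≤ (Fintype.card m : ℝ)⁻¹ * ∑ i, y i := (le_inv_mul_iff₀ hm).mpr h
  exact (le_inv_mul_iff₀ hm).mp ((Real.exp_le_exp.mpr hz).trans hconvex)

theorem sqNorm_diagonal_mul_submatrix_mulVec [DecidableEq m] (d : m → ℝ) (F : Matrix m ι ℝ)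
    (σ : m → m) (s : ι → ℂ) :
    sqNorm ((diagonal d * F.submatrix σ id).map Complex.ofReal *ᵥ s) =
      ∑ i, d i ^ 2 * ‖(F.map Complex.ofReal *ᵥ s) (σ i)‖ ^ 2 := by
  refine Finset.sum_congr rfl fun i _ => ?_
  rw [map_mul_ofReal, diagonal_map Complex.ofReal_zero, ← mulVec_mulVec, mulVec_diagonal, norm_mul,
    mul_pow, Complex.norm_real, Real.norm_eq_abs, sq_abs]
  rfl

theorem card_mul_exp_le_sum_one_sub_gaussianBallMass [DecidableEq m] [AddGroup m] (hX : 0 ≤ X)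
    (hη : 0 ≤ η) {F : Matrix m ι ℝ} (hF : F * Fᵀ = 1) (hFV : NearlyMisses η V F) (d : m → ℝ) :
    Fintype.card m * Real.exp (-(X * η * (∑ i, d i ^ 2) / Fintype.card m)) ≤
      ∑ c, (1 - gaussianBallMass X (wishart V (diagonal d * F.submatrix (· + c) id))) := by
  obtain ⟨v, hv, hle⟩ := hFV.exists_sqNorm_mulVec_le hη hF
  set b := F.map Complex.ofReal *ᵥ (V *ᵥ v)
  have hsum : ∑ c, ∑ i, d i ^ 2 * ‖b (i + c)‖ ^ 2 = (∑ i, d i ^ 2) * sqNorm b := by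
    rw [Finset.sum_comm, Finset.sum_mul]
    refine Finset.sum_congr rfl fun i _ => ?_
    rw [← Finset.mul_sum]
    exact congrArg _ (Equiv.sum_comp (Equiv.addLeft i) fun j => ‖b j‖ ^ 2)
  refine (card_mul_exp_le_sum_exp (fun c => -(X * ∑ i, d i ^ 2 * ‖b (i + c)‖ ^ 2)) ?_).trans
    (Finset.sum_le_sum fun c _ => ?_)
  · rw [Finset.sum_neg_distrib, ← Finset.mul_sum, hsum, mul_neg, neg_le_neg_iff,
      mul_div_cancel₀ _ (Nat.cast_ne_zero.mpr Fintype.card_ne_zero), mul_assoc X, mul_comm η]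
    gcongr
  · rw [← sqNorm_diagonal_mul_submatrix_mulVec]
    exact exp_le_one_sub_gaussianBallMass_wishart hX V _ hv

end FrameAverage

section Rotation

variable {ι κ m : Type*} [Fintype ι] [DecidableEq ι] [Fintype κ] [Fintype m] {X η : ℝ}

theorem measurableSet_setOf_nearlyMisses_mul (η : ℝ) (V : Matrix ι κ ℂ) (H : Matrix m ι ℝ) :
    MeasurableSet {O : orthogonalGroup ι ℝ | NearlyMisses η V (H * (O : Matrix ι ι ℝ))} :=
  ((isClosed_nearlyMisses η V).preimage (by fun_prop)).measurableSet

theorem measure_setOf_nearlyMisses_mul [DecidableEq m] (f : m ↪ ι) {V : Matrix ι κ ℂ}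
    {H E : Matrix m ι ℝ} (hE : E * Eᵀ = 1) (hH : IsUnit (H * Hᵀ).det) :
    orthogonalHaar ι {O | NearlyMisses η V (H * (O : Matrix ι ι ℝ))} =
      orthogonalHaar ι {O | NearlyMisses η V (E * (O : Matrix ι ι ℝ))} := by
  obtain ⟨K, hK, d, E', hd, hE', rfl, -⟩ := exists_singular_frame hH
  have hdiag : diagonal (fun i => (d i)⁻¹) * diagonal d = 1 := by
    rw [diagonal_mul_diagonal, ← diagonal_one]
    exact congrArg diagonal (funext fun i => inv_mul_cancel₀ (hd i).ne')
  simp only [Matrix.mul_assoc, nearlyMisses_mul_iff ((mem_orthogonalGroup_iff' _ _).mp hK),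
    nearlyMisses_mul_iff hdiag]
  rw [← lintegral_indicator_one (measurableSet_setOf_nearlyMisses_mul η V E'),
    ← lintegral_indicator_one (measurableSet_setOf_nearlyMisses_mul η V E)]
  exact lintegral_mul_orthogonal_eq f hE hE' ({F | NearlyMisses η V F}.indicator 1)

variable [DecidableEq κ]

theorem measurable_gaussianBallMass (X : ℝ) {α : Type*} [TopologicalSpace α] [MeasurableSpace α]
    [BorelSpace α] [SecondCountableTopology α] {W : α → Matrix κ κ ℂ} (hW : Continuous W) :
    Measurable fun a => gaussianBallMass X (W a) := by
  unfold gaussianBallMass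
  have hquad : Continuous fun p : α × (κ → ℂ) => (star p.2 ⬝ᵥ W p.1 *ᵥ p.2).re := by fun_prop
  have hdensity : Continuous (Function.uncurry fun (a : α) (c : κ → ℂ) =>
      (W a).det.re * Real.exp (-(star c ⬝ᵥ W a *ᵥ c).re)) :=
    (Complex.continuous_re.comp (hW.comp continuous_fst).matrix_det).mul
      (Real.continuous_exp.comp hquad.neg)
  exact (hdensity.stronglyMeasurable.integral_prod_right
    (ν := volume.restrict _)).measurable.const_mul _

variable [DecidableEq m]

theorem lintegral_one_sub_gaussianBallMass_mul_eq (f : m ↪ ι) (V : Matrix ι κ ℂ)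
    {E E' : Matrix m ι ℝ} (hE : E * Eᵀ = 1) (hE' : E' * E'ᵀ = 1) {K : Matrix m m ℝ}
    (hK : K ∈ orthogonalGroup m ℝ) (d : m → ℝ) (σ : m ↪ m) :
    ∫⁻ O, ENNReal.ofReal (1 - gaussianBallMass X
      (wishart V (K * (diagonal d * E') * (O : Matrix ι ι ℝ)))) ∂orthogonalHaar ι =
    ∫⁻ O, ENNReal.ofReal (1 - gaussianBallMass X
      (wishart V (diagonal d * (E * (O : Matrix ι ι ℝ)).submatrix σ id))) ∂orthogonalHaar ι := by
  have hσ : E.submatrix σ id * (E.submatrix σ id)ᵀ = 1 := by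
    rw [transpose_submatrix, ← submatrix_mul _ _ _ _ _ Function.bijective_id, hE,
      submatrix_one _ σ.injective]
  simp only [Matrix.mul_assoc, wishart_orthogonal_mul V hK]
  exact lintegral_mul_orthogonal_eq f hσ hE' fun F =>
    ENNReal.ofReal (1 - gaussianBallMass X (wishart V (diagonal d * F)))

theorem card_mul_ofReal_exp_le_sum_one_sub_gaussianBallMass [AddGroup m] [Nonempty κ] (hX : 0 ≤ X)
    (hη : 0 ≤ η) {V : Matrix ι κ ℂ} {E : Matrix m ι ℝ} (hE : E * Eᵀ = 1) {O : orthogonalGroup ι ℝ}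
    (hO : NearlyMisses η V (E * (O : Matrix ι ι ℝ))) (d : m → ℝ) :
    Fintype.card m * ENNReal.ofReal (Real.exp (-(X * η * (∑ i, d i ^ 2) / Fintype.card m))) ≤
      ∑ c, ENNReal.ofReal (1 - gaussianBallMass X
        (wishart V (diagonal d * (E * (O : Matrix ι ι ℝ)).submatrix (· + c) id))) := by
  have hEO : E * (O : Matrix ι ι ℝ) * (E * (O : Matrix ι ι ℝ))ᵀ = 1 := by
    rw [transpose_mul, Matrix.mul_assoc, ← Matrix.mul_assoc (O : Matrix ι ι ℝ),
      (mem_orthogonalGroup_iff _ _).mp O.2, Matrix.one_mul, hE]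
  rw [← ENNReal.ofReal_natCast, ← ENNReal.ofReal_mul (by positivity),
    ← ENNReal.ofReal_sum_of_nonneg
      fun c _ => sub_nonneg.mpr (gaussianBallMass_wishart_le_one hX V _)]
  exact ENNReal.ofReal_le_ofReal (card_mul_exp_le_sum_one_sub_gaussianBallMass hX hη hEO hO d)

theorem exp_mul_measure_nearlyMisses_le [AddGroup m] [Nonempty κ] (f : m ↪ ι) (hX : 0 ≤ X)
    (hη : 0 ≤ η) {V : Matrix ι κ ℂ} {H E : Matrix m ι ℝ} (hE : E * Eᵀ = 1)
    (hH : IsUnit (H * Hᵀ).det) :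
    ENNReal.ofReal (Real.exp (-(X * η * (∑ i, ∑ j, H i j ^ 2) / Fintype.card m))) *
      orthogonalHaar ι {O | NearlyMisses η V (E * (O : Matrix ι ι ℝ))} ≤
    ∫⁻ O, ENNReal.ofReal (1 - gaussianBallMass X (wishart V (H * (O : Matrix ι ι ℝ))))
      ∂orthogonalHaar ι := by
  obtain ⟨K, hK, d, E', -, hE', rfl, hsum⟩ := exists_singular_frame hH
  rw [← hsum]
  set S := {O : orthogonalGroup ι ℝ | NearlyMisses η V (E * (O : Matrix ι ι ℝ))}
  set φ : m → orthogonalGroup ι ℝ → ℝ≥0∞ := fun c O => ENNReal.ofReal (1 - gaussianBallMass X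
    (wishart V (diagonal d * (E * (O : Matrix ι ι ℝ)).submatrix (· + c) id)))
  have hφ : ∀ c, Measurable (φ c) := fun c => by
    have hcont : Continuous fun O : orthogonalGroup ι ℝ =>
        diagonal d * (E * (O : Matrix ι ι ℝ)).submatrix (· + c) id := by
      have : Continuous fun O : orthogonalGroup ι ℝ =>
        (E * (O : Matrix ι ι ℝ)).submatrix (· + c) id := .matrix_submatrix (by fun_prop) _ _
      fun_prop
    exact ((measurable_gaussianBallMass X ((continuous_wishart V).comp hcont)).const_sub
      1).ennreal_ofReal
  have hbound : ∀ O ∈ S, Fintype.card m * ENNReal.ofReal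
      (Real.exp (-(X * η * (∑ i, d i ^ 2) / Fintype.card m))) ≤ ∑ c, φ c O := fun O hO =>
    card_mul_ofReal_exp_le_sum_one_sub_gaussianBallMass hX hη hE hO d
  have hm : (Fintype.card m : ℝ≥0∞) ≠ 0 := Nat.cast_ne_zero.mpr Fintype.card_ne_zero
  rw [← ENNReal.mul_le_mul_iff_right hm (ENNReal.natCast_ne_top _), ← mul_assoc]
  calc _ = ∫⁻ O in S, Fintype.card m * ENNReal.ofReal
        (Real.exp (-(X * η * (∑ i, d i ^ 2) / Fintype.card m))) ∂orthogonalHaar ι :=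
        (setLIntegral_const _ _).symm
    _ ≤ ∫⁻ O in S, ∑ c, φ c O ∂orthogonalHaar ι :=
        setLIntegral_mono' (measurableSet_setOf_nearlyMisses_mul η V E) hbound
    _ ≤ ∫⁻ O, ∑ c, φ c O ∂orthogonalHaar ι := setLIntegral_le_lintegral _ _
    _ = ∑ c, ∫⁻ O, φ c O ∂orthogonalHaar ι := lintegral_finsetSum _ fun c _ => hφ c
    _ = _ := by
        refine (Finset.sum_congr rfl fun c _ => (lintegral_one_sub_gaussianBallMass_mul_eq (X := X)
          f V hE hE' hK d ⟨(· + c), add_left_injective c⟩).symm).trans ?_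
        simp

end Rotation

section GaussianRank

variable {ι κ m : Type*} [Fintype ι] [Fintype κ] [Fintype m]

theorem lintegral_one_sub_gaussianBallMass_wishart_le [DecidableEq κ] [Nonempty κ] {p : ℕ}
    (hm : Fintype.card m = Fintype.card κ + p) {V : Matrix ι κ ℂ} (hV : Vᴴ * V = 1) {X : ℝ}
    (hX : 0 < X) :
    ∫⁻ H, ENNReal.ofReal (1 - gaussianBallMass X (wishart V (of H))) ∂gaussianRows m ι ≤
      ENNReal.ofReal (escapeBound (Fintype.card κ) p X) := by
  obtain ⟨hint, hval⟩ :=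
    integrable_and_integral_gaussianBallMass_wishart (m := m) hV (by omega) X
  have hint' : Integrable (fun H => 1 - gaussianBallMass X (wishart V (of H)))
      (gaussianRows m ι) := (integrable_const 1).sub hint
  rw [← ofReal_integral_eq_lintegral_ofReal hint' (.of_forall fun H =>
      sub_nonneg.mpr (gaussianBallMass_wishart_le_one hX.le V (of H))),
    integral_sub (integrable_const 1) hint, hval, hm]
  simpa using ENNReal.ofReal_le_ofReal (one_sub_integral_wishartDensity_le_escapeBound hV p hX)

theorem tendsto_escapeBound_zero (k : ℕ) :
    Filter.Tendsto (escapeBound k 0) Filter.atTop (nhds 0) := by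
  unfold escapeBound
  have hinv : Filter.Tendsto (fun X : ℝ => 1 + 1 / X) Filter.atTop (nhds (1 + 0)) :=
    (tendsto_const_nhds.div_atTop Filter.tendsto_id).const_add 1
  have hpow : Filter.Tendsto (fun X : ℝ => (1 + 2 * X) ^ (-(((0 : ℕ) + 1 : ℝ) / 2)))
      Filter.atTop (nhds 0) :=
    (tendsto_rpow_neg_atTop (by norm_num)).comp
      (Filter.tendsto_atTop_add_const_left _ _ (Filter.tendsto_id.const_mul_atTop two_pos))
  simpa using (hinv.mul_const _).mul ((hpow.mul_const _).div_const 2)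

theorem det_wishart_eq_zero [DecidableEq m] (V : Matrix ι m ℂ)
    {H : Matrix m ι ℝ} (hH : ¬IsUnit (H * Hᵀ).det) :
    (wishart V H).det = 0 := by
  rw [isUnit_iff_ne_zero, not_not, ← exists_mulVec_eq_zero_iff] at hH
  obtain ⟨x, hx, hHx⟩ := hH
  have hx0 : x ᵥ* H = 0 := by
    rw [← mulVec_transpose]
    exact (self_mul_conjTranspose_mulVec_eq_zero H x).mp hHx
  have hdet : (H.map Complex.ofReal * V).det = 0 := by
    refine exists_vecMul_eq_zero_iff.mp ⟨Complex.ofReal ∘ x, fun h => hx ?_, ?_⟩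
    · ext i
      simpa only [Function.comp_apply, Pi.zero_apply, Complex.ofReal_eq_zero] using congrFun h i
    · have hxH : (Complex.ofReal ∘ x) ᵥ* H.map Complex.ofReal = 0 := funext fun i => by
        refine (RingHom.map_vecMul Complex.ofRealHom H x i).symm.trans ?_
        rw [hx0, Pi.zero_apply, map_zero, Pi.zero_apply]
      rw [← vecMul_vecMul, hxH, zero_vecMul]
  rw [wishart, det_mul, hdet, mul_zero]

theorem isUnit_det_mul_transpose_ae [DecidableEq m] (f : m ↪ ι) :
    ∀ᵐ H ∂gaussianRows m ι, IsUnit (of H * (of H)ᵀ).det := by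
  classical
  cases isEmpty_or_nonempty m
  · simp
  set J : Matrix ι m ℝ := ((1 : Matrix ι ι ℝ).submatrix f id)ᵀ
  set V : Matrix ι m ℂ := J.map Complex.ofReal
  have hV : Vᴴ * V = 1 := by
    rw [conjTranspose_map_ofReal, ← map_mul_ofReal, transpose_transpose,
      submatrix_one_mul_transpose, map_one_ofReal]
  set S : Set (m → ι → ℝ) := {H | ¬IsUnit (of H * (of H)ᵀ).det}
  -- A singular Gram matrix makes the Gaussian ball mass vanish at every radius.
  have hmass : ∀ X, ∀ H ∈ S, 1 ≤ ENNReal.ofReal (1 - gaussianBallMass X (wishart V (of H))) :=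
    fun X H hH => by simp [gaussianBallMass, det_wishart_eq_zero V hH]
  have hbound : ∀ X > 0, gaussianRows m ι S ≤ ENNReal.ofReal (escapeBound (Fintype.card m) 0 X) :=
    fun X hX => calc
      gaussianRows m ι S ≤ gaussianRows m ι
          {H | 1 ≤ ENNReal.ofReal (1 - gaussianBallMass X (wishart V (of H)))} :=
        measure_mono (hmass X)
      _ ≤ ∫⁻ H, ENNReal.ofReal (1 - gaussianBallMass X (wishart V (of H))) ∂gaussianRows m ι := by
        simpa only [one_mul] using mul_meas_ge_le_lintegral
          ((measurable_gaussianBallMass X (continuous_wishart V)).const_sub 1).ennreal_ofReal 1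
      _ ≤ _ := lintegral_one_sub_gaussianBallMass_wishart_le rfl hV hX
  have hlim : Filter.Tendsto (fun X => ENNReal.ofReal (escapeBound (Fintype.card m) 0 X))
      Filter.atTop (nhds 0) := by
    simpa only [ENNReal.ofReal_zero] using
      ENNReal.tendsto_ofReal (tendsto_escapeBound_zero (Fintype.card m))
  exact le_antisymm (ge_of_tendsto hlim ((Filter.eventually_gt_atTop 0).mono hbound)) bot_le

end GaussianRank

section GaussianNearMiss

variable {ι κ m : Type*} [Fintype ι] [Fintype κ] [Fintype m]

theorem measurePreserving_mul_gaussianRows [DecidableEq ι] {O : Matrix ι ι ℝ}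
    (hO : O ∈ orthogonalGroup ι ℝ) :
    MeasurePreserving (fun H : m → ι → ℝ => of.symm (of H * O)) (gaussianRows m ι)
      (gaussianRows m ι) := by
  have hrows : (fun H : m → ι → ℝ => of.symm (of H * O)) = fun H i => Oᵀ *ᵥ H i := by
    funext H i
    exact (mulVec_transpose O (H i)).symm
  rw [hrows]
  exact measurePreserving_pi _ _ fun _ =>
    measurePreserving_mulVec_stdGaussianPi (Unitary.star_mem hO)

theorem lintegral_gaussianRows_eq_lintegral_orthogonalHaar [DecidableEq ι]
    {φ : Matrix m ι ℝ → ℝ≥0∞}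
    (hφ : Measurable fun H : m → ι → ℝ => φ (of H)) :
    ∫⁻ H, φ (of H) ∂gaussianRows m ι =
      ∫⁻ H, ∫⁻ O, φ (of H * (O : Matrix ι ι ℝ)) ∂orthogonalHaar ι ∂gaussianRows m ι := by
  have hmul : Continuous fun q : (m → ι → ℝ) × orthogonalGroup ι ℝ =>
      of.symm (of q.1 * (q.2 : Matrix ι ι ℝ)) := by
    have : Continuous fun q : (m → ι → ℝ) × orthogonalGroup ι ℝ => (of q.1 : Matrix m ι ℝ) :=
      continuous_fst
    have : Continuous fun q : (m → ι → ℝ) × orthogonalGroup ι ℝ =>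
      of q.1 * (q.2 : Matrix ι ι ℝ) := by fun_prop
    exact this
  have hinner : ∀ O : orthogonalGroup ι ℝ,
      ∫⁻ H, φ (of H * (O : Matrix ι ι ℝ)) ∂gaussianRows m ι = ∫⁻ H, φ (of H) ∂gaussianRows m ι :=
    fun O => (measurePreserving_mul_gaussianRows O.2).lintegral_comp hφ
  have hswap := lintegral_lintegral_swap (μ := gaussianRows m ι) (ν := orthogonalHaar ι)
    (f := fun H O => φ (of H * (O : Matrix ι ι ℝ))) (hφ.comp hmul.measurable).aemeasurable
  simp only [hswap, hinner, lintegral_const, measure_univ, mul_one]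

theorem gaussianRows_nearlyMisses_eq [DecidableEq ι] [DecidableEq m] (f : m ↪ ι) (η : ℝ)
    (V : Matrix ι κ ℂ) {E : Matrix m ι ℝ} (hE : E * Eᵀ = 1) :
    gaussianRows m ι {H | NearlyMisses η V (of H)} =
      orthogonalHaar ι {O | NearlyMisses η V (E * (O : Matrix ι ι ℝ))} := by
  have hclosed : IsClosed {H : m → ι → ℝ | NearlyMisses η V (of H)} :=
    isClosed_nearlyMisses η V
  have hS := hclosed.measurableSet
  rw [← lintegral_indicator_one hS]
  have hind : Measurable ({H : m → ι → ℝ | NearlyMisses η V (of H)}.indicator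
      (1 : (m → ι → ℝ) → ℝ≥0∞)) := measurable_one.indicator hS
  calc _ = ∫⁻ H, ∫⁻ O, {F | NearlyMisses η V F}.indicator 1 (of H * (O : Matrix ι ι ℝ))
        ∂orthogonalHaar ι ∂gaussianRows m ι :=
        lintegral_gaussianRows_eq_lintegral_orthogonalHaar
          (φ := {F : Matrix m ι ℝ | NearlyMisses η V F}.indicator 1) hind
    _ = ∫⁻ _, orthogonalHaar ι {O | NearlyMisses η V (E * (O : Matrix ι ι ℝ))}
        ∂gaussianRows m ι := by
        refine lintegral_congr_ae ((isUnit_det_mul_transpose_ae f).mono fun H hH => ?_)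
        exact (lintegral_indicator_one (measurableSet_setOf_nearlyMisses_mul η V (of H))).trans
          (measure_setOf_nearlyMisses_mul f hE hH)
    _ = _ := by simp only [lintegral_const, measure_univ, mul_one]

theorem integrable_and_integral_sum_sq_gaussianRows :
    Integrable (fun H : m → ι → ℝ => ∑ i, ∑ j, H i j ^ 2) (gaussianRows m ι) ∧
    ∫ H : m → ι → ℝ, ∑ i, ∑ j, H i j ^ 2 ∂gaussianRows m ι =
      Fintype.card m * Fintype.card ι := by
  have hentry : ∀ i j, MeasurePreserving (fun H : m → ι → ℝ => H i j) (gaussianRows m ι)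
      (gaussianReal 0 1) := fun i j =>
    (measurePreserving_eval_stdGaussianPi j).comp (measurePreserving_eval _ i)
  have hsq : Integrable (fun x : ℝ => x ^ 2) (gaussianReal 0 1) :=
    .of_integral_ne_zero (by simp [integral_sq_gaussianReal])
  have hint : ∀ i j, Integrable (fun H : m → ι → ℝ => H i j ^ 2) (gaussianRows m ι) :=
    fun i j => (hentry i j).integrable_comp_of_integrable hsq
  have hval : ∀ i j, ∫ H : m → ι → ℝ, H i j ^ 2 ∂gaussianRows m ι = 1 := fun i j => by
    have h := integral_sq_gaussianReal 1
    rwa [← (hentry i j).map_eq, integral_map (hentry i j).measurable.aemeasurable (by fun_prop)]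
      at h
  have hrow : ∀ i, Integrable (fun H : m → ι → ℝ => ∑ j, H i j ^ 2) (gaussianRows m ι) :=
    fun i => integrable_finsetSum _ fun j _ => hint i j
  refine ⟨integrable_finsetSum _ fun i _ => hrow i, ?_⟩
  simp_rw [integral_finsetSum Finset.univ fun i _ => hrow i,
    integral_finsetSum Finset.univ fun j _ => hint _ j, hval]
  simp

theorem exp_le_lintegral_exp_gaussianRows {t : ℝ} (ht : 0 ≤ t) :
    ENNReal.ofReal (Real.exp (-(t * (Fintype.card m * Fintype.card ι)))) ≤
      ∫⁻ H : m → ι → ℝ, ENNReal.ofReal (Real.exp (-(t * ∑ i, ∑ j, H i j ^ 2)))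
        ∂gaussianRows m ι := by
  obtain ⟨hint, hval⟩ := integrable_and_integral_sum_sq_gaussianRows (m := m) (ι := ι)
  have hexp : Integrable (fun H : m → ι → ℝ => Real.exp (-(t * ∑ i, ∑ j, H i j ^ 2)))
      (gaussianRows m ι) := by
    refine .mono' (integrable_const (1 : ℝ)) (Continuous.aestronglyMeasurable (by fun_prop))
      (.of_forall fun H => ?_)
    rw [Real.norm_eq_abs, Real.abs_exp, Real.exp_le_one_iff, neg_nonpos]
    positivity
  rw [← ofReal_integral_eq_lintegral_ofReal hexp (.of_forall fun H => (Real.exp_pos _).le),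
    ← hval, ← integral_const_mul, ← integral_neg]
  exact ENNReal.ofReal_le_ofReal (convexOn_exp.map_integral_le Real.continuousOn_exp isClosed_univ
    (.of_forall fun _ => Set.mem_univ _) (hint.const_mul t).neg hexp)

variable [DecidableEq κ]

theorem exp_mul_gaussianRows_nearlyMisses_le [AddGroup m] [Nonempty κ] (f : m ↪ ι) {X η : ℝ}
    (hX : 0 ≤ X) (hη : 0 ≤ η) (V : Matrix ι κ ℂ) :
    ENNReal.ofReal (Real.exp (-(X * η * Fintype.card ι))) *
      gaussianRows m ι {H | NearlyMisses η V (of H)} ≤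
    ∫⁻ H, ENNReal.ofReal (1 - gaussianBallMass X (wishart V (of H))) ∂gaussianRows m ι := by
  classical
  have hE := submatrix_one_mul_transpose (ι := ι) f
  rw [gaussianRows_nearlyMisses_eq f η V hE, lintegral_gaussianRows_eq_lintegral_orthogonalHaar
    (φ := fun H => ENNReal.ofReal (1 - gaussianBallMass X (wishart V H)))
    ((measurable_gaussianBallMass X (continuous_wishart V)).const_sub 1).ennreal_ofReal]
  set ϖ := orthogonalHaar ι _
  calc _ ≤ (∫⁻ H : m → ι → ℝ, ENNReal.ofReal (Real.exp
          (-(X * η / Fintype.card m * ∑ i, ∑ j, H i j ^ 2))) ∂gaussianRows m ι) * ϖ := by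
        gcongr
        have hjensen := exp_le_lintegral_exp_gaussianRows (m := m) (ι := ι)
          (t := X * η / Fintype.card m) (by positivity)
        rwa [← mul_assoc, div_mul_cancel₀ _ (Nat.cast_ne_zero.mpr Fintype.card_ne_zero)] at hjensen
    _ = ∫⁻ H : m → ι → ℝ, ENNReal.ofReal (Real.exp
          (-(X * η / Fintype.card m * ∑ i, ∑ j, H i j ^ 2))) * ϖ ∂gaussianRows m ι :=
        (lintegral_mul_const _ (by fun_prop)).symm
    _ ≤ _ := by
        refine lintegral_mono_ae ((isUnit_det_mul_transpose_ae f).mono fun H hH => ?_)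
        simpa only [div_mul_eq_mul_div, of_apply] using
          exp_mul_measure_nearlyMisses_le f hX hη hE hH

theorem gaussianRows_nearlyMisses_le [AddGroup m] [Nonempty κ] (f : m ↪ ι) {p : ℕ}
    (hm : Fintype.card m = Fintype.card κ + p) {X η : ℝ} (hX : 0 < X) (hη : 0 ≤ η)
    {V : Matrix ι κ ℂ} (hV : Vᴴ * V = 1) :
    gaussianRows m ι {H | NearlyMisses η V (of H)} ≤ ENNReal.ofReal
      (Real.exp (X * η * Fintype.card ι) * escapeBound (Fintype.card κ) p X) := by
  have hlow := (exp_mul_gaussianRows_nearlyMisses_le f hX.le hη V).trans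
    (lintegral_one_sub_gaussianBallMass_wishart_le hm hV hX)
  rw [ENNReal.ofReal_mul (Real.exp_pos _).le]
  refine le_trans (le_of_eq ?_) (mul_le_mul_right hlow _)
  rw [← mul_assoc, ← ENNReal.ofReal_mul (Real.exp_pos _).le, ← Real.exp_add]
  simp

end GaussianNearMiss

section Gamma

theorem Gamma_add_half_le {x : ℝ} (hx : 0 < x) :
    Real.Gamma (x + 1 / 2) ≤ √x * Real.Gamma x := by
  have h := Real.Gamma_mul_add_mul_le_rpow_Gamma_mul_rpow_Gamma hx (by linarith : 0 < x + 1)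
    one_half_pos one_half_pos (by norm_num)
  rw [show 1 / 2 * x + 1 / 2 * (x + 1) = x + 1 / 2 by ring, Real.Gamma_add_one hx.ne',
    ← Real.sqrt_eq_rpow, ← Real.sqrt_eq_rpow, Real.sqrt_mul hx.le] at h
  calc Real.Gamma (x + 1 / 2) ≤ √(Real.Gamma x) * (√x * √(Real.Gamma x)) := h
    _ = √x * (√(Real.Gamma x) * √(Real.Gamma x)) := by ring
    _ = √x * Real.Gamma x := by rw [Real.mul_self_sqrt (Real.Gamma_pos_of_pos hx).le]

theorem Gamma_add_half_nat_le {x : ℝ} (hx : 0 < x) (p : ℕ) :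
    Real.Gamma (x + (p + 1) / 2) ≤ (x + p / 2) ^ (((p : ℝ) + 1) / 2) * Real.Gamma x := by
  have := Real.Gamma_pos_of_pos hx
  induction p using Nat.twoStepInduction with
  | zero => simpa [Real.sqrt_eq_rpow] using Gamma_add_half_le hx
  | one =>
    norm_num
    rw [Real.Gamma_add_one hx.ne']
    gcongr
    linarith
  | more p ih _ =>
    push_cast
    have hpos : 0 < x + ((p : ℝ) + 1) / 2 := by positivity
    rw [show x + ((p : ℝ) + 2 + 1) / 2 = x + ((p : ℝ) + 1) / 2 + 1 by ring,
      Real.Gamma_add_one hpos.ne', show ((p : ℝ) + 2 + 1) / 2 = ((p : ℝ) + 1) / 2 + 1 by ring,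
      Real.rpow_add (by positivity), Real.rpow_one]
    calc (x + ((p : ℝ) + 1) / 2) * Real.Gamma (x + ((p : ℝ) + 1) / 2)
        ≤ (x + ((p : ℝ) + 2) / 2) * ((x + p / 2) ^ (((p : ℝ) + 1) / 2) * Real.Gamma x) := by
          gcongr
          linarith
      _ ≤ (x + ((p : ℝ) + 2) / 2) * ((x + (p + 2) / 2) ^ (((p : ℝ) + 1) / 2) * Real.Gamma x) := by
          gcongr
          linarith
      _ = (x + (p + 2) / 2) ^ (((p : ℝ) + 1) / 2) * (x + (p + 2) / 2) * Real.Gamma x := by ring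

theorem Gamma_eq_two_rpow_mul (x : ℝ) :
    Real.Gamma x =
      2 ^ (x - 1) / √Real.pi * (Real.Gamma (x / 2) * Real.Gamma (x / 2 + 1 / 2)) := by
  have := Real.sqrt_pos.mpr Real.pi_pos
  rw [Real.Gamma_mul_Gamma_add_half, mul_div_cancel₀ x two_ne_zero, ← neg_sub x 1,
    Real.rpow_neg zero_le_two]
  field_simp

theorem factorial_eq_two_pow_mul_Gamma (p : ℕ) :
    (p.factorial : ℝ) =
      2 ^ p / √Real.pi * (Real.Gamma (((p : ℝ) + 1) / 2) * Real.Gamma ((p : ℝ) / 2 + 1)) := by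
  rw [← Real.Gamma_nat_eq_factorial, Gamma_eq_two_rpow_mul, add_sub_cancel_right,
    Real.rpow_natCast, show ((p : ℝ) + 1) / 2 + 1 / 2 = p / 2 + 1 by ring]

theorem pi_mul_pow_le_sq_Gamma (p : ℕ) :
    Real.pi * p * (p / (2 * Real.exp 1)) ^ p ≤ Real.Gamma ((p : ℝ) / 2 + 1) ^ 2 := by
  rcases p.eq_zero_or_pos with rfl | hp
  · simp
  have hhalf : √((p : ℝ) / 2) * Real.Gamma (((p : ℝ) + 1) / 2) ≤ Real.Gamma ((p : ℝ) / 2 + 1) := by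
    have h := Gamma_add_half_le (x := (p : ℝ) / 2) (by positivity)
    rw [← add_div] at h
    calc √((p : ℝ) / 2) * Real.Gamma (((p : ℝ) + 1) / 2)
        ≤ √((p : ℝ) / 2) * (√((p : ℝ) / 2) * Real.Gamma (p / 2)) := by gcongr
      _ = Real.Gamma ((p : ℝ) / 2 + 1) := by
        rw [← mul_assoc, Real.mul_self_sqrt (by positivity), Real.Gamma_add_one (by positivity)]
  have hsqrt : √((p : ℝ) / 2) * √(2 * Real.pi * p) * √Real.pi = Real.pi * p := by
    rw [← Real.sqrt_mul (by positivity), ← Real.sqrt_mul (by positivity),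
      show (p : ℝ) / 2 * (2 * Real.pi * p) * Real.pi = (Real.pi * p) ^ 2 by ring,
      Real.sqrt_sq (by positivity)]
  have : 0 ≤ Real.Gamma ((p : ℝ) / 2 + 1) := (Real.Gamma_pos_of_pos (by positivity)).le
  calc Real.pi * p * (p / (2 * Real.exp 1)) ^ p
      = √((p : ℝ) / 2) *
          ((√(2 * Real.pi * p) * (p / Real.exp 1) ^ p) / 2 ^ p * √Real.pi) := by
        rw [← hsqrt, mul_comm 2 (Real.exp 1), ← div_div, div_pow _ (2 : ℝ)]
        ring
    _ ≤ √((p : ℝ) / 2) * (p.factorial / 2 ^ p * √Real.pi) := by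
        gcongr
        exact Stirling.le_factorial_stirling p
    _ = √((p : ℝ) / 2) * Real.Gamma (((p : ℝ) + 1) / 2) * Real.Gamma ((p : ℝ) / 2 + 1) := by
        rw [factorial_eq_two_pow_mul_Gamma]
        field_simp
    _ ≤ Real.Gamma ((p : ℝ) / 2 + 1) * Real.Gamma ((p : ℝ) / 2 + 1) := by gcongr
    _ = Real.Gamma ((p : ℝ) / 2 + 1) ^ 2 := (sq _).symm

theorem succ_pow_le_exp_one_mul_pow {p : ℕ} (hp : 0 < p) :
    ((p : ℝ) + 1) ^ p ≤ Real.exp 1 * (p : ℝ) ^ p := by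
  have hp' : (0 : ℝ) < p := Nat.cast_pos.mpr hp
  calc ((p : ℝ) + 1) ^ p = (1 / (p : ℝ) + 1) ^ p * (p : ℝ) ^ p := by
        rw [← mul_pow]
        congr 1
        field_simp
        ring
    _ ≤ Real.exp (1 / p) ^ p * (p : ℝ) ^ p := by
        gcongr
        exact Real.add_one_le_exp _
    _ = Real.exp 1 * (p : ℝ) ^ p := by rw [← Real.exp_nat_mul, mul_one_div_cancel hp'.ne']

theorem rpow_le_Gamma_half_add_one (p : ℕ) :
    1.14 * ((((p : ℝ) + 1) / 2) / Real.exp 1) ^ (((p : ℝ) + 1) / 2) ≤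
      Real.Gamma ((p : ℝ) / 2 + 1) := by
  have hsq : ((((p : ℝ) + 1) / 2 / Real.exp 1) ^ (((p : ℝ) + 1) / 2)) ^ 2 =
      (((p : ℝ) + 1) / 2 / Real.exp 1) ^ (p + 1) := by
    rw [← Real.rpow_mul_natCast (by positivity), ← Real.rpow_natCast]
    push_cast
    congr 1
    ring
  refine le_of_sq_le_sq ?_ (Real.Gamma_pos_of_pos (by positivity)).le
  rw [mul_pow, hsq]
  rcases p.eq_zero_or_pos with rfl | hp
  · have := Real.exp_one_gt_d9
    norm_num
    rw [div_div, mul_one_div, div_le_one (by positivity)]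
    linarith
  refine le_trans ?_ (pi_mul_pow_le_sq_Gamma p)
  have hp1 : (1 : ℝ) ≤ p := Nat.one_le_cast.mpr hp
  calc (1.14 : ℝ) ^ 2 * (((p : ℝ) + 1) / 2 / Real.exp 1) ^ (p + 1)
      = 1.14 ^ 2 * (((p : ℝ) + 1) / 2) / Real.exp 1 *
          (((p : ℝ) + 1) ^ p / (2 * Real.exp 1) ^ p) := by
        rw [pow_succ, div_div, div_pow]
        ring
    _ ≤ 1.14 ^ 2 * (((p : ℝ) + 1) / 2) / Real.exp 1 *
          (Real.exp 1 * (p : ℝ) ^ p / (2 * Real.exp 1) ^ p) := by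
        gcongr
        exact succ_pow_le_exp_one_mul_pow hp
    _ = 1.14 ^ 2 * (((p : ℝ) + 1) / 2) * (p / (2 * Real.exp 1)) ^ p := by
        rw [div_pow]
        field_simp
    _ ≤ Real.pi * p * (p / (2 * Real.exp 1)) ^ p := by
        refine mul_le_mul_of_nonneg_right ?_ (by positivity)
        nlinarith [Real.pi_gt_three]

end Gamma

section EscapeBound

variable {k : ℕ}

theorem escapeBound_eq (hk : 0 < k) (p : ℕ) (X : ℝ) :
    escapeBound k p X = (1 + 1 / X) * (1 + 2 * X) ^ (-(((p : ℝ) + 1) / 2)) *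
      (√Real.pi / Real.Gamma ((p : ℝ) / 2 + 1) *
        (Real.Gamma ((k : ℝ) / 2 + ((p : ℝ) + 1) / 2) / Real.Gamma ((k : ℝ) / 2))) := by
  have : (0 : ℝ) < k := Nat.cast_pos.mpr hk
  have hdesc : ((k + p).descFactorial k : ℝ) = (k + p).factorial / p.factorial := by
    rw [eq_div_iff (by positivity), mul_comm]
    have := Nat.factorial_mul_descFactorial (Nat.le_add_right k p)
    rw [Nat.add_sub_cancel_left] at this
    exact_mod_cast this
  have hpow : (2 : ℝ) ^ (k + p) = 2 * 2 ^ ((k : ℝ) - 1) * 2 ^ p := by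
    rw [Real.rpow_sub_one two_ne_zero, Real.rpow_natCast, pow_add]
    ring
  have hratio : ((k + p).descFactorial k : ℝ) / Real.Gamma k =
      2 * √Real.pi * (Real.Gamma ((k : ℝ) / 2 + ((p : ℝ) + 1) / 2) *
        Real.Gamma (((k : ℝ) + 1) / 2 + ((p : ℝ) + 1) / 2)) /
      (Real.Gamma (((p : ℝ) + 1) / 2) * Real.Gamma ((p : ℝ) / 2 + 1) *
        (Real.Gamma ((k : ℝ) / 2) * Real.Gamma (((k : ℝ) + 1) / 2))) := by
    rw [hdesc, factorial_eq_two_pow_mul_Gamma, factorial_eq_two_pow_mul_Gamma,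
      Gamma_eq_two_rpow_mul k, hpow, ← add_div (k : ℝ) 1 2]
    push_cast
    rw [show ((k : ℝ) + p + 1) / 2 = k / 2 + (p + 1) / 2 by ring,
      show ((k : ℝ) + p) / 2 + 1 = (k + 1) / 2 + (p + 1) / 2 by ring]
    field_simp
  have := (Real.Gamma_pos_of_pos (by positivity : 0 < ((k : ℝ) + 1) / 2 + ((p : ℝ) + 1) / 2)).ne'
  have := (Real.Gamma_pos_of_pos (by positivity : 0 < ((k : ℝ) + 1) / 2)).ne'
  have := (Real.Gamma_pos_of_pos (by positivity : 0 < ((p : ℝ) + 1) / 2)).ne'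
  rw [escapeBound, hratio]
  field_simp

theorem two_mul_rpow_neg_mul_exp {a p δ : ℝ} (ha : 0 < a) (hp : 0 < p) (hδ : 0 < δ) :
    (2 * (Real.exp 1 ^ 2 * a / (2 * p) * (2 / δ) ^ (2 / p))) ^ (-(p / 2)) *
      (a / 2) ^ (p / 2) * Real.exp (p / 2) = (p / 2 / Real.exp 1) ^ (p / 2) * (δ / 2) := by
  have hfactor : 2 * (Real.exp 1 ^ 2 * a / (2 * p) * (2 / δ) ^ (2 / p)) =
      a / 2 * Real.exp 1 * (p / 2 / Real.exp 1)⁻¹ * (2 / δ) ^ (2 / p) := by field_simp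
  have hlevel : ((2 / δ) ^ (2 / p)) ^ (p / 2) = 2 / δ := by
    rw [← Real.rpow_mul (by positivity), div_mul_div_cancel₀ hp.ne', div_self two_ne_zero,
      Real.rpow_one]
  rw [hfactor, Real.rpow_neg (by positivity), Real.mul_rpow (by positivity) (by positivity),
    Real.mul_rpow (by positivity) (by positivity), Real.mul_rpow (by positivity) (by positivity),
    hlevel, Real.inv_rpow (by positivity), ← Real.exp_one_rpow (p / 2)]
  field_simp

theorem exp_sq_mul_level_ge (hk : 0 < k) (p : ℕ) {δ : ℝ} (hδ0 : 0 < δ) (hδ1 : δ ≤ 1) :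
    3.6 ≤ Real.exp 1 ^ 2 * (k + p) / (2 * (p + 1)) * (2 / δ) ^ (2 / ((p : ℝ) + 1)) := by
  have hk' : (1 : ℝ) ≤ k := Nat.one_le_cast.mpr hk
  have hbase : (3.6 : ℝ) ≤ Real.exp 1 ^ 2 * (k + p) / (2 * (p + 1)) := by
    rw [le_div_iff₀ (by positivity)]
    have hexp : 7.2 ≤ Real.exp 1 ^ 2 := by nlinarith [Real.exp_one_gt_d9]
    nlinarith [(Nat.cast_nonneg p : (0 : ℝ) ≤ p)]
  have hlevel : 1 ≤ (2 / δ) ^ (2 / ((p : ℝ) + 1)) :=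
    Real.one_le_rpow (by rw [le_div_iff₀ hδ0]; linarith) (by positivity)
  nlinarith

theorem exp_mul_escapeBound_le (hk : 0 < k) (p : ℕ) {δ X : ℝ} (hδ0 : 0 < δ) (hδ1 : δ ≤ 1)
    (hX : Real.exp 1 ^ 2 * (k + p) / (2 * (p + 1)) * (2 / δ) ^ (2 / ((p : ℝ) + 1)) ≤ X) :
    Real.exp (((p : ℝ) + 1) / 2) * escapeBound k p X ≤ δ := by
  set r : ℝ := ((p : ℝ) + 1) / 2 with hr
  set X₀ := Real.exp 1 ^ 2 * (k + p) / (2 * (p + 1)) * (2 / δ) ^ (2 / ((p : ℝ) + 1)) with hX₀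
  have hX₀_ge : 3.6 ≤ X₀ := exp_sq_mul_level_ge hk p hδ0 hδ1
  have hX_pos : 0 < X := by linarith
  have hGr : 0 < Real.Gamma ((p : ℝ) / 2 + 1) := Real.Gamma_pos_of_pos (by positivity)
  have hGk : 0 < Real.Gamma ((k : ℝ) / 2) := Real.Gamma_pos_of_pos (by positivity)
  have hinv : 1 + 1 / X ≤ 1.28 := by
    have : 1 / X ≤ 1 / 3.6 := one_div_le_one_div_of_le (by norm_num) (by linarith)
    linarith
  have hpow : (1 + 2 * X) ^ (-r) ≤ (2 * X₀) ^ (-r) :=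
    Real.rpow_le_rpow_of_nonpos (by linarith) (by linarith) (neg_nonpos.mpr (by positivity))
  have hratio : Real.Gamma ((k : ℝ) / 2 + r) / Real.Gamma ((k : ℝ) / 2) ≤
      (((k : ℝ) + p) / 2) ^ r := by
    rw [div_le_iff₀ hGk, hr, add_div (k : ℝ)]
    exact Gamma_add_half_nat_le (by positivity) p
  have hpi : √Real.pi ≤ 1.78 := by
    rw [Real.sqrt_le_left (by norm_num)]
    nlinarith [Real.pi_lt_d2]
  rw [escapeBound_eq hk, ← hr]
  calc Real.exp r * ((1 + 1 / X) * (1 + 2 * X) ^ (-r) * (√Real.pi / Real.Gamma ((p : ℝ) / 2 + 1) *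
        (Real.Gamma ((k : ℝ) / 2 + r) / Real.Gamma ((k : ℝ) / 2))))
      ≤ Real.exp r * (1.28 * (2 * X₀) ^ (-r) * (1.78 / Real.Gamma ((p : ℝ) / 2 + 1) *
        (((k : ℝ) + p) / 2) ^ r)) := by gcongr
    _ = 1.28 * 1.78 / Real.Gamma ((p : ℝ) / 2 + 1) *
        ((2 * X₀) ^ (-r) * (((k : ℝ) + p) / 2) ^ r * Real.exp r) := by ring
    _ = 1.28 * 1.78 / 2 * ((r / Real.exp 1) ^ r) * δ / Real.Gamma ((p : ℝ) / 2 + 1) := by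
        rw [hX₀, hr, two_mul_rpow_neg_mul_exp (by positivity) (by positivity) hδ0]
        ring
    _ ≤ δ := by
        rw [div_le_iff₀ hGr]
        have hstirling := rpow_le_Gamma_half_add_one p
        have : 0 ≤ (r / Real.exp 1) ^ r := by positivity
        nlinarith

theorem le_sq_Cd (k p n₂ : ℕ) {δ : ℝ} (hδ0 : 0 < δ) :
    Real.exp 1 ^ 2 * (k + p) / (p + 1) ^ 2 * (2 / δ) ^ (2 / ((p : ℝ) + 1)) * (k + n₂) ≤
      Cd k p n₂ δ ^ 2 := by
  have hsq : (k + n₂ : ℝ) ≤ (√(n₂ : ℝ) + √((k : ℝ) + p) + √(2 * Real.log (2 / δ))) ^ 2 := by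
    calc (k + n₂ : ℝ) ≤ √(n₂ : ℝ) ^ 2 + √((k : ℝ) + p) ^ 2 := by
          rw [Real.sq_sqrt (by positivity), Real.sq_sqrt (by positivity)]
          linarith [(Nat.cast_nonneg p : (0 : ℝ) ≤ p)]
      _ ≤ (√(n₂ : ℝ) + √((k : ℝ) + p)) ^ 2 := by
          rw [add_sq']
          exact le_add_of_nonneg_right (by positivity)
      _ ≤ (√(n₂ : ℝ) + √((k : ℝ) + p) + √(2 * Real.log (2 / δ))) ^ 2 := by
          exact pow_le_pow_left₀ (by positivity) (le_add_of_nonneg_right (Real.sqrt_nonneg _)) 2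
  have hlevel : ((2 / δ) ^ ((1 : ℝ) / ((p : ℝ) + 1))) ^ 2 = (2 / δ) ^ (2 / ((p : ℝ) + 1)) := by
    rw [← Real.rpow_mul_natCast (by positivity), Nat.cast_ofNat, one_div_mul_eq_div]
  rw [Cd, mul_pow, mul_pow, div_pow, mul_pow, Real.sq_sqrt (by positivity), hlevel]
  gcongr

theorem exists_exp_mul_escapeBound_le (hk : 0 < k) (p n₂ : ℕ) {δ : ℝ} (hδ0 : 0 < δ)
    (hδ1 : δ ≤ 1) :
    ∃ X > 0, Real.exp (X * (1 + Cd k p n₂ δ ^ 2)⁻¹ * (k + n₂)) * escapeBound k p X ≤ δ := by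
  have hn : (0 : ℝ) < k + n₂ := by positivity
  set τ := Cd k p n₂ δ
  have : 0 < 1 + τ ^ 2 := by positivity
  -- The scale that makes the exponent equal to `(p + 1) / 2`.
  refine ⟨((p : ℝ) + 1) / 2 * (1 + τ ^ 2) / (k + n₂), by positivity, ?_⟩
  rw [show ((p : ℝ) + 1) / 2 * (1 + τ ^ 2) / (k + n₂) * (1 + τ ^ 2)⁻¹ * (k + n₂) =
    ((p : ℝ) + 1) / 2 by field_simp]
  refine exp_mul_escapeBound_le hk p hδ0 hδ1 ?_
  rw [le_div_iff₀ hn]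
  calc Real.exp 1 ^ 2 * (k + p) / (2 * (p + 1)) * (2 / δ) ^ (2 / ((p : ℝ) + 1)) * (k + n₂)
      = ((p : ℝ) + 1) / 2 * (Real.exp 1 ^ 2 * (k + p) / (p + 1) ^ 2 *
          (2 / δ) ^ (2 / ((p : ℝ) + 1)) * (k + n₂)) := by field_simp
    _ ≤ ((p : ℝ) + 1) / 2 * (1 + τ ^ 2) := by
        gcongr
        exact (le_sq_Cd k p n₂ hδ0).trans (le_add_of_nonneg_left zero_le_one)

end EscapeBound

section CourantFischer

theorem lt_countP_of_lt_getElem {l : List ℝ} (hl : l.Pairwise (· ≥ ·)) {i : ℕ} (hi : i < l.length)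
    {t : ℝ} (ht : t < l[i]) : i < l.countP (fun x => t < x) := by
  have hall : (l.take (i + 1)).countP (fun x => t < x) = (l.take (i + 1)).length := by
    rw [List.countP_eq_length]
    intro a ha
    obtain ⟨j, hj, rfl⟩ := List.getElem_of_mem ha
    rw [List.length_take] at hj
    rw [List.getElem_take]
    have hji : j ≤ i := by omega
    rcases hji.eq_or_lt with rfl | hlt
    · simpa using ht
    · simpa using ht.trans_le (List.pairwise_iff_getElem.mp hl j i (by omega) hi hlt)
  have hle := (List.take_sublist (i + 1) l).countP_le (p := fun x => t < x)
  rw [hall, List.length_take] at hle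
  omega

theorem lt_card_of_lt_getD_insertionSort {k : ℕ} (f : Fin k → ℝ) {i : ℕ} {t : ℝ} (ht0 : 0 ≤ t)
    (ht : t < (List.insertionSort (· ≥ ·) (List.ofFn f)).getD i 0) :
    i < Fintype.card {a // t < f a} := by
  have hi : i < (List.insertionSort (· ≥ ·) (List.ofFn f)).length := by
    by_contra h
    rw [List.getD_eq_default _ _ (not_lt.mp h)] at ht
    exact ht.not_ge ht0
  rw [List.getD_eq_getElem _ _ hi] at ht
  have h := lt_countP_of_lt_getElem (List.pairwise_insertionSort _ _) hi ht
  rw [(List.perm_insertionSort _ _).countP_eq, List.ofFn_eq_map, List.countP_map,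
    List.countP_eq_length_filter] at h
  rw [Fintype.card_subtype]
  exact h

theorem exists_mem_ne_zero_mulVec_eq_zero {ι κ : Type*} [Fintype ι] [Fintype κ]
    (M : Matrix ι κ ℂ) (S : Submodule ℂ (κ → ℂ)) (p : ι → Prop) [DecidablePred p]
    (h : Fintype.card {i // p i} < Module.finrank ℂ S) :
    ∃ w ∈ S, w ≠ 0 ∧ ∀ i, p i → (M *ᵥ w) i = 0 := by
  let F : S →ₗ[ℂ] ({i // p i} → ℂ) :=
    (LinearMap.funLeft ℂ ℂ Subtype.val ∘ₗ M.mulVecLin) ∘ₗ S.subtype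
  obtain ⟨w, hw, hw0⟩ := Submodule.exists_mem_ne_zero_of_ne_bot
    (F.ker_ne_bot_of_finrank_lt (by rwa [Module.finrank_pi]))
  exact ⟨w, w.2, by simpa using hw0, fun i hi => congrFun (LinearMap.mem_ker.mp hw) ⟨i, hi⟩⟩

section Quadratic

variable {ι κ : Type*} [Fintype ι] [Fintype κ] [DecidableEq κ]

theorem star_dotProduct_mulVec_eq_sum_eigenvalues {A : Matrix κ κ ℂ} (hA : A.IsHermitian)
    (w : κ → ℂ) : star w ⬝ᵥ (A *ᵥ w) =
      ∑ i, (hA.eigenvalues i : ℂ) * ‖(hA.eigenvectorUnitary.1ᴴ *ᵥ w) i‖ ^ 2 := by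
  set D : Matrix κ κ ℂ := diagonal fun i => (hA.eigenvalues i : ℂ)
  set U := hA.eigenvectorUnitary.1
  have hspec : A = U * D * Uᴴ := by
    conv_lhs => rw [hA.spectral_theorem, Unitary.conjStarAlgAut_apply]
    rfl
  calc star w ⬝ᵥ (A *ᵥ w) = star w ⬝ᵥ ((U * D * Uᴴ) *ᵥ w) := by rw [← hspec]
    _ = star (Uᴴ *ᵥ w) ⬝ᵥ (D *ᵥ (Uᴴ *ᵥ w)) := by
      rw [star_mulVec, conjTranspose_conjTranspose, ← dotProduct_mulVec, mulVec_mulVec,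
        mulVec_mulVec, Matrix.mul_assoc]
    _ = _ := Finset.sum_congr rfl fun i _ => by
      rw [mulVec_diagonal, ← Complex.conj_mul']
      exact mul_left_comm _ _ _

theorem sqNorm_mulVec_eq_sum_eigenvalues (M : Matrix ι κ ℂ) (w : κ → ℂ) :
    sqNorm (M *ᵥ w) = ∑ i, (isHermitian_conjTranspose_mul_self M).eigenvalues i *
      ‖((isHermitian_conjTranspose_mul_self M).eigenvectorUnitary.1ᴴ *ᵥ w) i‖ ^ 2 := by
  have h := star_dotProduct_mulVec_eq_sum_eigenvalues (isHermitian_conjTranspose_mul_self M) w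
  rw [← mulVec_mulVec, dotProduct_mulVec, ← star_mulVec, star_dotProduct_self_eq_sqNorm] at h
  exact_mod_cast h

theorem sq_mul_sqNorm_lt_sqNorm_mulVec {M : Matrix ι κ ℂ} {t : ℝ} (ht : 0 ≤ t) {w : κ → ℂ}
    (hw0 : w ≠ 0) (hw : ∀ i, √((isHermitian_conjTranspose_mul_self M).eigenvalues i) ≤ t →
      ((isHermitian_conjTranspose_mul_self M).eigenvectorUnitary.1ᴴ *ᵥ w) i = 0) :
    t ^ 2 * sqNorm w < sqNorm (M *ᵥ w) := by
  rw [sqNorm_mulVec_eq_sum_eigenvalues]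
  set hM := isHermitian_conjTranspose_mul_self M
  set U := hM.eigenvectorUnitary.1
  have hUU : Uᴴᴴ * Uᴴ = 1 := by
    rw [conjTranspose_conjTranspose]
    exact Unitary.coe_mul_star_self hM.eigenvectorUnitary
  set c := Uᴴ *ᵥ w
  have hlt : ∀ i, c i ≠ 0 → t ^ 2 < hM.eigenvalues i := fun i hi =>
    (Real.lt_sqrt ht).mp (not_le.mp fun h => hi (hw i h))
  have hc : c ≠ 0 := fun h => hw0 <| by
    rw [← one_mulVec w, ← hUU, ← mulVec_mulVec, show Uᴴ *ᵥ w = 0 from h, mulVec_zero]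
  obtain ⟨i₀, hi₀⟩ := Function.ne_iff.mp hc
  rw [← sqNorm_mulVec_of_isometry hUU, sqNorm, Finset.mul_sum]
  refine Finset.sum_lt_sum (fun i _ => ?_) ⟨i₀, Finset.mem_univ _,
    mul_lt_mul_of_pos_right (hlt i₀ hi₀) (pow_pos (norm_pos_iff.mpr hi₀) 2)⟩
  by_cases hi : c i = 0
  · simp [c, hi]
  · exact mul_le_mul_of_nonneg_right (hlt i hi).le (sq_nonneg _)

end Quadratic

theorem sval_le_of_sqNorm_mulVec_le {a k i : ℕ} {M : Matrix (Fin a) (Fin k) ℂ} {t : ℝ}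
    (ht : 0 ≤ t) (S : Submodule ℂ (Fin k → ℂ)) (hS : k ≤ i + Module.finrank ℂ S)
    (h : ∀ w ∈ S, sqNorm (M *ᵥ w) ≤ t ^ 2 * sqNorm w) : sval M i ≤ t := by
  by_contra! hlt
  set hM := isHermitian_conjTranspose_mul_self M
  rw [sval, List.map_ofFn] at hlt
  have hcard : i < Fintype.card {a // t < √(hM.eigenvalues a)} :=
    lt_card_of_lt_getD_insertionSort _ ht hlt
  have hcompl : Fintype.card {a // √(hM.eigenvalues a) ≤ t} < Module.finrank ℂ S := by
    have := Fintype.card_subtype_compl fun a => t < √(hM.eigenvalues a)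
    have hle := Fintype.card_subtype_le fun a => t < √(hM.eigenvalues a)
    simp only [not_lt, Fintype.card_fin] at this hle
    omega
  obtain ⟨w, hwS, hw0, hw⟩ := exists_mem_ne_zero_mulVec_eq_zero
    hM.eigenvectorUnitary.1ᴴ S _ hcompl
  exact (h w hwS).not_gt (sq_mul_sqNorm_lt_sqNorm_mulVec ht hw0 hw)

theorem sval_le_of_forall_supported {a k : ℕ} {M : Matrix (Fin a) (Fin k) ℂ} {t : ℝ} (ht : 0 ≤ t)
    (j : Fin k)
    (h : ∀ w : Fin k → ℂ, (∀ i, j < i → w i = 0) → sqNorm (M *ᵥ w) ≤ t ^ 2 * sqNorm w) :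
    sval M (k - 1 - j) ≤ t := by
  let F : (Fin k → ℂ) →ₗ[ℂ] ({i // j < i} → ℂ) := LinearMap.funLeft ℂ ℂ Subtype.val
  have hcard : Fintype.card {i // j < i} = k - 1 - j := by
    rw [Fintype.card_subtype, Finset.filter_lt_eq_Ioi, Fin.card_Ioi]
  refine sval_le_of_sqNorm_mulVec_le ht (LinearMap.ker F) ?_ fun w hw => h w fun i hi =>
    congrFun (LinearMap.mem_ker.mp hw) ⟨i, hi⟩
  have hrank := LinearMap.finrank_range_add_finrank_ker F
  have hrange := Submodule.finrank_le (LinearMap.range F)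
  simp only [Module.finrank_pi, Fintype.card_fin, hcard] at hrank hrange
  omega

end CourantFischer

section Adjoint

variable {𝕜 E F : Type*} [RCLike 𝕜] [NormedAddCommGroup E] [InnerProductSpace 𝕜 E]
  [NormedAddCommGroup F] [InnerProductSpace 𝕜 F] {c : ℝ}

theorem mul_norm_le_of_norm_eq_one {S : E →ₗ[𝕜] F} (h : ∀ v, ‖v‖ = 1 → c ≤ ‖S v‖) (v : E) :
    c * ‖v‖ ≤ ‖S v‖ := by
  rcases eq_or_ne v 0 with rfl | hv
  · simp
  · have hunit := h _ (norm_smul_inv_norm (𝕜 := 𝕜) hv)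
    rwa [map_smul, norm_smul, norm_inv, RCLike.norm_ofReal, abs_norm, ← div_eq_inv_mul,
      le_div_iff₀ (norm_pos_iff.mpr hv)] at hunit

variable [FiniteDimensional 𝕜 E]

theorem exists_adjoint_comp_eq [FiniteDimensional 𝕜 F] {S : E →ₗ[𝕜] F} (hc : 0 < c)
    (hS : ∀ v, c * ‖v‖ ≤ ‖S v‖) (x : E) :
    ∃ v, LinearMap.adjoint S (S v) = x ∧ c * ‖S v‖ ≤ ‖x‖ := by
  have hbound : ∀ v, ‖S v‖ ^ 2 ≤ ‖v‖ * ‖LinearMap.adjoint S (S v)‖ := fun v => by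
    have h := norm_inner_le_norm (𝕜 := 𝕜) v (LinearMap.adjoint S (S v))
    rwa [LinearMap.adjoint_inner_right, inner_self_eq_norm_sq_to_K, norm_pow, RCLike.norm_ofReal,
      abs_norm] at h
  have hle : ∀ v, c * ‖S v‖ ≤ ‖LinearMap.adjoint S (S v)‖ := fun v => by
    rcases (norm_nonneg (S v)).eq_or_lt with h0 | hpos
    · simp [← h0]
    · refine le_of_mul_le_mul_right ?_ hpos
      calc c * ‖S v‖ * ‖S v‖ = c * ‖S v‖ ^ 2 := by ring
        _ ≤ c * (‖v‖ * ‖LinearMap.adjoint S (S v)‖) := by gcongr; exact hbound v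
        _ = c * ‖v‖ * ‖LinearMap.adjoint S (S v)‖ := by ring
        _ ≤ ‖S v‖ * ‖LinearMap.adjoint S (S v)‖ := by gcongr; exact hS v
        _ = _ := mul_comm _ _
  have hinj : Function.Injective (LinearMap.adjoint S ∘ₗ S) := by
    refine (injective_iff_map_eq_zero _).mpr fun v hv => norm_le_zero_iff.mp ?_
    have h := hle v
    rw [show LinearMap.adjoint S (S v) = 0 from hv, norm_zero] at h
    have hSv : ‖S v‖ ≤ 0 := nonpos_of_mul_nonpos_right h hc
    exact nonpos_of_mul_nonpos_right ((hS v).trans hSv) hc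
  obtain ⟨v, rfl⟩ := LinearMap.injective_iff_surjective.mp hinj x
  exact ⟨v, rfl, hle v⟩

theorem exists_mem_adjoint_eq [FiniteDimensional 𝕜 F] (T : E →ₗ[𝕜] F) (K : Submodule 𝕜 F)
    (hc : 0 < c) (hT : ∀ v, ‖v‖ = 1 → ∃ f ∈ K, c * ‖f‖ < ‖inner 𝕜 (T v) f‖) (x : E) :
    ∃ f ∈ K, LinearMap.adjoint T f = x ∧ c * ‖f‖ ≤ ‖x‖ := by
  let P : E →ₗ[𝕜] K := K.orthogonalProjectionOnto.toLinearMap ∘ₗ T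
  have hP : ∀ v (f : K), inner 𝕜 (P v) f = inner 𝕜 (T v) (f : F) := fun v f =>
    K.inner_orthogonalProjectionOnto_eq_of_mem_right f (T v)
  have hadj : ∀ f : K, LinearMap.adjoint P f = LinearMap.adjoint T (f : F) := fun f =>
    ext_inner_left 𝕜 fun v => by
      rw [LinearMap.adjoint_inner_right, LinearMap.adjoint_inner_right, hP]
  have hunit : ∀ v, ‖v‖ = 1 → c ≤ ‖P v‖ := fun v hv => by
    obtain ⟨f, hf, hlt⟩ := hT v hv
    rw [← hP v ⟨f, hf⟩] at hlt
    exact (lt_of_mul_lt_mul_right (hlt.trans_le (norm_inner_le_norm _ _)) (norm_nonneg f)).le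
  obtain ⟨v, hv, hle⟩ := exists_adjoint_comp_eq hc (mul_norm_le_of_norm_eq_one hunit) x
  exact ⟨P v, (P v).2, (hadj _).symm.trans hv, hle⟩

end Adjoint

theorem exists_vecMul_of_not_nearlyMisses {ι κ m : Type*} [Fintype ι] [Fintype κ] [Fintype m]
    {η : ℝ} (hη : 0 < η) {V : Matrix ι κ ℂ} {H : Matrix m ι ℝ} (h : ¬NearlyMisses η V H)
    (x : κ → ℂ) : ∃ l, Vᴴ *ᵥ (l ᵥ* H.map Complex.ofReal) = x ∧
      η * sqNorm (l ᵥ* H.map Complex.ofReal) ≤ sqNorm x := by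
  classical
  have hsq : ∀ f : EuclideanSpace ℂ ι, η * ‖f‖ ^ 2 = (√η * ‖f‖) ^ 2 := fun f => by
    rw [mul_pow, Real.sq_sqrt hη.le]
  simp only [NearlyMisses, sqNorm_eq_norm_toLp_sq, not_exists, not_and, not_forall, not_le] at h
  obtain ⟨f, ⟨l, rfl⟩, hx, hle⟩ := exists_mem_adjoint_eq (toEuclideanLin V)
    (LinearMap.range (toEuclideanLin (H.map Complex.ofReal)ᵀ)) (Real.sqrt_pos.mpr hη)
    (fun v hv => by
      obtain ⟨l, hl⟩ := h v.ofLp (by simp [hv])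
      refine ⟨_, ⟨WithLp.toLp 2 l, rfl⟩, lt_of_pow_lt_pow_left₀ 2 (norm_nonneg _) ?_⟩
      rw [← hsq, EuclideanSpace.inner_eq_star_dotProduct, dotProduct_comm]
      simpa only [toLpLin_apply, mulVec_transpose] using hl) (WithLp.toLp 2 x)
  refine ⟨l.ofLp, ?_, ?_⟩
  · rw [← toEuclideanLin_conjTranspose_eq_adjoint] at hx
    simpa only [toLpLin_apply, mulVec_transpose] using congrArg WithLp.ofLp hx
  · rw [sqNorm_eq_norm_toLp_sq, sqNorm_eq_norm_toLp_sq, hsq]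
    simpa only [toLpLin_apply, mulVec_transpose] using
      pow_le_pow_left₀ (by positivity) hle 2

section Projection

variable {ι m : Type*} [Fintype ι] [Fintype m] [DecidableEq ι] [DecidableEq m] {Q : Matrix ι m ℂ}

theorem sqNorm_one_sub_proj_mulVec_le (hQ : Qᴴ * Q = 1) (x : ι → ℂ) :
    sqNorm ((1 - Q * Qᴴ) *ᵥ x) ≤ sqNorm x := by
  set P := 1 - Q * Qᴴ
  have hpyth : sqNorm x = sqNorm (P *ᵥ x) + sqNorm (Q *ᵥ (Qᴴ *ᵥ x)) := by
    have horth : star (P *ᵥ x) ⬝ᵥ (Q *ᵥ (Qᴴ *ᵥ x)) = 0 := by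
      have hPQ : Pᴴ * Q = 0 := by
        simp [P, Matrix.sub_mul, Matrix.mul_assoc, hQ]
      rw [star_mulVec, ← dotProduct_mulVec, mulVec_mulVec, hPQ, zero_mulVec, dotProduct_zero]
    have hx : x = P *ᵥ x + (1 : ℝ) • (Q *ᵥ (Qᴴ *ᵥ x)) := by
      rw [one_smul, mulVec_mulVec, sub_mulVec, one_mulVec, sub_add_cancel]
    conv_lhs => rw [hx, sqNorm_add_smul, horth]
    simp
  linarith [sqNorm_nonneg (Q *ᵥ (Qᴴ *ᵥ x))]

theorem sqNorm_one_sub_proj_mulVec_le_sub (hQ : Qᴴ * Q = 1) (x : ι → ℂ) (g : m → ℂ) :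
    sqNorm ((1 - Q * Qᴴ) *ᵥ x) ≤ sqNorm (x - Q *ᵥ g) := by
  have h := sqNorm_one_sub_proj_mulVec_le hQ (x - Q *ᵥ g)
  rwa [mulVec_sub, mulVec_mulVec, Matrix.sub_mul, Matrix.mul_assoc, hQ, Matrix.one_mul,
    Matrix.mul_one, sub_self, zero_mulVec, sub_zero] at h

end Projection

section HeadTail

theorem sqNorm_smul {ι : Type*} [Fintype ι] (a : ℝ) (x : ι → ℂ) :
    sqNorm (a • x) = a ^ 2 * sqNorm x := by
  simp only [sqNorm, Finset.mul_sum, Pi.smul_apply, norm_smul, mul_pow, Real.norm_eq_abs, sq_abs]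

theorem sqNorm_eq_castAdd_add_natAdd {a b : ℕ} (y : Fin (a + b) → ℂ) :
    sqNorm y = sqNorm (y ∘ Fin.castAdd b) + sqNorm (y ∘ Fin.natAdd a) :=
  Fin.sum_univ_add _

theorem colsL_mulVec {N b c : ℕ} (Z : Matrix (Fin N) (Fin (b + c)) ℂ) (w : Fin b → ℂ) :
    colsL Z *ᵥ w = Z *ᵥ Fin.append w 0 := by
  ext i
  simp [mulVec, dotProduct, Fin.sum_univ_add, colsL]

theorem colsL_conjTranspose_mulVec {N b c : ℕ} (Z : Matrix (Fin N) (Fin (b + c)) ℂ)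
    (x : Fin N → ℂ) : (colsL Z)ᴴ *ᵥ x = (Zᴴ *ᵥ x) ∘ Fin.castAdd c :=
  rfl

theorem colsL_conjTranspose_mul_self {N b c : ℕ} {Z : Matrix (Fin N) (Fin (b + c)) ℂ}
    (hZ : Zᴴ * Z = 1) : (colsL Z)ᴴ * colsL Z = 1 := by
  rw [colsL, conjTranspose_submatrix, ← submatrix_mul _ _ _ _ _ Function.bijective_id, hZ,
    submatrix_one _ (Fin.castAdd_injective _ _)]

theorem sqNorm_append_sub_smul {k r : ℕ} (y : Fin (k + r) → ℂ) (a : ℝ) :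
    sqNorm (Fin.append (y ∘ Fin.castAdd r) 0 - a • y) =
      (1 - a) ^ 2 * sqNorm (y ∘ Fin.castAdd r) + a ^ 2 * sqNorm (y ∘ Fin.natAdd k) := by
  rw [← sqNorm_smul, ← neg_sq a, ← sqNorm_smul, sqNorm_eq_castAdd_add_natAdd]
  congr 2 <;> funext i <;> simp [sub_mul]

-- `κ / √(1 + κ²)` is the sine of the angle with tangent `κ`.
theorem sqNorm_one_sub_proj_colsL_le {N k r : ℕ} {m : Type*} [Fintype m] [DecidableEq m]
    {Q : Matrix (Fin N) m ℂ} (hQ : Qᴴ * Q = 1) {Z : Matrix (Fin N) (Fin (k + r)) ℂ}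
    (hZ : Zᴴ * Z = 1) {y : Fin (k + r) → ℂ} {κ : ℝ}
    (hy : sqNorm (y ∘ Fin.natAdd k) ≤ κ ^ 2 * sqNorm (y ∘ Fin.castAdd r)) {g : m → ℂ}
    (hg : Z *ᵥ y = Q *ᵥ g) :
    sqNorm (((1 - Q * Qᴴ) * colsL Z) *ᵥ (y ∘ Fin.castAdd r)) ≤
      (κ / √(1 + κ ^ 2)) ^ 2 * sqNorm (y ∘ Fin.castAdd r) := by
  set w := y ∘ Fin.castAdd r
  -- The multiple of `y` closest to `(w, 0)` when the bound on its tail is attained.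
  set a : ℝ := (1 + κ ^ 2)⁻¹ with ha
  have hdist : Z *ᵥ Fin.append w 0 - Q *ᵥ (a • g) = Z *ᵥ (Fin.append w 0 - a • y) := by
    rw [mulVec_sub, mulVec_smul, mulVec_smul, hg]
  calc sqNorm (((1 - Q * Qᴴ) * colsL Z) *ᵥ w)
      ≤ sqNorm (Fin.append w 0 - a • y) := by
        rw [← mulVec_mulVec, colsL_mulVec, ← sqNorm_mulVec_of_isometry hZ, ← hdist]
        exact sqNorm_one_sub_proj_mulVec_le_sub hQ _ _
    _ ≤ (1 - a) ^ 2 * sqNorm w + a ^ 2 * (κ ^ 2 * sqNorm w) := by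
        rw [sqNorm_append_sub_smul]
        gcongr
    _ = (κ / √(1 + κ ^ 2)) ^ 2 * sqNorm w := by
        have : (1 : ℝ) + κ ^ 2 ≠ 0 := by positivity
        rw [div_pow, Real.sq_sqrt (by positivity), ha]
        field_simp
        ring

end HeadTail

section SpectralFilter

/-- The matrix `M` acts on the first `k` coordinates as multiplication by `σ i ^ s`, and it maps
the remaining coordinates among themselves with operator norm at most `σ k ^ s`. -/
structure IsSpectralFilter (σ : ℕ → ℝ) (s : ℕ) {k a b : ℕ}
    (M : Matrix (Fin (k + a)) (Fin (k + b)) ℂ) : Prop where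
  head : ∀ c i, (M *ᵥ c) (Fin.castAdd a i) = ((σ i ^ s : ℝ) : ℂ) * c (Fin.castAdd b i)
  tail : ∀ c, sqNorm ((M *ᵥ c) ∘ Fin.natAdd k) ≤ (σ k ^ s) ^ 2 * sqNorm (c ∘ Fin.natAdd k)

variable {σ : ℕ → ℝ} {s t k a b c : ℕ}

theorem isSpectralFilter_one : IsSpectralFilter σ 0 (1 : Matrix (Fin (k + a)) (Fin (k + a)) ℂ) :=
  ⟨by simp, by simp⟩

theorem IsSpectralFilter.mul {M : Matrix (Fin (k + a)) (Fin (k + b)) ℂ}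
    {N : Matrix (Fin (k + b)) (Fin (k + c)) ℂ} (hM : IsSpectralFilter σ s M)
    (hN : IsSpectralFilter σ t N) : IsSpectralFilter σ (s + t) (M * N) where
  head x i := by
    rw [← mulVec_mulVec, hM.head, hN.head, pow_add, Complex.ofReal_mul, mul_assoc]
  tail x := by
    rw [← mulVec_mulVec, pow_add, mul_pow, mul_assoc]
    exact (hM.tail _).trans (mul_le_mul_of_nonneg_left (hN.tail x) (sq_nonneg _))

theorem IsSpectralFilter.pow {M : Matrix (Fin (k + a)) (Fin (k + a)) ℂ}
    (hM : IsSpectralFilter σ s M) (q : ℕ) : IsSpectralFilter σ (q * s) (M ^ q) := by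
  induction q with
  | zero => simpa using isSpectralFilter_one
  | succ q ih => simpa only [pow_succ, Nat.succ_mul] using ih.mul hM

theorem sum_fin_ite_val_eq {E : Type*} [AddCommMonoid E] (f : Fin a → E) (n : ℕ) :
    ∑ i : Fin a, (if (i : ℕ) = n then f i else 0) = if h : n < a then f ⟨n, h⟩ else 0 := by
  split_ifs with h
  · simp only [← Fin.ext_iff (b := ⟨n, h⟩), Finset.sum_ite_eq', Finset.mem_univ, if_true]
  · exact Finset.sum_eq_zero fun i _ => if_neg fun hi : (i : ℕ) = n => h (hi ▸ i.2)

theorem diagRect_mulVec (σ : ℕ → ℝ) (off : ℕ) (c : Fin b → ℂ) (i : Fin a) :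
    (diagRect σ off a b *ᵥ c) i =
      ∑ j : Fin b, if (j : ℕ) = i then (σ (off + i) : ℂ) * c j else 0 := by
  simp only [diagRect, mulVec, dotProduct, of_apply, ite_mul, zero_mul, eq_comm]

theorem sqNorm_diagRect_mulVec_le {off : ℕ} {B : ℝ} (hB : ∀ i, |σ (off + i)| ≤ B)
    (c : Fin b → ℂ) : sqNorm (diagRect σ off a b *ᵥ c) ≤ B ^ 2 * sqNorm c := by
  have hentry : ∀ i : Fin a, ‖(diagRect σ off a b *ᵥ c) i‖ ^ 2 ≤
      ∑ j : Fin b, if (i : ℕ) = j then B ^ 2 * ‖c j‖ ^ 2 else 0 := fun i => by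
    simp only [diagRect_mulVec, eq_comm (a := (i : ℕ)), sum_fin_ite_val_eq]
    split_ifs with h
    · rw [norm_mul, mul_pow, Complex.norm_real]
      gcongr
      exact hB i
    · simp
  calc sqNorm (diagRect σ off a b *ᵥ c)
      ≤ ∑ i : Fin a, ∑ j : Fin b, if (i : ℕ) = j then B ^ 2 * ‖c j‖ ^ 2 else 0 :=
        Finset.sum_le_sum fun i _ => hentry i
    _ = ∑ j : Fin b, if (j : ℕ) < a then B ^ 2 * ‖c j‖ ^ 2 else 0 := by
        rw [Finset.sum_comm]
        simp only [sum_fin_ite_val_eq, dite_eq_ite]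
    _ ≤ B ^ 2 * sqNorm c := by
        rw [sqNorm, Finset.mul_sum]
        exact Finset.sum_le_sum fun j _ => by split_ifs <;> [exact le_rfl; positivity]

theorem isSpectralFilter_diagRect (hσ : ∀ i, |σ (k + i)| ≤ σ k) :
    IsSpectralFilter σ 1 (diagRect σ 0 (k + a) (k + b)) where
  head c i := by
    rw [diagRect_mulVec, sum_fin_ite_val_eq, dif_pos (by simp; omega), zero_add, pow_one]
    rfl
  tail c := by
    have htail : (diagRect σ 0 (k + a) (k + b) *ᵥ c) ∘ Fin.natAdd k =
        diagRect σ k a b *ᵥ (c ∘ Fin.natAdd k) := by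
      funext i
      have hne : ∀ j : Fin k, (j : ℕ) ≠ k + i := fun j => by omega
      simp [diagRect_mulVec, Fin.sum_univ_add, hne]
    rw [htail, pow_one]
    exact sqNorm_diagRect_mulVec_le hσ _

theorem conjTranspose_diagRect : (diagRect σ 0 a b)ᴴ = diagRect σ 0 b a := by
  ext i j
  by_cases h : (i : ℕ) = j
  · simp [diagRect, h]
  · simp [diagRect, h, Ne.symm h]

theorem isSpectralFilter_diagRect_power (hσ : ∀ i, |σ (k + i)| ≤ σ k) (q : ℕ) :
    IsSpectralFilter σ (2 * q + 1) ((diagRect σ 0 (k + a) (k + b) *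
      (diagRect σ 0 (k + a) (k + b))ᴴ) ^ q * diagRect σ 0 (k + a) (k + b)) := by
  rw [conjTranspose_diagRect, mul_comm 2 q]
  exact (((isSpectralFilter_diagRect hσ).mul (isSpectralFilter_diagRect hσ)).pow q).mul
    (isSpectralFilter_diagRect hσ)

end SpectralFilter

section CanonicalAngles

/-- Every head `x` in `ℂᵏ` is the head of a vector `N *ᵥ l` whose tail is at most `τ` times as
long as `x`: for `N = Vᴴ * Ω` this quantifies how well the range of the starting guess `Ω` covers
the span of the first `k` columns of `V`. -/
def CoversHead {k b : ℕ} {m : Type*} [Fintype m] (τ : ℝ) (N : Matrix (Fin (k + b)) m ℂ) : Prop :=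
  ∀ x : Fin k → ℂ, ∃ l, (N *ᵥ l) ∘ Fin.castAdd b = x ∧
    sqNorm ((N *ᵥ l) ∘ Fin.natAdd k) ≤ τ ^ 2 * sqNorm x

variable {k b : ℕ} {m : Type*} [Fintype m]

theorem coversHead_of_not_nearlyMisses {V : Matrix (Fin (k + b)) (Fin (k + b)) ℂ}
    (hV : Vᴴ * V = 1) {Ω : Matrix (Fin (k + b)) m ℝ} {τ : ℝ}
    (hΩ : ¬NearlyMisses (1 + τ ^ 2)⁻¹ (colsL V) Ωᵀ) :
    CoversHead τ (Vᴴ * Ω.map Complex.ofReal) := fun x => by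
  classical
  obtain ⟨l, hhead, hle⟩ := exists_vecMul_of_not_nearlyMisses (by positivity) hΩ x
  have hV' : Vᴴᴴ * Vᴴ = 1 := by rw [conjTranspose_conjTranspose, mul_eq_one_comm.mp hV]
  rw [transpose_map, vecMul_transpose] at hhead hle
  rw [colsL_conjTranspose_mulVec, mulVec_mulVec] at hhead
  rw [← sqNorm_mulVec_of_isometry hV', mulVec_mulVec, sqNorm_eq_castAdd_add_natAdd, hhead,
    inv_mul_le_iff₀ (by positivity)] at hle
  exact ⟨l, hhead, by linarith⟩

theorem sqNorm_div_pow_le {σ : ℕ → ℝ} (hσ : Antitone σ) (hσk : 0 < σ (k - 1)) (s : ℕ) (j : Fin k)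
    {w : Fin k → ℂ} (hw : ∀ i, j < i → w i = 0) :
    sqNorm (fun i => w i / ((σ i ^ s : ℝ) : ℂ)) ≤ sqNorm w / (σ j ^ s) ^ 2 := by
  have hpos : ∀ i : Fin k, 0 < σ i := fun i => hσk.trans_le (hσ (by omega))
  rw [sqNorm, sqNorm, Finset.sum_div]
  refine Finset.sum_le_sum fun i _ => ?_
  rcases lt_or_ge j i with hi | hi
  · simp [hw i hi]
  · have hj := hpos j
    have hi' := hpos i
    rw [norm_div, div_pow, Complex.norm_real, Real.norm_of_nonneg (by positivity)]
    gcongr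
    exact hσ hi

/-- A filter of order `s` shrinks the tail-to-head ratio `τ` on the `j`-th coordinate to
`(σ k / σ j) ^ s * τ`, which becomes the tangent of the angle. -/
theorem IsSpectralFilter.sval_one_sub_proj_colsL_le {r : Type*} [Fintype r] [DecidableEq r]
    {a p s : ℕ} {σ : ℕ → ℝ} {M : Matrix (Fin (k + a)) (Fin (k + b)) ℂ}
    (hM : IsSpectralFilter σ s M) (hσ : Antitone σ) (hσk : 0 < σ (k - 1)) (hσ0 : 0 ≤ σ k)
    {N : Matrix (Fin (k + b)) m ℂ} {τ : ℝ} (hτ : 0 ≤ τ) (hN : CoversHead τ N)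
    {Z : Matrix (Fin p) (Fin (k + a)) ℂ} (hZ : Zᴴ * Z = 1)
    {Q : Matrix (Fin p) r ℂ} (hQ : Qᴴ * Q = 1) {R : Matrix r m ℂ} (hR : Z * M * N = Q * R)
    (j : Fin k) :
    sval ((1 - Q * Qᴴ) * colsL Z) (k - 1 - j) ≤
      (σ k / σ j) ^ s * τ / √(1 + (σ k / σ j) ^ (2 * s) * τ ^ 2) := by
  have hpos : ∀ i : Fin k, 0 < σ i := fun i => hσk.trans_le (hσ (by omega))
  have hj := hpos j
  rw [show (σ k / σ j) ^ (2 * s) * τ ^ 2 = ((σ k / σ j) ^ s * τ) ^ 2 by ring]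
  refine sval_le_of_forall_supported (by positivity) j fun w hw => ?_
  obtain ⟨l, hhead, htail⟩ := hN fun i => w i / ((σ i ^ s : ℝ) : ℂ)
  have hy : (M *ᵥ (N *ᵥ l)) ∘ Fin.castAdd a = w := by
    funext i
    have hne : ((σ i ^ s : ℝ) : ℂ) ≠ 0 := Complex.ofReal_ne_zero.mpr (pow_pos (hpos i) s).ne'
    rw [Function.comp_apply, hM.head, ← Function.comp_apply (f := N *ᵥ l), hhead,
      mul_div_cancel₀ _ hne]
  have hyt : sqNorm ((M *ᵥ (N *ᵥ l)) ∘ Fin.natAdd k) ≤ ((σ k / σ j) ^ s * τ) ^ 2 * sqNorm w :=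
    calc sqNorm ((M *ᵥ (N *ᵥ l)) ∘ Fin.natAdd k)
        ≤ (σ k ^ s) ^ 2 * (τ ^ 2 * (sqNorm w / (σ j ^ s) ^ 2)) := by
          refine (hM.tail _).trans ?_
          gcongr
          exact htail.trans (by gcongr; exact sqNorm_div_pow_le hσ hσk s j hw)
      _ = ((σ k / σ j) ^ s * τ) ^ 2 * sqNorm w := by
          rw [div_pow]
          field_simp
  have hrange : Z *ᵥ (M *ᵥ (N *ᵥ l)) = Q *ᵥ (R *ᵥ l) := by
    simp only [mulVec_mulVec, hR, ← Matrix.mul_assoc]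
  rw [← hy] at hyt ⊢
  exact sqNorm_one_sub_proj_colsL_le hQ hZ hyt hrange

theorem mul_conjTranspose_pow_mul_of_isometry {ι κ ι' κ' : Type*} [Fintype ι] [Fintype κ]
    [Fintype ι'] [Fintype κ'] [DecidableEq ι] [DecidableEq ι'] [DecidableEq κ']
    {U : Matrix ι ι' ℂ} {V : Matrix κ κ' ℂ} (hU : Uᴴ * U = 1) (hV : Vᴴ * V = 1)
    (D : Matrix ι' κ' ℂ) (q : ℕ) :
    (U * D * Vᴴ * (U * D * Vᴴ)ᴴ) ^ q * (U * D * Vᴴ) = U * ((D * Dᴴ) ^ q * D) * Vᴴ := by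
  have hgram : U * D * Vᴴ * (U * D * Vᴴ)ᴴ = U * (D * Dᴴ) * Uᴴ :=
    calc U * D * Vᴴ * (U * D * Vᴴ)ᴴ = U * D * (Vᴴ * V) * (Dᴴ * Uᴴ) := by
          simp only [conjTranspose_mul, conjTranspose_conjTranspose, Matrix.mul_assoc]
      _ = U * (D * Dᴴ) * Uᴴ := by simp only [hV, Matrix.mul_one, Matrix.mul_assoc]
  rw [hgram]
  induction q with
  | zero => simp
  | succ q ih =>
    calc (U * (D * Dᴴ) * Uᴴ) ^ (q + 1) * (U * D * Vᴴ)
        = U * (D * Dᴴ) * (Uᴴ * U) * ((D * Dᴴ) ^ q * D) * Vᴴ := by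
          rw [pow_succ', Matrix.mul_assoc, ih]
          simp only [Matrix.mul_assoc]
      _ = U * ((D * Dᴴ) ^ (q + 1) * D) * Vᴴ := by
          simp only [hU, Matrix.mul_one, pow_succ', Matrix.mul_assoc]

end CanonicalAngles

section SubspaceIteration

variable {k m₂ n₂ q : ℕ} {m r : Type*} [Fintype m] [Fintype r] [DecidableEq r]
  {A : Matrix (Fin (k + m₂)) (Fin (k + n₂)) ℂ} {U : Matrix (Fin (k + m₂)) (Fin (k + m₂)) ℂ}
  {V : Matrix (Fin (k + n₂)) (Fin (k + n₂)) ℂ} {σ : ℕ → ℝ}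

theorem sval_one_sub_proj_colsL_left_le (hU : Uᴴ * U = 1) (hV : Vᴴ * V = 1)
    (hσ0 : ∀ i, 0 ≤ σ i) (hσ : Antitone σ) (hσk : 0 < σ (k - 1))
    (hA : A = U * diagRect σ 0 (k + m₂) (k + n₂) * Vᴴ) {Ω : Matrix (Fin (k + n₂)) m ℂ} {τ : ℝ}
    (hτ : 0 ≤ τ) (hΩ : CoversHead τ (Vᴴ * Ω)) {Q : Matrix (Fin (k + m₂)) r ℂ} (hQ : Qᴴ * Q = 1)
    {R : Matrix r m ℂ} (hQR : (A * Aᴴ) ^ q * A * Ω = Q * R) (j : Fin k) :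
    sval ((1 - Q * Qᴴ) * colsL U) (k - 1 - j) ≤
      (σ k / σ j) ^ (2 * q + 1) * τ / √(1 + (σ k / σ j) ^ (4 * q + 2) * τ ^ 2) := by
  rw [show 4 * q + 2 = 2 * (2 * q + 1) by ring]
  refine (isSpectralFilter_diagRect_power (fun i => ?_) q).sval_one_sub_proj_colsL_le hσ hσk
    (hσ0 k) hτ hΩ hU hQ (R := R) ?_ j
  · exact (abs_of_nonneg (hσ0 _)).trans_le (hσ (Nat.le_add_right k i))
  · rw [← hQR, hA, mul_conjTranspose_pow_mul_of_isometry hU hV, ← Matrix.mul_assoc]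

theorem sval_one_sub_proj_colsL_right_le (hU : Uᴴ * U = 1) (hV : Vᴴ * V = 1)
    (hσ0 : ∀ i, 0 ≤ σ i) (hσ : Antitone σ) (hσk : 0 < σ (k - 1))
    (hA : A = U * diagRect σ 0 (k + m₂) (k + n₂) * Vᴴ) {Ω : Matrix (Fin (k + n₂)) m ℂ} {τ : ℝ}
    (hτ : 0 ≤ τ) (hΩ : CoversHead τ (Vᴴ * Ω)) {r' : Type*} [Fintype r']
    {Q : Matrix (Fin (k + m₂)) r' ℂ} {R : Matrix r' m ℂ}
    (hQR : (A * Aᴴ) ^ q * A * Ω = Q * R) {Vh : Matrix (Fin (k + n₂)) r ℂ} (hVh : Vhᴴ * Vh = 1)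
    {C : Matrix r r' ℂ} (hC : Aᴴ * Q = Vh * C) (j : Fin k) :
    sval ((1 - Vh * Vhᴴ) * colsL V) (k - 1 - j) ≤
      (σ k / σ j) ^ (2 * q + 2) * τ / √(1 + (σ k / σ j) ^ (4 * q + 4) * τ ^ 2) := by
  have hσ' : ∀ i, |σ (k + i)| ≤ σ k := fun i =>
    (abs_of_nonneg (hσ0 _)).trans_le (hσ (Nat.le_add_right k i))
  set S := diagRect σ 0 (k + m₂) (k + n₂) with hS
  have hfilter : IsSpectralFilter σ (2 * q + 2) (Sᴴ * ((S * Sᴴ) ^ q * S)) := by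
    have h := isSpectralFilter_diagRect (a := n₂) (b := m₂) hσ'
    rw [← conjTranspose_diagRect, ← hS] at h
    convert h.mul (isSpectralFilter_diagRect_power hσ' q) using 1
    ring
  have hrange : V * (Sᴴ * ((S * Sᴴ) ^ q * S)) * (Vᴴ * Ω) = Vh * (C * R) :=
    calc V * (Sᴴ * ((S * Sᴴ) ^ q * S)) * (Vᴴ * Ω)
        = V * Sᴴ * (Uᴴ * U) * ((S * Sᴴ) ^ q * S) * Vᴴ * Ω := by
          simp only [hU, Matrix.mul_one, Matrix.mul_assoc]
      _ = Aᴴ * ((A * Aᴴ) ^ q * A * Ω) := by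
          rw [hA, mul_conjTranspose_pow_mul_of_isometry hU hV]
          simp only [conjTranspose_mul, conjTranspose_conjTranspose, Matrix.mul_assoc]
      _ = Vh * (C * R) := by rw [hQR, ← Matrix.mul_assoc, hC, Matrix.mul_assoc]
  rw [show 4 * q + 4 = 2 * (2 * q + 2) by ring]
  exact hfilter.sval_one_sub_proj_colsL_le hσ hσk (hσ0 k) hτ hΩ hV hVh hrange j

end SubspaceIteration

section GaussianGuess

variable {Ωs : Type*} [MeasurableSpace Ωs] {μ : Measure Ωs}

theorem map_transpose_eq_gaussianRows {m ι : Type*} [Fintype m]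
    [Fintype ι] {W : Ωs → Matrix ι m ℝ} (hmeas : ∀ i j, Measurable fun ω => W ω i j)
    (hdist : ∀ i j, μ.map (fun ω => W ω i j) = gaussianReal 0 1)
    (hindep : iIndepFun (fun (ij : ι × m) ω => W ω ij.1 ij.2) μ) :
    μ.map (fun ω j i => W ω i j) = gaussianRows m ι := by
  have hprod : μ.map (fun ω (ji : m × ι) => W ω ji.2 ji.1) = .pi fun _ => gaussianReal 0 1 := by
    simpa only [hdist] using (hindep.precomp Prod.swap_injective).map_fun_eq_pi_map
      fun ji : m × ι => (hmeas ji.2 ji.1).aemeasurable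
  calc μ.map (fun ω j i => W ω i j)
      = (μ.map fun ω (ji : m × ι) => W ω ji.2 ji.1).map (MeasurableEquiv.curry m ι ℝ) := by
        rw [Measure.map_map (MeasurableEquiv.measurable _)
          (measurable_pi_lambda _ fun ji : m × ι => hmeas ji.2 ji.1)]
        rfl
    _ = gaussianRows m ι := by
        simp only [hprod, gaussianRows, stdGaussianPi, ← Measure.infinitePi_eq_pi]
        exact Measure.infinitePi_map_curry fun _ _ => gaussianReal 0 1

theorem measure_nearlyMisses_transpose_le {k ρ n₂ : ℕ} (hk : 0 < k)
    (hρ : k + ρ ≤ k + n₂) {W : Ωs → Matrix (Fin (k + n₂)) (Fin (k + ρ)) ℝ}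
    (hmeas : ∀ i j, Measurable fun ω => W ω i j)
    (hdist : ∀ i j, μ.map (fun ω => W ω i j) = gaussianReal 0 1)
    (hindep : iIndepFun (fun (ij : Fin (k + n₂) × Fin (k + ρ)) ω => W ω ij.1 ij.2) μ)
    {V : Matrix (Fin (k + n₂)) (Fin k) ℂ} (hV : Vᴴ * V = 1) {δ : ℝ} (hδ0 : 0 < δ) (hδ1 : δ ≤ 1) :
    μ {ω | NearlyMisses (1 + Cd k ρ n₂ δ ^ 2)⁻¹ V (W ω)ᵀ} ≤ ENNReal.ofReal δ := by
  obtain ⟨X, hX, hle⟩ := exists_exp_mul_escapeBound_le hk ρ n₂ hδ0 hδ1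
  set η := (1 + Cd k ρ n₂ δ ^ 2)⁻¹
  have : NeZero k := ⟨hk.ne'⟩
  have hWmeas : Measurable fun ω (j : Fin (k + ρ)) (i : Fin (k + n₂)) => W ω i j :=
    measurable_pi_lambda _ fun j => measurable_pi_lambda _ fun i => hmeas i j
  have hclosed :
      IsClosed {H : Fin (k + ρ) → Fin (k + n₂) → ℝ | NearlyMisses η V (of H)} :=
    isClosed_nearlyMisses η V
  have hle_exp := gaussianRows_nearlyMisses_le (Fin.castLEEmb hρ) (p := ρ) (by simp) hX
    (by positivity : 0 ≤ η) hV
  rw [← map_transpose_eq_gaussianRows hmeas hdist hindep,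
    Measure.map_apply hWmeas hclosed.measurableSet] at hle_exp
  refine hle_exp.trans (ENNReal.ofReal_le_ofReal ?_)
  simpa using hle

end GaussianGuess

theorem card_le_card_of_isometry {ι κ : Type*} [Fintype ι] [Fintype κ] [DecidableEq κ]
    {Q : Matrix ι κ ℂ} (hQ : Qᴴ * Q = 1) : Fintype.card κ ≤ Fintype.card ι := by
  have h := rank_mul_le_right Qᴴ Q
  rw [hQ, rank_one] at h
  exact h.trans Q.rank_le_card_height

theorem Cd_nonneg {k ρ n₂ : ℕ} {δ : ℝ} (hδ : 0 ≤ δ) : 0 ≤ Cd k ρ n₂ δ := by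
  unfold Cd
  positivity

theorem canonical_angles_gaussian_tail_general {k m₂ n₂ ρ : ℕ} (q : ℕ) (hk : 1 ≤ k)
    {A : Matrix (Fin (k + m₂)) (Fin (k + n₂)) ℂ} {U : Matrix (Fin (k + m₂)) (Fin (k + m₂)) ℂ}
    {V : Matrix (Fin (k + n₂)) (Fin (k + n₂)) ℂ} {σ : ℕ → ℝ} (hU : Uᴴ * U = 1)
    (hV : Vᴴ * V = 1) (hσ0 : ∀ i, 0 ≤ σ i) (hσ : Antitone σ)
    (hA : A = U * diagRect σ 0 (k + m₂) (k + n₂) * Vᴴ) (hrank : 0 < σ (k - 1))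
    {Ωs : Type*} [MeasurableSpace Ωs] {μ : Measure Ωs} [IsProbabilityMeasure μ]
    {W : Ωs → Matrix (Fin (k + n₂)) (Fin (k + ρ)) ℝ}
    (hmeas : ∀ i j, Measurable fun ω => W ω i j)
    (hdist : ∀ i j, μ.map (fun ω => W ω i j) = gaussianReal 0 1)
    (hindep : iIndepFun (fun (ij : Fin (k + n₂) × Fin (k + ρ)) ω => W ω ij.1 ij.2) μ)
    {Q : Ωs → Matrix (Fin (k + m₂)) (Fin (k + ρ)) ℂ}
    {R : Ωs → Matrix (Fin (k + ρ)) (Fin (k + ρ)) ℂ} (hQ : ∀ ω, (Q ω)ᴴ * Q ω = 1)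
    (hQR : ∀ ω, (A * Aᴴ) ^ q * A * (W ω).map Complex.ofReal = Q ω * R ω)
    {UB D : Ωs → Matrix (Fin (k + ρ)) (Fin (k + ρ)) ℂ}
    {Vh : Ωs → Matrix (Fin (k + n₂)) (Fin (k + ρ)) ℂ} (hUB : ∀ ω, UB ω * (UB ω)ᴴ = 1)
    (hVh : ∀ ω, (Vh ω)ᴴ * Vh ω = 1) (hB : ∀ ω, (Q ω)ᴴ * A = UB ω * D ω * (Vh ω)ᴴ)
    {δ : ℝ} (hδ0 : 0 < δ) (hδ1 : δ ≤ 1) :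
    ENNReal.ofReal (1 - δ) ≤ μ {ω | ∀ j : Fin k,
      sval ((1 - Q ω * UB ω * (Q ω * UB ω)ᴴ) * colsL U) (k - 1 - j) ≤
        (σ k / σ j) ^ (2 * q + 1) * Cd k ρ n₂ δ /
          √(1 + (σ k / σ j) ^ (4 * q + 2) * Cd k ρ n₂ δ ^ 2) ∧
      sval ((1 - Vh ω * (Vh ω)ᴴ) * colsL V) (k - 1 - j) ≤
        (σ k / σ j) ^ (2 * q + 2) * Cd k ρ n₂ δ /
          √(1 + (σ k / σ j) ^ (4 * q + 4) * Cd k ρ n₂ δ ^ 2)} := by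
  obtain ⟨ω₀⟩ := nonempty_of_isProbabilityMeasure μ
  have hρ : k + ρ ≤ k + n₂ := by simpa using card_le_card_of_isometry (hVh ω₀)
  have hmiss := measure_nearlyMisses_transpose_le hk hρ hmeas hdist hindep
    (colsL_conjTranspose_mul_self hV) hδ0 hδ1
  rw [ENNReal.ofReal_sub _ hδ0.le, ENNReal.ofReal_one, tsub_le_iff_left, ← measure_univ (μ := μ)]
  refine (measure_univ_le_add_compl _).trans (add_le_add hmiss (measure_mono fun ω hω j => ?_))
  have hcovers := coversHead_of_not_nearlyMisses hV hω
  have hC := Cd_nonneg (k := k) (ρ := ρ) (n₂ := n₂) hδ0.le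
  have hproj : Q ω * UB ω * (Q ω * UB ω)ᴴ = Q ω * (Q ω)ᴴ := by
    rw [conjTranspose_mul, Matrix.mul_assoc, ← Matrix.mul_assoc (UB ω), hUB, Matrix.one_mul]
  have hrange : Aᴴ * Q ω = Vh ω * ((D ω)ᴴ * (UB ω)ᴴ) := by
    simpa [conjTranspose_mul, Matrix.mul_assoc] using congrArg conjTranspose (hB ω)
  rw [hproj]
  exact ⟨sval_one_sub_proj_colsL_left_le hU hV hσ0 hσ hrank hA hC hcovers (hQ ω) (hQR ω) j,
    sval_one_sub_proj_colsL_right_le hU hV hσ0 hσ hrank hA hC hcovers (hQR ω) (hVh ω) hrange j⟩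

/-- Theorem 3.7 (tail bounds) for a standard Gaussian starting guess. -/
theorem canonical_angles_gaussian_tail
    {k m₂ n₂ ρ : ℕ} (q : ℕ) (hk : 1 ≤ k) (hρ : 2 ≤ ρ)
    (A : Matrix (Fin (k + m₂)) (Fin (k + n₂)) ℂ)
    (U : Matrix (Fin (k + m₂)) (Fin (k + m₂)) ℂ)
    (V : Matrix (Fin (k + n₂)) (Fin (k + n₂)) ℂ)
    (σ : ℕ → ℝ)
    (hU : Uᴴ * U = 1) (hU' : U * Uᴴ = 1)
    (hV : Vᴴ * V = 1) (hV' : V * Vᴴ = 1)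
    (hσ0 : ∀ i, 0 ≤ σ i) (hσm : ∀ i j, i ≤ j → σ j ≤ σ i)
    (hA : A = U * diagRect σ 0 (k + m₂) (k + n₂) * Vᴴ)
    (hrank : 0 < σ (k - 1)) (hgap : σ k < σ (k - 1))
    {Ωs : Type} [MeasureTheory.MeasureSpace Ωs]
    [MeasureTheory.IsProbabilityMeasure (MeasureTheory.volume : MeasureTheory.Measure Ωs)]
    (W : Ωs → Matrix (Fin (k + n₂)) (Fin (k + ρ)) ℝ)
    (hmeas : ∀ i j, Measurable fun ω => W ω i j)
    (hdist : ∀ i j, MeasureTheory.Measure.map (fun ω => W ω i j) MeasureTheory.volume =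
      ProbabilityTheory.gaussianReal 0 1)
    (hindep : ProbabilityTheory.iIndepFun
      (fun (ij : Fin (k + n₂) × Fin (k + ρ)) ω => W ω ij.1 ij.2) MeasureTheory.volume)
    (Q : Ωs → Matrix (Fin (k + m₂)) (Fin (k + ρ)) ℂ)
    (R : Ωs → Matrix (Fin (k + ρ)) (Fin (k + ρ)) ℂ)
    (hQ : ∀ ω, (Q ω)ᴴ * Q ω = 1) (hR : ∀ ω, (R ω).BlockTriangular id)
    (hQR : ∀ ω, (A * Aᴴ) ^ q * A * (W ω).map (fun x => (x : ℂ)) = Q ω * R ω)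
    (UB : Ωs → Matrix (Fin (k + ρ)) (Fin (k + ρ)) ℂ)
    (Vh : Ωs → Matrix (Fin (k + n₂)) (Fin (k + ρ)) ℂ)
    (σh : Ωs → ℕ → ℝ)
    (hUB : ∀ ω, (UB ω)ᴴ * UB ω = 1) (hUB' : ∀ ω, UB ω * (UB ω)ᴴ = 1)
    (hVh : ∀ ω, (Vh ω)ᴴ * Vh ω = 1)
    (hσh0 : ∀ ω i, 0 ≤ σh ω i) (hσhm : ∀ ω i j, i ≤ j → σh ω j ≤ σh ω i)
    (hB : ∀ ω, (Q ω)ᴴ * A = UB ω * diagRect (σh ω) 0 (k + ρ) (k + ρ) * (Vh ω)ᴴ)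
    (δ : ℝ) (hδ0 : 0 < δ) (hδ1 : δ < 1) :
    MeasureTheory.volume
        {ω : Ωs | ∀ j : Fin k,
          sval ((1 - Q ω * UB ω * (Q ω * UB ω)ᴴ) * colsL U) (k - 1 - (j : ℕ)) ≤
              (σ k / σ (j : ℕ)) ^ (2 * q + 1) * Cd k ρ n₂ δ /
                Real.sqrt (1 + (σ k / σ (j : ℕ)) ^ (4 * q + 2) * (Cd k ρ n₂ δ) ^ 2) ∧
          sval ((1 - Vh ω * (Vh ω)ᴴ) * colsL V) (k - 1 - (j : ℕ)) ≤
              (σ k / σ (j : ℕ)) ^ (2 * q + 2) * Cd k ρ n₂ δ /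
                Real.sqrt (1 + (σ k / σ (j : ℕ)) ^ (4 * q + 4) * (Cd k ρ n₂ δ) ^ 2)} ≥ ENNReal.ofReal (1 - δ) := by
  exact canonical_angles_gaussian_tail_general q hk hU hV hσ0 (fun i j => hσm i j) hA hrank
    hmeas hdist hindep hQ hQR hUB' hVh hB hδ0 hδ1.le
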